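/- Let n ≥ 1 be an 'odd' integer (i.e., q−1 does not divide n). Then π̃ and ζ(n,n) are algebraically independent over k̄. -/

import Mathlib

/-!
The proof is an instance of Mahler's method, for the substitution `t : X ↦ -X ^ q / θ`.

Let `w k = (-1)^k θ^{-(q^k-1)/(q-1)}` be the orbit of `1` under `t` (`cW`), and let `a k` be the
partial products of `∏ (1 - θ^{1-q^i})⁻¹` (`cA`), so that `a (k+1) = a k / c (w k)` with
`c = 1 - t ^ (q-1)`. The logarithmic derivative of the polynomial whose roots are the negatives of
the monic polynomials of degree `d` (`cPoly_mul_series`) shows that the power sum `S_d(n)` of the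
`n`-th inverse powers of these monic polynomials is `γ (w d) * a d ^ n`, with a polynomial `γ` which
does not depend on `d` and is homogeneous of weight `n` under the scalings by `𝔽_q^×`
(`exists_gamma`). Hence `a`, the partial sums `s` of `ζ(n)` and the partial sums `r` of `ζ(n,n)`,
which satisfy `r (k+1) = r k + S_k(n) * s k`, all solve difference equations along the orbit.

Algebraic relations between these sequences over the rational functions of `w` are controlled by
the invariants of the corresponding difference rings (`extEnd`). A minimal invariant is an additive
polynomial up to a constant, and its existence means that some `γ ^ (p^e)` is a twisted coboundary,
`A ∘ t = c ^ (n p^e) (A - γ ^ (p^e))` (`no_invariant_S`). A solution `A` of this equation vanishes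
at `1` (`WSeq.eval_one_eq_zero`), so it computes the partial sums: `A (w k) a(k)^(n p^e) =
- s(k)^(p^e)` (`ASSeq.coboundary`). It also inherits the weight of `γ`, so that `A 0 = 0` when
`q - 1 ∤ n`; as `w k → 0`, this contradicts `ζ(n) ≠ 0` (`DegData.generic`). Consequently the points
`(w k, s k, a k)` are Zariski dense (`ASSeq.dense_two`).

For `ζ(n,n)` there are two cases. In characteristic two the sequence `r` creates no invariant either
(`no_invariant_V_two`), and the points `(w k, r k, s k, a k)` are dense. In odd characteristic,
`2 r = s² - v`, where `v` is the sequence of partial sums of `∑ S_d(n)²`. By `invariant_V_odd`,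
either the points `(w k, v k, s k, a k)` are dense, or some `γ ^ (2 p^e)` is a twisted coboundary, in
which case the limit of `v` is algebraic over the field generated by the limit of `a`.

Density of the points implies algebraic independence of the limits (`mahler_algIndep`): a relation
between the limits would give polynomials of bounded degree taking very small values at the points,
and a Siegel type construction of an auxiliary polynomial (`exists_aux`) combined with the product
formula excludes this (`mahler_zero_estimate`). In both cases the limits of `r` and `a` come out
independent over `k` (`DegData.algIndep`).

What remains is to identify these limits with `ζ(n,n)` and with the infinite product
(`mzv_eq_of_lim`, `tprod_eq_of_lim`), to pass from `k` to its algebraic closure (`kbar_algIndep`),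
and to multiply the product by the algebraic number `η ^ q` (`algIndep_scale`).
-/

/-!
Setting: `Fq` is a finite field with `q = Fintype.card Fq` elements and characteristic
`p = ringChar Fq`.  The field `k_∞ = 𝔽_q((1/θ))` is realized as `Kinf Fq`, the field of
formal Laurent series over `Fq` in the variable `u = θ⁻¹`; thus `theta Fq = u⁻¹` plays
the role of `θ` (it is the single Hahn series supported in degree `-1`), and polynomials
in `θ` are evaluated in `Kinf Fq` via `Polynomial.aeval (theta Fq)`.  `KinfBar Fq` is a
fixed algebraic closure `k̄_∞` of `k_∞`.
-/

set_option synthInstance.maxHeartbeats 1000000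
set_option maxHeartbeats 1000000

noncomputable section

variable (Fq : Type) [Field Fq] [Fintype Fq]

/-- `k_∞ = 𝔽_q((1/θ))`, with its `1/θ`-adic (valued) topology. -/
abbrev Kinf := LaurentSeries Fq

/-- `θ ∈ k_∞`, the inverse of the Laurent-series variable. -/
def theta : Kinf Fq := HahnSeries.single (-1 : ℤ) (1 : Fq)

/-- The multizeta value `ζ(n 0, …, n (d-1))`: the sum, over all `d`-tuples of monic
polynomials `a i ∈ 𝔽_q[θ]` with `deg (a 0) > deg (a 1) > … > deg (a (d-1)) ≥ 0`, of
`1 / (a 0 ^ n 0 ⋯ a (d-1) ^ n (d-1))`, computed in `k_∞`. -/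
def mzv (d : ℕ) (n : Fin d → ℕ) : Kinf Fq :=
  ∑' a : {a : Fin d → Polynomial Fq //
      (∀ i, (a i).Monic) ∧ ∀ i j : Fin d, i < j → (a j).degree < (a i).degree},
    (∏ i, Polynomial.aeval (theta Fq) (a.1 i) ^ n i)⁻¹

/-- A fixed algebraic closure `k̄_∞` of `k_∞`. -/
abbrev KinfBar := AlgebraicClosure (Kinf Fq)

/-- The image of `θ` in `k̄_∞`. -/
def thetaBar : KinfBar Fq := algebraMap (Kinf Fq) (KinfBar Fq) (theta Fq)

/-- The fundamental period `π̃ = (−θ)^{q/(q−1)} ∏_{i≥1} (1−θ^{1−qⁱ})⁻¹` of the Carlitz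
module, relative to a chosen `(q−1)`-st root `η` of `−θ` (so `(−θ)^{q/(q−1)} = η ^ q`);
the convergent product is computed in `k_∞` and mapped into `k̄_∞`. -/
def pitilde (η : KinfBar Fq) : KinfBar Fq :=
  η ^ Fintype.card Fq *
    algebraMap (Kinf Fq) (KinfBar Fq)
      (∏' i : ℕ, (1 - theta Fq ^ ((1 : ℤ) - (Fintype.card Fq : ℤ) ^ (i + 1)))⁻¹)

/-- `k = 𝔽_q(θ)`, as a subfield of `k̄_∞`. -/
def kSub : Subfield (KinfBar Fq) :=
  Subfield.closure
    (Set.range (fun a : Fq => algebraMap (Kinf Fq) (KinfBar Fq) (algebraMap Fq (Kinf Fq) a)) ∪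
      {thetaBar Fq})

/-- `k̄`, the algebraic closure of `k` inside `k̄_∞`. -/
def kbar : IntermediateField (kSub Fq) (KinfBar Fq) :=
  algebraicClosure (kSub Fq) (KinfBar Fq)

/-! ### Difference polynomial rings and their invariants -/

open Polynomial in
/-- The extension of an endomorphism `τ` of `R` to `R[X]` which sends the variable to `t`. -/
def extEnd {R : Type*} [CommRing R] (τ : R →+* R) (t : R[X]) : R[X] →+* R[X] :=
  (compRingHom t).comp (mapRingHom τ)

section DifferenceAlgebra
open Polynomial

lemma extEnd_apply {R : Type*} [CommRing R] (τ : R →+* R) (t p : R[X]) :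
    extEnd τ t p = (p.map τ).comp t := rfl

@[simp] lemma extEnd_C {R : Type*} [CommRing R] (τ : R →+* R) (t : R[X]) (r : R) :
    extEnd τ t (C r) = C (τ r) := by simp [extEnd_apply]

@[simp] lemma extEnd_X {R : Type*} [CommRing R] (τ : R →+* R) (t : R[X]) :
    extEnd τ t X = t := by simp [extEnd_apply]

lemma natDegree_extEnd {F : Type*} [Field F] (τ : F →+* F) (t p : F[X]) :
    (extEnd τ t p).natDegree = p.natDegree * t.natDegree := by
  rw [extEnd_apply, natDegree_comp, natDegree_map]

lemma extEnd_injective {F : Type*} [Field F] (τ : F →+* F) (t : F[X]) (ht : t.natDegree ≠ 0) :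
    Function.Injective (extEnd τ t) := by
  rw [injective_iff_map_eq_zero]
  intro p hp
  have h1 : p.natDegree * t.natDegree = 0 := by rw [← natDegree_extEnd τ t p, hp, natDegree_zero]
  have h2 : p.natDegree = 0 := by simpa [ht] using h1
  rw [eq_C_of_natDegree_eq_zero h2] at hp ⊢
  simpa using hp

lemma exists_coprime_frac {F F' : Type*} [Field F] [Field F'] [Algebra F[X] F']
    [IsFractionRing F[X] F'] (b : F') :
    ∃ A B : F[X], IsCoprime A B ∧ B.Monic ∧ b = algebraMap F[X] F' A / algebraMap F[X] F' B := by
  have hrel := IsFractionRing.num_den_reduced F[X] b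
  have heq := IsFractionRing.mk'_num_den' F[X] b
  set A := IsFractionRing.num F[X] b
  set B : F[X] := (IsFractionRing.den F[X] b : F[X])
  have hB : B ≠ 0 := nonZeroDivisors.ne_zero (IsFractionRing.den F[X] b).2
  have hl : B.leadingCoeff⁻¹ ≠ 0 := inv_ne_zero (leadingCoeff_ne_zero.mpr hB)
  have hu : IsUnit (C B.leadingCoeff⁻¹) := isUnit_C.mpr (isUnit_iff_ne_zero.mpr hl)
  refine ⟨A * C B.leadingCoeff⁻¹, B * C B.leadingCoeff⁻¹, ?_, monic_mul_leadingCoeff_inv hB, ?_⟩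
  · exact (isCoprime_mul_unit_right hu A B).mpr (isRelPrime_iff_isCoprime.mp hrel)
  · rw [map_mul, map_mul, mul_div_mul_right, heq]
    rw [Ne, map_eq_zero_iff _ (IsFractionRing.injective F[X] F')]
    exact hu.ne_zero

/-- If the variable is sent to a polynomial of degree at least two, then a solution `β` of
`τ β = c * β + g` with polynomial `c`, `g` is itself a polynomial: the denominator `B` satisfies
`τ B ∣ B`. -/
lemma isPoly_of_nonlinear {F F' : Type*} [Field F] [Field F'] [Algebra F[X] F']
    [IsFractionRing F[X] F'] (τ : F →+* F) (t : F[X]) (ht : 2 ≤ t.natDegree) (τ' : F' →+* F')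
    (hτ' : ∀ p, τ' (algebraMap F[X] F' p) = algebraMap F[X] F' (extEnd τ t p))
    (c g : F[X]) (β : F')
    (h : τ' β = algebraMap F[X] F' c * β + algebraMap F[X] F' g) :
    ∃ A : F[X], β = algebraMap F[X] F' A := by
  obtain ⟨A, B, hAB, hB, rfl⟩ := exists_coprime_frac (F := F) β
  have hinj := IsFractionRing.injective F[X] F'
  have hB0 : algebraMap F[X] F' B ≠ 0 := by
    rw [Ne, map_eq_zero_iff _ hinj]; exact hB.ne_zero
  have hφB0 : algebraMap F[X] F' (extEnd τ t B) ≠ 0 := by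
    rw [Ne, map_eq_zero_iff _ hinj, map_eq_zero_iff _ (extEnd_injective τ t (by omega))]
    exact hB.ne_zero
  rw [map_div₀, hτ', hτ'] at h
  have h2 : extEnd τ t A * B = (c * A + g * B) * extEnd τ t B := by
    apply hinj
    simp only [map_mul, map_add]
    field_simp at h
    linear_combination h
  have hcop : IsCoprime (extEnd τ t A) (extEnd τ t B) := hAB.map (extEnd τ t)
  have hdvd : extEnd τ t B ∣ B :=
    hcop.symm.dvd_of_dvd_mul_left (h2 ▸ Dvd.intro_left _ rfl)
  have hdeg := natDegree_le_of_dvd hdvd hB.ne_zero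
  rw [natDegree_extEnd] at hdeg
  have hB1 : B.natDegree = 0 := by nlinarith
  refine ⟨A, ?_⟩
  rw [hB.natDegree_eq_zero.mp hB1]; simp

lemma extEnd_coeff_scale {F : Type*} [CommRing F] (τ : F →+* F) (u : F) (p : F[X]) (i : ℕ) :
    (extEnd τ (C u * X) p).coeff i = τ (p.coeff i) * u ^ i := by
  rw [extEnd_apply, comp_C_mul_X_coeff, coeff_map]

/-- The denominator of a fraction with polynomial difference `τ b - b`, for an affine
substitution, is a semi-invariant. -/
lemma denominator_semi_invariant {F F' : Type*} [Field F] [Field F'] [Algebra F[X] F']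
    [IsFractionRing F[X] F'] (τ : F →+* F) (u v : F) (hu : u ≠ 0) (τ' : F' →+* F')
    (hτ' : ∀ p, τ' (algebraMap F[X] F' p) = algebraMap F[X] F' (extEnd τ (C u * X + C v) p))
    (p : F[X]) (b : F') (h : τ' b = b + algebraMap F[X] F' p) :
    ∃ A B : F[X], IsCoprime A B ∧ B.Monic ∧ b = algebraMap F[X] F' A / algebraMap F[X] F' B ∧
      extEnd τ (C u * X + C v) B = C (u ^ B.natDegree) * B ∧
      extEnd τ (C u * X + C v) A = C (u ^ B.natDegree) * (A + p * B) := by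
  obtain ⟨A, B, hAB, hB, rfl⟩ := exists_coprime_frac (F := F) b
  have hinj := IsFractionRing.injective F[X] F'
  have htdeg : (C u * X + C v).natDegree = 1 := natDegree_linear hu
  have hφinj := extEnd_injective τ (C u * X + C v) (by rw [htdeg]; exact one_ne_zero)
  set φ := extEnd τ (C u * X + C v) with hφ
  have hB0 : algebraMap F[X] F' B ≠ 0 := by
    rw [Ne, map_eq_zero_iff _ hinj]; exact hB.ne_zero
  have hφB0' : φ B ≠ 0 := by
    rw [Ne, map_eq_zero_iff _ hφinj]; exact hB.ne_zero
  have hφB0 : algebraMap F[X] F' (φ B) ≠ 0 := by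
    rw [Ne, map_eq_zero_iff _ hinj]; exact hφB0'
  rw [map_div₀, hτ', hτ'] at h
  have h2 : φ A * B = (A + p * B) * φ B := by
    apply hinj
    simp only [map_mul, map_add]
    field_simp at h
    linear_combination h
  have hcop : IsCoprime (A + p * B) B := IsCoprime.add_mul_right_left hAB p
  have hdvd : B ∣ φ B := hcop.symm.dvd_of_dvd_mul_left (h2 ▸ Dvd.intro_left _ rfl)
  have hφB : φ B = C (u ^ B.natDegree) * B := by
    obtain ⟨Q, hQ⟩ := hdvd
    have hd := natDegree_extEnd τ (C u * X + C v) B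
    rw [htdeg, mul_one, ← hφ, hQ] at hd
    have hQ0 : Q ≠ 0 := by rintro rfl; simp at hQ; exact hφB0' hQ
    rw [natDegree_mul hB.ne_zero hQ0] at hd
    have hQd : Q.natDegree = 0 := by omega
    rw [eq_C_of_natDegree_eq_zero hQd] at hQ
    have hl := congrArg leadingCoeff hQ
    rw [hφ, extEnd_apply, leadingCoeff_comp (by rw [htdeg]; exact one_ne_zero),
      leadingCoeff_linear hu, leadingCoeff_mul, leadingCoeff_C, hB.leadingCoeff,
      (hB.map τ).leadingCoeff, natDegree_map, one_mul, one_mul] at hl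
    rw [hQ, ← hl, mul_comm]
  refine ⟨A, B, hAB, hB, rfl, hφB, ?_⟩
  have := h2
  rw [hφB] at this
  exact mul_right_cancel₀ hB.ne_zero (by rw [this]; ring)

/-- For a scaling `X ↦ u X` without nonzero semi-invariants of positive weight in `F`,
only polynomials have a polynomial difference `τ b - b`. -/
lemma isPoly_of_scale {F F' : Type*} [Field F] [Field F'] [Algebra F[X] F']
    [IsFractionRing F[X] F'] (τ : F →+* F) (u : F) (hu : u ≠ 0)
    (H : ∀ (m : ℕ) (f : F), 1 ≤ m → τ f = u ^ m * f → f = 0) (τ' : F' →+* F')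
    (hτ' : ∀ p, τ' (algebraMap F[X] F' p) = algebraMap F[X] F' (extEnd τ (C u * X) p))
    (p : F[X]) (b : F') (h : τ' b = b + algebraMap F[X] F' p) :
    ∃ A : F[X], b = algebraMap F[X] F' A := by
  have e : C u * X = C u * X + C (0 : F) := by simp
  obtain ⟨A, B, hAB, hB, rfl, hφB, hφA⟩ :=
    denominator_semi_invariant τ u 0 hu τ' (by rw [← e]; exact hτ') p b h
  rw [← e] at hφB hφA
  set j := B.natDegree with hj
  have hBi : ∀ i, i < j → B.coeff i = 0 := by
    intro i hi
    apply H (j - i) _ (by omega)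
    have := congrArg (fun P => coeff P i) hφB
    simp only [extEnd_coeff_scale, coeff_C_mul] at this
    apply mul_right_cancel₀ (pow_ne_zero i hu)
    rw [this, mul_right_comm, ← pow_add, Nat.sub_add_cancel hi.le]
  have hBX : B = X ^ j := by
    ext i
    rw [coeff_X_pow]
    rcases lt_trichotomy i j with h1 | h1 | h1
    · rw [hBi i h1, if_neg h1.ne]
    · rw [h1, if_pos rfl]; exact hB
    · rw [if_neg h1.ne', coeff_eq_zero_of_natDegree_lt h1]
  have hAi : ∀ i, i < j → A.coeff i = 0 := by
    intro i hi
    apply H (j - i) _ (by omega)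
    have := congrArg (fun P => coeff P i) hφA
    simp only [extEnd_coeff_scale, coeff_C_mul, hBX, coeff_add, coeff_mul_X_pow',
      if_neg (not_le.mpr hi), add_zero] at this
    apply mul_right_cancel₀ (pow_ne_zero i hu)
    rw [this, mul_right_comm, ← pow_add, Nat.sub_add_cancel hi.le]
  have hdvd : B ∣ A := by
    rw [hBX]; exact X_pow_dvd_iff.mpr hAi
  have hunit : IsUnit B := hAB.isUnit_of_dvd' hdvd dvd_rfl
  have : B = 1 := hB.eq_one_of_isUnit hunit
  exact ⟨A, by rw [this]; simp⟩

/-- Invariants of the fraction field for a scaling without semi-invariants are constants. -/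
lemma invariant_of_scale {F F' : Type*} [Field F] [Field F'] [Algebra F[X] F']
    [IsFractionRing F[X] F'] (τ : F →+* F) (u : F) (hu : u ≠ 0)
    (H : ∀ (m : ℕ) (f : F), 1 ≤ m → τ f = u ^ m * f → f = 0) (τ' : F' →+* F')
    (hτ' : ∀ p, τ' (algebraMap F[X] F' p) = algebraMap F[X] F' (extEnd τ (C u * X) p))
    (b : F') (h : τ' b = b) :
    ∃ f : F, b = algebraMap F[X] F' (C f) := by
  obtain ⟨A, rfl⟩ := isPoly_of_scale τ u hu H τ' hτ' 0 b (by simpa using h)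
  rw [hτ'] at h
  have h2 := IsFractionRing.injective F[X] F' h
  refine ⟨A.coeff 0, ?_⟩
  congr 1
  ext i
  rw [coeff_C]
  split_ifs with hi
  · rw [hi]
  · have := congrArg (fun P => coeff P i) h2
    simp only [extEnd_coeff_scale] at this
    have hz := H i (A.coeff i)⁻¹ (by omega) (by
      rw [map_inv₀]
      have hui := pow_ne_zero i hu
      have : τ (A.coeff i) = A.coeff i * (u ^ i)⁻¹ := by
        rw [← this, mul_assoc, mul_inv_cancel₀ hui, mul_one, this]
      rw [this, mul_inv, inv_inv, mul_comm])
    simpa using hz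

/-- Extraction of the component of weight `n * d`. -/
lemma weight_extraction {F F' : Type*} [Field F] [Field F'] [Algebra F[X] F']
    [IsFractionRing F[X] F'] (τ : F →+* F) (u : F) (hu : u ≠ 0)
    (H : ∀ (m : ℕ) (f : F), 1 ≤ m → τ f = u ^ m * f → f = 0) (τ' : F' →+* F')
    (hτ' : ∀ p, τ' (algebraMap F[X] F' p) = algebraMap F[X] F' (extEnd τ (C u * X) p))
    (n : ℕ) (hn : 1 ≤ n) (γ : F) (Q : F[X]) (b : F')
    (h : τ' b + algebraMap F[X] F' (Q.comp (C γ * X ^ n)) = b) (d : ℕ) :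
    ∃ β : F, τ β * u ^ (n * d) + Q.coeff d * γ ^ d = β := by
  obtain ⟨A, rfl⟩ := isPoly_of_scale τ u hu H τ' hτ' (-(Q.comp (C γ * X ^ n))) b (by
    rw [map_neg, ← sub_eq_add_neg, eq_sub_iff_add_eq, h])
  rw [hτ', ← map_add] at h
  have h2 := IsFractionRing.injective F[X] F' h
  refine ⟨A.coeff (n * d), ?_⟩
  have := congrArg (fun P => coeff P (n * d)) h2
  simp only [extEnd_coeff_scale, coeff_add] at this
  refine Eq.trans ?_ this
  congr 1
  have : Q.comp (C γ * X ^ n) = expand F n (Q.comp (C γ * X)) := by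
    rw [expand_eq_comp_X_pow, comp_assoc]; simp
  rw [this, mul_comm n d, coeff_expand_mul (by omega), comp_C_mul_X_coeff]

end DifferenceAlgebra

/-! ### Additive polynomials -/

section Additive
open Polynomial

lemma choose_ppow_mul {F : Type*} [Field F] (p : ℕ) [hp : Fact p.Prime] [CharP F p] (e m : ℕ) :
    ((Nat.choose (p ^ e * m) (p ^ e) : ℕ) : F) = (m : F) := by
  have h1 : ((X + 1 : F[X]) ^ (p ^ e * m)).coeff (p ^ e) = (m : F) := by
    rw [pow_mul, add_pow_char_pow, one_pow]
    have : (X ^ p ^ e + 1 : F[X]) ^ m = expand F (p ^ e) ((X + 1) ^ m) := by simp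
    have hpe : 0 < p ^ e := pow_pos hp.out.pos e
    rw [this]
    have h2 := coeff_expand_mul hpe ((X + 1 : F[X]) ^ m) 1
    rw [one_mul] at h2
    rw [h2, coeff_X_add_one_pow]; simp
  rw [← h1, coeff_X_add_one_pow]

lemma eq_ppow_of_choose {F : Type*} [Field F] (p : ℕ) [hp : Fact p.Prime] [CharP F p] (d : ℕ)
    (hd : 1 ≤ d) (h : ∀ k, 0 < k → k < d → (Nat.choose d k : F) = 0) : ∃ e, d = p ^ e := by
  obtain ⟨e, m, hm, rfl⟩ := Nat.exists_eq_pow_mul_and_not_dvd (n := d) (by omega) p hp.out.ne_one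
  refine ⟨e, ?_⟩
  have hm0 : m ≠ 0 := by rintro rfl; simp at hm
  by_contra hne
  have hm1 : 1 < m := by
    rcases Nat.lt_or_ge 1 m with h1 | h1
    · exact h1
    · exfalso; apply hne; have : m = 1 := by omega
      rw [this, mul_one]
  have hpe : 0 < p ^ e := pow_pos hp.out.pos e
  have := h (p ^ e) hpe (by nlinarith)
  rw [choose_ppow_mul p e m] at this
  exact hm ((CharP.cast_eq_zero_iff F p m).mp this)

lemma hasseDeriv_taylor {R : Type*} [CommRing R] (k : ℕ) (r : R) (f : R[X]) :
    hasseDeriv k (taylor r f) = taylor r (hasseDeriv k f) := by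
  ext n
  rw [hasseDeriv_coeff, taylor_coeff, taylor_coeff]
  have := congrArg (fun L => L f) (hasseDeriv_comp (R := R) n k)
  simp only [LinearMap.comp_apply, LinearMap.smul_apply] at this
  rw [this, eval_smul, nsmul_eq_mul, ← Nat.choose_symm_add]

lemma hasseDeriv_map' {R : Type*} [CommRing R] (k : ℕ) (τ : R →+* R) (f : R[X]) :
    hasseDeriv k (f.map τ) = (hasseDeriv k f).map τ := by
  ext n
  simp [hasseDeriv_coeff]

lemma extEnd_add_eq_taylor {R : Type*} [CommRing R] (τ : R →+* R) (g : R) (f : R[X]) :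
    extEnd τ (X + C g) f = taylor g (f.map τ) := rfl

lemma hasseDeriv_extEnd {R : Type*} [CommRing R] (k : ℕ) (τ : R →+* R) (g : R) (f : R[X]) :
    hasseDeriv k (extEnd τ (X + C g) f) = extEnd τ (X + C g) (hasseDeriv k f) := by
  rw [extEnd_add_eq_taylor, hasseDeriv_taylor, hasseDeriv_map', extEnd_add_eq_taylor]

lemma coeff_zero_hasseDeriv {R : Type*} [CommRing R] (k : ℕ) (f : R[X]) :
    (hasseDeriv k f).coeff 0 = f.coeff k := by
  simp [hasseDeriv_coeff]

/-- Information carried by an `f` all of whose Hasse derivatives are invariant constants. -/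
lemma coeff_of_hasseDeriv_const {F : Type*} [Field F] (τ : F →+* F) (g : F) (f : F[X])
    (h : ∀ k, 1 ≤ k → extEnd τ (X + C g) (hasseDeriv k f) = hasseDeriv k f ∧
      (hasseDeriv k f).natDegree = 0) :
    (∀ k, 1 ≤ k → τ (f.coeff k) = f.coeff k) ∧
    ∀ j k, 1 ≤ k → k < j → (Nat.choose j k : F) * f.coeff j = 0 := by
  constructor
  · intro k hk
    obtain ⟨h1, h2⟩ := h k hk
    rw [eq_C_of_natDegree_eq_zero h2, extEnd_C, coeff_zero_hasseDeriv] at h1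
    exact C_injective h1
  · intro j k hk hkj
    obtain ⟨h1, h2⟩ := h k hk
    have := coeff_eq_zero_of_natDegree_lt (p := hasseDeriv k f) (n := j - k) (by omega)
    rwa [hasseDeriv_coeff, Nat.sub_add_cancel hkj.le] at this

/-- A nonconstant invariant of `X ↦ X + g` of minimal degree is, in characteristic `p`, of
degree a power of `p`, and its coefficients of positive index are invariant. -/
lemma minimal_additive_invariant {F : Type*} [Field F] (p : ℕ) [hp : Fact p.Prime] [CharP F p]
    (τ : F →+* F) (g : F) (h : ∃ Φ : F[X], extEnd τ (X + C g) Φ = Φ ∧ Φ.natDegree ≠ 0) :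
    ∃ (e : ℕ) (Φ : F[X]), extEnd τ (X + C g) Φ = Φ ∧ Φ.Monic ∧ Φ.natDegree = p ^ e ∧
      ∀ k, 1 ≤ k → τ (Φ.coeff k) = Φ.coeff k := by
  classical
  have hex : ∃ d, ∃ Φ : F[X], extEnd τ (X + C g) Φ = Φ ∧ Φ.natDegree ≠ 0 ∧ Φ.natDegree = d := by
    obtain ⟨Φ, h1, h2⟩ := h
    exact ⟨_, Φ, h1, h2, rfl⟩
  obtain ⟨Φ, h1, h2, h3⟩ := Nat.find_spec hex
  have hmin : ∀ k, 1 ≤ k → extEnd τ (X + C g) (hasseDeriv k Φ) = hasseDeriv k Φ ∧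
      (hasseDeriv k Φ).natDegree = 0 := by
    intro k hk
    have hinv : extEnd τ (X + C g) (hasseDeriv k Φ) = hasseDeriv k Φ := by
      rw [← hasseDeriv_extEnd, h1]
    refine ⟨hinv, ?_⟩
    by_contra hne
    have hlt : (hasseDeriv k Φ).natDegree < Nat.find hex := by
      have := natDegree_hasseDeriv_le Φ k
      omega
    exact Nat.find_min hex hlt ⟨_, hinv, hne, rfl⟩
  obtain ⟨hfix, hch⟩ := coeff_of_hasseDeriv_const τ g Φ hmin
  have hΦ0 : Φ ≠ 0 := by rintro rfl; simp at h2
  have hl : Φ.leadingCoeff ≠ 0 := leadingCoeff_ne_zero.mpr hΦ0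
  obtain ⟨e, he⟩ := eq_ppow_of_choose (F := F) p Φ.natDegree (by omega) (by
    intro k hk hkd
    have := hch _ k hk hkd
    rcases mul_eq_zero.mp this with h | h
    · exact h
    · exact absurd h hl)
  have hlfix : τ Φ.leadingCoeff⁻¹ = Φ.leadingCoeff⁻¹ := by
    rw [map_inv₀]; congr 1; exact hfix _ (by omega)
  refine ⟨e, Φ * C Φ.leadingCoeff⁻¹, ?_, monic_mul_leadingCoeff_inv hΦ0, ?_, ?_⟩
  · rw [map_mul, h1, extEnd_C, hlfix]
  · rw [natDegree_mul_C (inv_ne_zero hl), he]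
  · intro k hk
    rw [coeff_mul_C, map_mul, hfix k hk, hlfix]

/-- If `X ↦ X + g` has no nonconstant polynomial invariants, then only polynomials have a
polynomial difference `τ b - b`. -/
lemma isPoly_of_additive {F F' : Type*} [Field F] [Field F'] [Algebra F[X] F']
    [IsFractionRing F[X] F'] (τ : F →+* F) (g : F)
    (H : ∀ Φ : F[X], extEnd τ (X + C g) Φ = Φ → Φ.natDegree = 0) (τ' : F' →+* F')
    (hτ' : ∀ p, τ' (algebraMap F[X] F' p) = algebraMap F[X] F' (extEnd τ (X + C g) p))
    (p : F[X]) (b : F') (h : τ' b = b + algebraMap F[X] F' p) :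
    ∃ A : F[X], b = algebraMap F[X] F' A := by
  have e : X + C g = C 1 * X + C g := by simp
  obtain ⟨A, B, hAB, hB, rfl, hφB, hφA⟩ :=
    denominator_semi_invariant τ 1 g one_ne_zero τ' (by rw [← e]; exact hτ') p b h
  rw [← e] at hφB
  have := H B (by simpa using hφB)
  exact ⟨A, by rw [hB.natDegree_eq_zero.mp this]; simp⟩

lemma invariant_of_additive {F F' : Type*} [Field F] [Field F'] [Algebra F[X] F']
    [IsFractionRing F[X] F'] (τ : F →+* F) (g : F)
    (H : ∀ Φ : F[X], extEnd τ (X + C g) Φ = Φ → Φ.natDegree = 0) (τ' : F' →+* F')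
    (hτ' : ∀ p, τ' (algebraMap F[X] F' p) = algebraMap F[X] F' (extEnd τ (X + C g) p))
    (b : F') (h : τ' b = b) :
    ∃ f : F, τ f = f ∧ b = algebraMap F[X] F' (C f) := by
  obtain ⟨A, rfl⟩ := isPoly_of_additive τ g H τ' hτ' 0 b (by simpa using h)
  rw [hτ'] at h
  have h2 := IsFractionRing.injective F[X] F' h
  have h3 := eq_C_of_natDegree_eq_zero (H A h2)
  refine ⟨A.coeff 0, ?_, by rw [← h3]⟩
  rw [h3, extEnd_C] at h2
  exact C_injective h2

/-- The relation obtained by evaluating an invariant at `0`. -/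
lemma extEnd_add_coeff_zero {R : Type*} [CommRing R] (τ : R →+* R) (g : R) (f : R[X]) :
    (extEnd τ (X + C g) f).coeff 0 = (f.map τ).eval g := by
  rw [extEnd_add_eq_taylor, taylor_coeff_zero]

end Additive

/-! ### Invariants in towers of difference fields -/

section Tower
open Polynomial

lemma eval_map_split {R : Type*} [CommRing R] (τ : R →+* R) (f : R[X]) (g : R) (d : ℕ)
    (hd : f.natDegree ≤ d) :
    (f.map τ).eval g = τ (f.coeff 0) +
      ∑ i ∈ Finset.range d, τ (f.coeff (i + 1)) * g ^ (i + 1) := by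
  rw [eval_eq_sum_range' (n := d + 1) (by rw [Nat.lt_succ_iff]; exact natDegree_map_le.trans hd),
    Finset.sum_range_succ', add_comm]
  simp

/-- The polynomial without constant term with coefficients `f 1, …, f d`. -/
def polyOfCoeffs {R : Type*} [CommRing R] (f : ℕ → R) (d : ℕ) : R[X] :=
  ∑ i ∈ Finset.range d, C (f (i + 1)) * X ^ (i + 1)

lemma polyOfCoeffs_coeff {R : Type*} [CommRing R] (f : ℕ → R) (d j : ℕ) :
    (polyOfCoeffs f d).coeff j = if 1 ≤ j ∧ j ≤ d then f j else 0 := by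
  rw [polyOfCoeffs, finsetSum_coeff]
  simp only [coeff_C_mul_X_pow]
  split_ifs with h
  · rw [Finset.sum_eq_single (j - 1)]
    · rw [Nat.sub_add_cancel h.1]; simp
    · intro b _ hb; rw [if_neg]; omega
    · intro hb; exfalso; apply hb; rw [Finset.mem_range]; omega
  · apply Finset.sum_eq_zero
    intro i hi
    rw [Finset.mem_range] at hi
    rw [if_neg]; omega

lemma algebraMap_polyOfCoeffs_comp {R S : Type*} [CommRing R] [CommRing S] (ψ : R[X] →+* S)
    (f : ℕ → R) (d : ℕ) (t : R[X]) :
    ψ ((polyOfCoeffs f d).comp t) =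
      ∑ i ∈ Finset.range d, ψ (C (f (i + 1))) * ψ t ^ (i + 1) := by
  rw [← coe_compRingHom_apply, polyOfCoeffs, map_sum, map_sum]
  simp

/-- Adjoining the solution `S` of `τ S = S + γ aⁿ` creates no invariants, provided that no
`γ ^ (p ^ e)` is a twisted coboundary. -/
lemma no_invariant_S {F F' : Type*} [Field F] [Field F'] [Algebra F[X] F']
    [IsFractionRing F[X] F'] (p : ℕ) [hp : Fact p.Prime] [CharP F' p]
    (τ : F →+* F) (u : F) (hu : u ≠ 0)
    (H : ∀ (m : ℕ) (f : F), 1 ≤ m → τ f = u ^ m * f → f = 0) (τ' : F' →+* F')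
    (hτ' : ∀ p, τ' (algebraMap F[X] F' p) = algebraMap F[X] F' (extEnd τ (C u * X) p))
    (n : ℕ) (hn : 1 ≤ n) (γ : F)
    (hS : ∀ (e : ℕ) (β : F), τ β * u ^ (n * p ^ e) + γ ^ p ^ e = β → False)
    (Φ : F'[X]) (hΦ : extEnd τ' (X + C (algebraMap F[X] F' (C γ * X ^ n))) Φ = Φ) :
    Φ.natDegree = 0 := by
  by_contra hne
  set g := algebraMap F[X] F' (C γ * X ^ n) with hg
  obtain ⟨e, Ψ, h1, h2, h3, h4⟩ := minimal_additive_invariant p τ' g ⟨Φ, hΦ, hne⟩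
  have h5 : ∀ k, ∃ f : F, 1 ≤ k → Ψ.coeff k = algebraMap F[X] F' (C f) := by
    intro k
    by_cases hk : 1 ≤ k
    · obtain ⟨f, hf⟩ := invariant_of_scale τ u hu H τ' hτ' _ (h4 k hk)
      exact ⟨f, fun _ => hf⟩
    · exact ⟨0, fun h => absurd h hk⟩
  choose f hf using h5
  have h6 := extEnd_add_coeff_zero τ' g Ψ
  rw [h1, eval_map_split τ' Ψ g (p ^ e) h3.le] at h6
  have hpe : 1 ≤ p ^ e := Nat.one_le_pow _ _ hp.out.pos
  have hfd : f (p ^ e) = 1 := by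
    have := hf (p ^ e) hpe
    rw [← h3, h2.coeff_natDegree, h3] at this
    apply C_injective
    apply IsFractionRing.injective F[X] F'
    rw [← this]; simp
  obtain ⟨β, hβ⟩ := weight_extraction τ u hu H τ' hτ' n hn γ (polyOfCoeffs f (p ^ e)) (Ψ.coeff 0)
    (by
      rw [algebraMap_polyOfCoeffs_comp, ← hg]
      refine Eq.trans ?_ h6.symm
      congr 1
      apply Finset.sum_congr rfl
      intro i _
      rw [h4 _ (by omega), hf _ (by omega)]) (p ^ e)
  rw [polyOfCoeffs_coeff, if_pos ⟨hpe, le_rfl⟩, hfd, one_mul] at hβ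
  exact hS e β hβ

/-- In characteristic two, adjoining the solution `V` of `τ V = V + g S`, where `τ S = S + g`,
creates no invariants. -/
lemma no_invariant_V_two {F F' : Type*} [Field F] [Field F'] [Algebra F[X] F']
    [IsFractionRing F[X] F'] [CharP F 2] [CharP F' 2] (τ : F →+* F) (g : F)
    (H : ∀ Φ : F[X], extEnd τ (X + C g) Φ = Φ → Φ.natDegree = 0) (τ' : F' →+* F')
    (hτ' : ∀ p, τ' (algebraMap F[X] F' p) = algebraMap F[X] F' (extEnd τ (X + C g) p))
    (Φ : F'[X]) (hΦ : extEnd τ' (X + C (algebraMap F[X] F' (C g * X))) Φ = Φ) :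
    Φ.natDegree = 0 := by
  have : Fact (Nat.Prime 2) := ⟨Nat.prime_two⟩
  by_contra hne
  set G := algebraMap F[X] F' (C g * X) with hG
  obtain ⟨e, Ψ, h1, h2, h3, h4⟩ := minimal_additive_invariant 2 τ' G ⟨Φ, hΦ, hne⟩
  have h5 : ∀ k, ∃ f : F, 1 ≤ k → Ψ.coeff k = algebraMap F[X] F' (C f) := by
    intro k
    by_cases hk : 1 ≤ k
    · obtain ⟨f, _, hf⟩ := invariant_of_additive τ g H τ' hτ' _ (h4 k hk)
      exact ⟨f, fun _ => hf⟩
    · exact ⟨0, fun h => absurd h hk⟩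
  choose f hf using h5
  have h6 := extEnd_add_coeff_zero τ' G Ψ
  rw [h1, eval_map_split τ' Ψ G (2 ^ e) h3.le] at h6
  set d := 2 ^ e with hd
  have hd1 : 1 ≤ d := Nat.one_le_pow _ _ (by norm_num)
  have hfd : f d = 1 := by
    have := hf d hd1
    rw [← h3, h2.coeff_natDegree, h3] at this
    apply C_injective
    apply IsFractionRing.injective F[X] F'
    rw [← this]; simp
  set W := (polyOfCoeffs f d).comp (C g * X) with hW
  have h7 : τ' (Ψ.coeff 0) + algebraMap F[X] F' W = Ψ.coeff 0 := by
    rw [hW, algebraMap_polyOfCoeffs_comp, ← hG]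
    refine Eq.trans ?_ h6.symm
    congr 1
    apply Finset.sum_congr rfl
    intro i _
    rw [h4 _ (by omega), hf _ (by omega)]
  obtain ⟨b, hb⟩ := isPoly_of_additive τ g H τ' hτ' (-W) (Ψ.coeff 0) (by
    rw [map_neg, ← sub_eq_add_neg, eq_sub_iff_add_eq, h7])
  rw [hb, hτ', ← map_add] at h7
  have h8 := IsFractionRing.injective F[X] F' h7
  have hWd : hasseDeriv d W = C (g ^ d) := by
    ext i
    rw [hasseDeriv_coeff, hW, comp_C_mul_X_coeff, polyOfCoeffs_coeff, coeff_C]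
    split_ifs with h1 h2 h2
    · rw [h2, zero_add, hfd]; simp
    · omega
    · omega
    · simp
  have hinv : extEnd τ (X + C g) (hasseDeriv d b + X ^ d) = hasseDeriv d b + X ^ d := by
    have h9 := congrArg (hasseDeriv d) h8
    rw [map_add, hasseDeriv_extEnd, hWd] at h9
    rw [map_add, map_pow, extEnd_X, hd, add_pow_char_pow, ← hd]
    rw [map_pow] at h9
    linear_combination h9
  have hz := coeff_eq_zero_of_natDegree_lt (p := hasseDeriv d b + X ^ d) (n := d) (by
    rw [H _ hinv]; omega)
  rw [coeff_add, hasseDeriv_coeff, coeff_X_pow_self] at hz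
  have hch : (Nat.choose (d + d) d : F) = 0 := by
    have := choose_ppow_mul (F := F) 2 e 2
    rw [← hd, mul_two] at this
    rw [this]
    exact CharP.cast_eq_zero F 2
  rw [hch] at hz
  simp at hz

/-- In odd characteristic, an invariant created by the solution `V` of `τ V = V + g ^ 2`, on top
of `S` with `τ S = S + g`, where `g = γ aⁿ`, exhibits some `γ ^ (2 * p ^ e)` as a twisted
coboundary. -/
lemma invariant_V_odd {F F' F'' : Type*} [Field F] [Field F'] [Field F''] [Algebra F[X] F']
    [IsFractionRing F[X] F'] [Algebra F'[X] F''] [IsFractionRing F'[X] F'']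
    (p : ℕ) [hp : Fact p.Prime] [CharP F' p] [CharP F'' p] (hp2 : p ≠ 2)
    (τ : F →+* F) (u : F) (hu : u ≠ 0)
    (H : ∀ (m : ℕ) (f : F), 1 ≤ m → τ f = u ^ m * f → f = 0) (τ' : F' →+* F')
    (hτ' : ∀ p, τ' (algebraMap F[X] F' p) = algebraMap F[X] F' (extEnd τ (C u * X) p))
    (n : ℕ) (hn : 1 ≤ n) (γ : F) (g : F') (hg : g = algebraMap F[X] F' (C γ * X ^ n))
    (H' : ∀ Φ : F'[X], extEnd τ' (X + C g) Φ = Φ → Φ.natDegree = 0) (τ'' : F'' →+* F'')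
    (hτ'' : ∀ p, τ'' (algebraMap F'[X] F'' p) = algebraMap F'[X] F'' (extEnd τ' (X + C g) p))
    (Φ : F''[X]) (hΦ : extEnd τ'' (X + C (algebraMap F'[X] F'' (C (g ^ 2)))) Φ = Φ)
    (hne : Φ.natDegree ≠ 0) :
    ∃ (e : ℕ) (β : F), τ β * u ^ (n * (2 * p ^ e)) + γ ^ (2 * p ^ e) = β := by
  set G := algebraMap F'[X] F'' (C (g ^ 2)) with hG
  obtain ⟨e, Ψ, h1, h2, h3, h4⟩ := minimal_additive_invariant p τ'' G ⟨Φ, hΦ, hne⟩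
  have h5 : ∀ k, ∃ f : F, 1 ≤ k →
      Ψ.coeff k = algebraMap F'[X] F'' (C (algebraMap F[X] F' (C f))) := by
    intro k
    by_cases hk : 1 ≤ k
    · obtain ⟨f, hfix, hf⟩ := invariant_of_additive τ' g H' τ'' hτ'' _ (h4 k hk)
      obtain ⟨f', hf'⟩ := invariant_of_scale τ u hu H τ' hτ' _ hfix
      exact ⟨f', fun _ => by rw [hf, hf']⟩
    · exact ⟨0, fun h => absurd h hk⟩
  choose f hf using h5
  have h6 := extEnd_add_coeff_zero τ'' G Ψ
  rw [h1, eval_map_split τ'' Ψ G (p ^ e) h3.le] at h6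
  set d := p ^ e with hd
  have hd1 : 1 ≤ d := Nat.one_le_pow _ _ hp.out.pos
  have hfd : f d = 1 := by
    have := hf d hd1
    rw [← h3, h2.coeff_natDegree, h3] at this
    apply C_injective
    apply IsFractionRing.injective F[X] F'
    apply C_injective
    apply IsFractionRing.injective F'[X] F''
    rw [← this]; simp
  set W : F' := algebraMap F[X] F' ((polyOfCoeffs f d).comp ((C γ * X ^ n) ^ 2)) with hW
  have hW' : W = ∑ i ∈ Finset.range d, algebraMap F[X] F' (C (f (i + 1))) * (g ^ 2) ^ (i + 1) := by
    rw [hW, algebraMap_polyOfCoeffs_comp, map_pow, hg]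
  have h7 : τ'' (Ψ.coeff 0) + algebraMap F'[X] F'' (C W) = Ψ.coeff 0 := by
    rw [hW', map_sum, map_sum]
    refine Eq.trans ?_ h6.symm
    congr 1
    apply Finset.sum_congr rfl
    intro i _
    rw [h4 _ (by omega), hf _ (by omega), hG]
    simp only [map_mul, map_pow]
  obtain ⟨b, hb⟩ := isPoly_of_additive τ' g H' τ'' hτ'' (-C W) (Ψ.coeff 0) (by
    rw [map_neg, ← sub_eq_add_neg, eq_sub_iff_add_eq, h7])
  rw [hb, hτ'', ← map_add] at h7
  have h8 := IsFractionRing.injective F'[X] F'' h7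
  obtain ⟨hfix, hch⟩ := coeff_of_hasseDeriv_const τ' g b (by
    intro k hk
    have h9 := congrArg (hasseDeriv k) h8
    rw [map_add, hasseDeriv_extEnd, hasseDeriv_C _ _ hk, add_zero] at h9
    exact ⟨h9, H' _ h9⟩)
  have hb2 : b.coeff (2 * d) = 0 := by
    have h9 := hch (2 * d) d hd1 (by omega)
    have h10 := choose_ppow_mul (F := F') p e 2
    rw [← hd, mul_comm d 2] at h10
    rw [h10] at h9
    rcases mul_eq_zero.mp h9 with h11 | h11
    · exfalso
      have := (CharP.cast_eq_zero_iff F' p 2).mp h11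
      exact hp2 ((Nat.prime_dvd_prime_iff_eq hp.out Nat.prime_two).mp this)
    · exact h11
  have h9 : ∀ k, ∃ f : F, 1 ≤ k → b.coeff k = algebraMap F[X] F' (C f) := by
    intro k
    by_cases hk : 1 ≤ k
    · obtain ⟨f', hf'⟩ := invariant_of_scale τ u hu H τ' hτ' _ (hfix k hk)
      exact ⟨f', fun _ => by rw [hf']⟩
    · exact ⟨0, fun h => absurd h hk⟩
  choose f2 hf2 using h9
  have h10 := congrArg (fun P => coeff P 0) h8
  simp only [coeff_add, extEnd_add_coeff_zero, coeff_C_zero] at h10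
  rw [eval_map_split τ' b g b.natDegree le_rfl] at h10
  obtain ⟨β, hβ⟩ := weight_extraction τ u hu H τ' hτ' n hn γ
    (polyOfCoeffs f2 b.natDegree + (polyOfCoeffs f d).comp (X ^ 2)) (b.coeff 0) (by
      rw [add_comp, map_add, algebraMap_polyOfCoeffs_comp, ← hg, comp_assoc]
      simp only [X_pow_comp]
      rw [← hW]
      refine Eq.trans ?_ h10
      rw [← add_assoc]
      congr 2
      apply Finset.sum_congr rfl
      intro i _
      rw [hfix _ (by omega), hf2 _ (by omega)]) (2 * d)
  refine ⟨e, β, ?_⟩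
  rw [← hd]
  rw [coeff_add, ← expand_eq_comp_X_pow, mul_comm 2 d, coeff_expand_mul (by norm_num),
    polyOfCoeffs_coeff, polyOfCoeffs_coeff, if_pos (⟨hd1, le_rfl⟩ : 1 ≤ d ∧ d ≤ d), hfd] at hβ
  rw [mul_comm 2 d]
  convert hβ using 2
  split_ifs with h11
  · have h12 := hf2 (d * 2) h11.1
    rw [mul_comm d 2, hb2, mul_comm 2 d] at h12
    have : f2 (d * 2) = 0 := by
      apply C_injective
      apply IsFractionRing.injective F[X] F'
      rw [← h12]; simp
    rw [this]; simp
  · simp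

end Tower

/-! ### From relations between germs to invariants -/

section Descent
open Polynomial

/-- A polynomial of minimal degree in the kernel of the evaluation at a solution `y` of an affine
difference equation is a semi-invariant. -/
lemma minimal_relation {R G : Type*} [CommRing R] [IsDomain R] [CommRing G] (T : R →+* R)
    (sh : G →+* G) (ev : R →+* G) (hev : Function.Injective ev)
    (hsh : ∀ r, sh (ev r) = ev (T r)) (u g : R) (y : G) (hy : sh y = ev u * y + ev g)
    (hni : ¬ Function.Injective (eval₂RingHom ev y)) :
    ∃ Q : R[X], eval₂ ev y Q = 0 ∧ Q.natDegree ≠ 0 ∧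
      C Q.leadingCoeff * extEnd T (C u * X + C g) Q =
        C (T Q.leadingCoeff * u ^ Q.natDegree) * Q := by
  classical
  have hex : ∃ d, ∃ Q : R[X], eval₂ ev y Q = 0 ∧ Q ≠ 0 ∧ Q.natDegree = d := by
    rw [injective_iff_map_eq_zero] at hni
    push Not at hni
    obtain ⟨Q, h1, h2⟩ := hni
    exact ⟨_, Q, h1, h2, rfl⟩
  obtain ⟨Q, h1, h2, h3⟩ := Nat.find_spec hex
  have hd : Q.natDegree ≠ 0 := by
    intro h
    rw [eq_C_of_natDegree_eq_zero h] at h1 h2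
    rw [eval₂_C, map_eq_zero_iff _ hev] at h1
    exact h2 (by rw [h1, C_0])
  refine ⟨Q, h1, hd, ?_⟩
  have hcompat : ∀ P : R[X], eval₂ ev y (extEnd T (C u * X + C g) P) = sh (eval₂ ev y P) := by
    intro P
    have : (eval₂RingHom ev y).comp (extEnd T (C u * X + C g)) = sh.comp (eval₂RingHom ev y) := by
      apply Polynomial.ringHom_ext
      · intro a; simp [hsh]
      · simp [hy]
    exact congrArg (fun f => f P) this
  have hle : (extEnd T (C u * X + C g) Q).natDegree ≤ Q.natDegree := by
    rw [extEnd_apply]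
    refine natDegree_comp_le.trans ?_
    have h1 : (Q.map T).natDegree ≤ Q.natDegree := natDegree_map_le
    have h2 : (C u * X + C g).natDegree ≤ 1 := natDegree_linear_le
    calc _ ≤ Q.natDegree * 1 := Nat.mul_le_mul h1 h2
      _ = _ := mul_one _
  have hco : (extEnd T (C u * X + C g) Q).coeff Q.natDegree =
      T Q.leadingCoeff * u ^ Q.natDegree := by
    rw [extEnd_apply, comp, eval₂_eq_sum_range' C (n := Q.natDegree + 1)
      (by rw [Nat.lt_succ_iff]; exact natDegree_map_le), finsetSum_coeff,
      Finset.sum_range_succ, Finset.sum_eq_zero, zero_add]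
    · rw [coeff_C_mul, coeff_map]
      congr 1
      have := coeff_pow_of_natDegree_le (p := C u * X + C g) (n := 1) (m := Q.natDegree)
        natDegree_linear_le
      rw [mul_one] at this
      rw [this]; simp
    · intro i hi
      rw [Finset.mem_range] at hi
      rw [coeff_C_mul, coeff_eq_zero_of_natDegree_lt (p := (C u * X + C g) ^ i), mul_zero]
      refine lt_of_le_of_lt (natDegree_pow_le_of_le i natDegree_linear_le) ?_
      rwa [mul_one]
  rw [← sub_eq_zero]
  by_contra hne
  set E := C Q.leadingCoeff * extEnd T (C u * X + C g) Q -
    C (T Q.leadingCoeff * u ^ Q.natDegree) * Q with hE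
  have hEd : E.natDegree ≤ Q.natDegree := by
    refine (natDegree_sub_le _ _).trans (max_le ?_ ?_)
    · exact (natDegree_C_mul_le _ _).trans hle
    · exact natDegree_C_mul_le _ _
  have hE0 : E.coeff Q.natDegree = 0 := by
    rw [hE, coeff_sub, coeff_C_mul, coeff_C_mul, hco, coeff_natDegree]; ring
  have hlt : E.natDegree < Q.natDegree := by
    refine lt_of_le_of_ne hEd ?_
    intro h
    rw [← h, coeff_natDegree, leadingCoeff_eq_zero] at hE0
    exact hne hE0
  refine Nat.find_min hex (h3 ▸ hlt) ⟨E, ?_, hne, rfl⟩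
  rw [hE, eval₂_sub, eval₂_mul, eval₂_mul, hcompat, h1]; simp

/-- A multiplicative difference equation without semi-invariants has no algebraic solutions. -/
lemma injective_scale {F G : Type*} [Field F] [CommRing G] [Nontrivial G] (τ : F →+* F)
    (sh : G →+* G) (ev : F →+* G)
    (hsh : ∀ r, sh (ev r) = ev (τ r)) (u : F) (hu : u ≠ 0)
    (H : ∀ (m : ℕ) (f : F), 1 ≤ m → τ f = u ^ m * f → f = 0)
    (y : G) (hyu : IsUnit y) (hy : sh y = ev u * y) :
    Function.Injective (eval₂RingHom ev y) := by
  by_contra hni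
  obtain ⟨Q, h1, h2, h3⟩ := minimal_relation τ sh ev ev.injective hsh u 0 y (by simpa using hy) hni
  rw [C_0, add_zero] at h3
  have hQ0 : Q ≠ 0 := by rintro rfl; simp at h2
  have hl : Q.leadingCoeff ≠ 0 := leadingCoeff_ne_zero.mpr hQ0
  have hz : ∀ i, i < Q.natDegree → Q.coeff i = 0 := by
    intro i hi
    have h4 := congrArg (fun P => coeff P i) h3
    simp only [coeff_C_mul, extEnd_coeff_scale] at h4
    have h5 := H (Q.natDegree - i) (Q.coeff i / Q.leadingCoeff) (by omega) (by
      rw [map_div₀]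
      have hτl : τ Q.leadingCoeff ≠ 0 := by simpa using hl
      rw [div_eq_iff hτl]
      have : u ^ Q.natDegree = u ^ (Q.natDegree - i) * u ^ i := by
        rw [← pow_add, Nat.sub_add_cancel hi.le]
      have h4' : Q.leadingCoeff * τ (Q.coeff i) =
          τ Q.leadingCoeff * u ^ (Q.natDegree - i) * Q.coeff i := by
        apply mul_right_cancel₀ (pow_ne_zero i hu)
        rw [this] at h4
        linear_combination h4
      field_simp
      linear_combination h4')
    rcases div_eq_zero_iff.mp h5 with h | h
    · exact h
    · exact absurd h hl
  have hQ : Q = C Q.leadingCoeff * X ^ Q.natDegree := by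
    ext i
    rw [coeff_C_mul_X_pow]
    rcases lt_trichotomy i Q.natDegree with h | h | h
    · rw [hz i h, if_neg h.ne]
    · rw [h, if_pos rfl, coeff_natDegree]
    · rw [if_neg h.ne', coeff_eq_zero_of_natDegree_lt h]
  rw [hQ, eval₂_mul, eval₂_C, eval₂_X_pow] at h1
  have : IsUnit (ev Q.leadingCoeff * y ^ Q.natDegree) :=
    ((isUnit_iff_ne_zero.mpr hl).map ev).mul (hyu.pow _)
  rw [h1] at this
  exact not_isUnit_zero this

/-- An algebraic solution of an additive difference equation over a difference domain `R`
produces a nonconstant invariant over any difference field containing `R`. -/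
lemma invariant_of_not_injective {R F G : Type*} [CommRing R] [IsDomain R] [CommRing G] [Field F]
    (T : R →+* R) (sh : G →+* G) (ev : R →+* G) (hev : Function.Injective ev)
    (hsh : ∀ r, sh (ev r) = ev (T r)) (j : R →+* F) (hj : Function.Injective j) (τ : F →+* F)
    (hjT : ∀ r, τ (j r) = j (T r)) (g : R) (y : G) (hy : sh y = y + ev g)
    (hni : ¬ Function.Injective (eval₂RingHom ev y)) :
    ∃ Φ : F[X], extEnd τ (X + C (j g)) Φ = Φ ∧ Φ.natDegree ≠ 0 := by
  obtain ⟨Q, h1, h2, h3⟩ := minimal_relation T sh ev hev hsh 1 g y (by simpa using hy) hni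
  have hQ0 : Q ≠ 0 := by rintro rfl; simp at h2
  have hl : j Q.leadingCoeff ≠ 0 := by
    rw [Ne, map_eq_zero_iff _ hj]; exact leadingCoeff_ne_zero.mpr hQ0
  have hτl : τ (j Q.leadingCoeff) ≠ 0 := by simpa using hl
  have hmap : ∀ P : R[X], (extEnd T (X + C g) P).map j = extEnd τ (X + C (j g)) (P.map j) := by
    intro P
    have : (mapRingHom j).comp (extEnd T (X + C g)) =
        (extEnd τ (X + C (j g))).comp (mapRingHom j) := by
      apply Polynomial.ringHom_ext
      · intro a; simp [hjT]
      · simp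
    exact congrArg (fun f => f P) this
  refine ⟨Q.map j * C (j Q.leadingCoeff)⁻¹, ?_, ?_⟩
  · have h4 := congrArg (Polynomial.map j) h3
    simp only [C_1, one_mul, one_pow, mul_one, Polynomial.map_mul, map_C, hmap] at h4
    rw [← hjT] at h4
    rw [map_mul, extEnd_C, map_inv₀]
    have e1 : (C (j Q.leadingCoeff) : F[X]) * C (j Q.leadingCoeff)⁻¹ = 1 := by
      rw [← C_mul, mul_inv_cancel₀ hl, C_1]
    have e2 : (C (τ (j Q.leadingCoeff)) : F[X]) * C (τ (j Q.leadingCoeff))⁻¹ = 1 := by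
      rw [← C_mul, mul_inv_cancel₀ hτl, C_1]
    linear_combination (C (τ (j Q.leadingCoeff))⁻¹ * C (j Q.leadingCoeff)⁻¹) * h4 +
      Q.map j * C (j Q.leadingCoeff)⁻¹ * e2 -
      extEnd τ (X + C (j g)) (Q.map j) * C (τ (j Q.leadingCoeff))⁻¹ * e1
  · rw [natDegree_mul_C (inv_ne_zero hl), natDegree_map_eq_of_injective hj]
    exact h2

end Descent

section Germs
open Filter

/-- The shift on germs of sequences at infinity. -/
def germShift (K : Type*) [CommRing K] : Germ (atTop : Filter ℕ) K →+* Germ (atTop : Filter ℕ) K where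
  toFun f := f.compTendsto (fun k => k + 1) (tendsto_add_atTop_nat 1)
  map_one' := rfl
  map_zero' := rfl
  map_add' f g := Germ.inductionOn₂ f g fun _ _ => rfl
  map_mul' f g := Germ.inductionOn₂ f g fun _ _ => rfl

lemma germShift_coe {K : Type*} [CommRing K] (f : ℕ → K) :
    germShift K (f : Germ (atTop : Filter ℕ) K) = ((fun k => f (k + 1) : ℕ → K) : Germ _ K) := rfl

lemma germ_isUnit {K : Type*} [Field K] (f : ℕ → K) (h : ∀ᶠ k in atTop, f k ≠ 0) :
    IsUnit (f : Germ (atTop : Filter ℕ) K) := by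
  refine IsUnit.of_mul_eq_one ((fun k => (f k)⁻¹ : ℕ → K) : Germ _ K) ?_
  rw [← Germ.coe_mul]
  refine Germ.coe_eq.mpr ?_
  filter_upwards [h] with k hk
  simp [mul_inv_cancel₀ hk]

end Germs

/-! ### The orbit and its rational functions -/

section BaseField
open Polynomial Filter

/-- The orbit `w 0 = 1, w (k + 1) = - w k ^ q / θ` of the substitution `X ↦ - X ^ q / θ`. -/
structure WSeq (K : Type*) [Field K] where
  q : ℕ
  hq : 2 ≤ q
  θ : K
  hθ : θ ≠ 0
  w : ℕ → K
  w0 : w 0 = 1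
  wsucc : ∀ k, w (k + 1) = -θ⁻¹ * w k ^ q
  winj : Function.Injective w

namespace WSeq
variable {K : Type*} [Field K] (D : WSeq K)

/-- The image `- X ^ q / θ` of the variable. -/
def t : K[X] := C (-D.θ⁻¹) * X ^ D.q

/-- The cocycle `1 - t ^ (q - 1)`. -/
def c : K[X] := 1 - D.t ^ (D.q - 1)

lemma natDegree_t : D.t.natDegree = D.q := by
  rw [t, natDegree_C_mul_X_pow]
  exact neg_ne_zero.mpr (inv_ne_zero D.hθ)

lemma eval_t (k : ℕ) : D.t.eval (D.w k) = D.w (k + 1) := by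
  simp [t, D.wsucc]

lemma eval_comp_t (k : ℕ) (A : K[X]) : (A.comp D.t).eval (D.w k) = A.eval (D.w (k + 1)) := by
  rw [eval_comp, eval_t]

lemma c_ne_zero : D.c ≠ 0 := by
  intro h
  have h1 := congrArg (fun P => coeff P 0) h
  have hq := D.hq
  have h2 : (D.t ^ (D.q - 1)).coeff 0 = 0 := by
    rw [coeff_zero_eq_eval_zero, eval_pow, t]
    simp [show D.q ≠ 0 by omega, show D.q - 1 ≠ 0 by omega]
  simp [c, h2] at h1

/-- A solution of `A ∘ t = c ^ m (A + Γ)` vanishes at `1`, because `t - 1` divides `c`. -/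
lemma eval_one_eq_zero (m : ℕ) (hm : 1 ≤ m) (A Γ : K[X]) (h : A.comp D.t = D.c ^ m * (A + Γ)) :
    A.eval 1 = 0 := by
  have h1 : D.t - 1 ∣ D.c := by
    rw [c, ← neg_sub (D.t ^ (D.q - 1)) 1, dvd_neg]
    exact sub_one_dvd_pow_sub_one _ _
  have h2 : D.t - 1 ∣ A.comp D.t := by
    rw [h]; exact (h1.trans (dvd_pow_self _ (by omega))).mul_right _
  have h3 : D.t - 1 ∣ C (A.eval 1) := by
    have h4 : (X - C 1) ∣ A - C (A.eval 1) := X_sub_C_dvd_sub_C_eval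
    obtain ⟨B, hB⟩ := h4
    have h5 := congrArg (fun P => P.comp D.t) hB
    simp only [sub_comp, mul_comp, X_comp, C_comp, C_1, one_comp] at h5
    have h6 : C (A.eval 1) = A.comp D.t - (D.t - 1) * B.comp D.t := by
      rw [← h5]; ring
    rw [h6]
    exact dvd_sub h2 (dvd_mul_right _ _)
  by_contra hne
  have h4 := natDegree_le_of_dvd h3 (by simpa using hne)
  have h5 : (D.t - 1).natDegree = D.q := by
    rw [← C_1, natDegree_sub_C, natDegree_t]
  rw [h5, natDegree_C] at h4
  have := D.hq
  omega

lemma eq_zero_of_eval (A : K[X]) (h : ∀ k, A.eval (D.w k) = 0) : A = 0 :=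
  eq_zero_of_infinite_isRoot A ((Set.infinite_range_of_injective D.winj).mono (by
    rintro _ ⟨k, rfl⟩; exact h k))

lemma eq_zero_of_comp (m : ℕ) (hm : 1 ≤ m) (A : K[X]) (h : A.comp D.t = D.c ^ m * A) : A = 0 := by
  apply D.eq_zero_of_eval
  intro k
  induction k with
  | zero =>
    rw [D.w0]
    exact D.eval_one_eq_zero m hm A 0 (by rw [add_zero, h])
  | succ k ih => rw [← eval_comp_t, h, eval_mul, ih, mul_zero]

/-- The endomorphism of `K(w)` given by `w ↦ - w ^ q / θ`. -/
def τ : FractionRing K[X] →+* FractionRing K[X] :=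
  IsFractionRing.lift (A := K[X])
    (g := (algebraMap K[X] (FractionRing K[X])).comp (extEnd (RingHom.id K) D.t))
    ((IsFractionRing.injective K[X] (FractionRing K[X])).comp
      (extEnd_injective (RingHom.id K) D.t (by rw [natDegree_t]; have := D.hq; omega)))

lemma τ_algebraMap (p : K[X]) :
    D.τ (algebraMap K[X] (FractionRing K[X]) p) = algebraMap K[X] _ (p.comp D.t) := by
  have h : D.τ (algebraMap K[X] (FractionRing K[X]) p) =
      algebraMap K[X] _ (extEnd (RingHom.id K) D.t p) := IsFractionRing.lift_algebraMap _ _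
  rw [h, extEnd_apply, Polynomial.map_id]

/-- The multiplier `c⁻¹` in `K(w)`. -/
def u : FractionRing K[X] := (algebraMap K[X] (FractionRing K[X]) D.c)⁻¹

lemma algebraMap_c_ne_zero : algebraMap K[X] (FractionRing K[X]) D.c ≠ 0 := by
  rw [Ne, map_eq_zero_iff _ (IsFractionRing.injective K[X] (FractionRing K[X]))]
  exact D.c_ne_zero

lemma u_ne_zero : D.u ≠ 0 := inv_ne_zero D.algebraMap_c_ne_zero

/-- Solutions of twisted coboundary equations over `K(w)` are polynomials. -/
lemma exists_poly (m : ℕ) (β : FractionRing K[X]) (Γ : K[X])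
    (h : D.τ β * D.u ^ m + algebraMap K[X] _ Γ = β) :
    ∃ A : K[X], A.comp D.t = D.c ^ m * (A + -Γ) ∧ β = algebraMap K[X] _ A := by
  have hc := D.algebraMap_c_ne_zero
  have h' : D.τ β = algebraMap K[X] _ (D.c ^ m) * β +
      algebraMap K[X] _ (-(D.c ^ m * Γ)) := by
    have e : D.u ^ m * algebraMap K[X] _ (D.c ^ m) = 1 := by
      rw [u, map_pow, ← mul_pow, inv_mul_cancel₀ hc, one_pow]
    rw [map_neg, map_mul]
    linear_combination (algebraMap K[X] (FractionRing K[X]) (D.c ^ m)) * h - D.τ β * e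
  obtain ⟨A, hA⟩ := isPoly_of_nonlinear (RingHom.id K) D.t (by rw [natDegree_t]; exact D.hq) D.τ
    (fun p => by rw [τ_algebraMap, extEnd_apply, Polynomial.map_id]) (D.c ^ m) (-(D.c ^ m * Γ)) β h'
  refine ⟨A, ?_, hA⟩
  rw [hA, τ_algebraMap, ← map_mul, ← map_add] at h'
  rw [IsFractionRing.injective K[X] (FractionRing K[X]) h']; ring

lemma no_semi_invariant (m : ℕ) (f : FractionRing K[X]) (hm : 1 ≤ m)
    (h : D.τ f = D.u ^ m * f) : f = 0 := by
  obtain ⟨A, h1, h2⟩ := D.exists_poly m f⁻¹ 0 (by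
    rw [map_inv₀, h, map_zero, mul_inv]
    have := pow_ne_zero m D.u_ne_zero
    field_simp
    simp)
  rw [neg_zero, add_zero] at h1
  rw [D.eq_zero_of_comp m hm A h1, map_zero] at h2
  simpa using h2

/-- Evaluation along the orbit, with values in germs of sequences. -/
def evP : K[X] →+* Germ (atTop : Filter ℕ) K :=
  (Germ.coeRingHom (atTop : Filter ℕ)).comp (RingHom.pi (fun k => evalRingHom (D.w k)))

lemma evP_apply (A : K[X]) : D.evP A = ((fun k => A.eval (D.w k) : ℕ → K) : Germ _ K) := rfl

lemma eventually_ne_zero (A : K[X]) (hA : A ≠ 0) : ∀ᶠ k in atTop, A.eval (D.w k) ≠ 0 := by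
  have hfin : (D.w ⁻¹' {x | A.IsRoot x}).Finite :=
    (finite_setOfPred_isRoot hA).preimage D.winj.injOn
  have := hfin.eventually_cofinite_notMem
  rw [Nat.cofinite_eq_atTop] at this
  exact this

/-- Evaluation of rational functions along the orbit. -/
def ev0 : FractionRing K[X] →+* Germ (atTop : Filter ℕ) K :=
  IsLocalization.lift (M := nonZeroDivisors K[X]) (g := D.evP) (fun A => by
    rw [evP_apply]
    exact germ_isUnit _ (D.eventually_ne_zero A (nonZeroDivisors.ne_zero A.2)))

lemma ev0_algebraMap (A : K[X]) : D.ev0 (algebraMap K[X] _ A) = D.evP A :=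
  IsLocalization.lift_eq _ _

lemma sh_ev0 (f : FractionRing K[X]) : germShift K (D.ev0 f) = D.ev0 (D.τ f) := by
  have : (germShift K).comp D.ev0 = D.ev0.comp D.τ := by
    apply IsLocalization.ringHom_ext (nonZeroDivisors K[X])
    refine RingHom.ext fun x => ?_
    simp only [RingHom.comp_apply, τ_algebraMap, ev0_algebraMap, evP_apply, germShift_coe,
      eval_comp_t]
  exact congrArg (fun g => g f) this

end WSeq
end BaseField

/-! ### Zariski density of the points -/

section Density
open Polynomial Filter

/-- An injective endomorphism of a domain, extended to the field of fractions. -/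
def fracEnd {R : Type*} [CommRing R] [IsDomain R] (F : Type*) [Field F] [Algebra R F]
    [IsFractionRing R F] (φ : R →+* R) (h : Function.Injective φ) : F →+* F :=
  IsFractionRing.lift (A := R) (g := (algebraMap R F).comp φ)
    ((IsFractionRing.injective R F).comp h)

lemma fracEnd_algebraMap {R : Type*} [CommRing R] [IsDomain R] (F : Type*) [Field F] [Algebra R F]
    [IsFractionRing R F] (φ : R →+* R) (h : Function.Injective φ) (x : R) :
    fracEnd F φ h (algebraMap R F x) = algebraMap R F (φ x) :=
  IsFractionRing.lift_algebraMap _ _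

lemma sh_eval₂ {R G : Type*} [CommRing R] [CommRing G] (T : R →+* R) (sh : G →+* G) (ev : R →+* G)
    (hsh : ∀ r, sh (ev r) = ev (T r)) (t : R[X]) (y : G) (hy : sh y = eval₂ ev y t) (P : R[X]) :
    sh (eval₂RingHom ev y P) = eval₂RingHom ev y (extEnd T t P) := by
  have : (eval₂RingHom ev y).comp (extEnd T t) = sh.comp (eval₂RingHom ev y) := by
    apply Polynomial.ringHom_ext
    · intro a; simp [hsh]
    · simp [hy]
  exact (congrArg (fun f => f P) this).symm

/-- An orbit `w` together with solutions `a` of `a (k + 1) = a k / c (w k)` and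
`s` of `s (k + 1) = s k + γ (w k) * a k ^ n`. -/
structure ASSeq (K : Type*) [Field K] extends WSeq K where
  n : ℕ
  hn : 1 ≤ n
  γ : K[X]
  a : ℕ → K
  s : ℕ → K
  ha0 : ∀ k, a k ≠ 0
  ha : ∀ k, a (k + 1) * toWSeq.c.eval (w k) = a k
  hs : ∀ k, s (k + 1) = s k + γ.eval (w k) * a k ^ n

namespace ASSeq
variable {K : Type*} [Field K] (D : ASSeq K)

/-- `γ` as a rational function. -/
def γ0 : FractionRing K[X] := algebraMap K[X] _ D.γ

/-- The endomorphism of `K(w)[a]`. -/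
def T1 : (FractionRing K[X])[X] →+* (FractionRing K[X])[X] := extEnd D.τ (C D.u * X)

/-- The endomorphism of `K(w)[a][s]`. -/
def T2 : (FractionRing K[X])[X][X] →+* (FractionRing K[X])[X][X] :=
  extEnd D.T1 (X + C (C D.γ0 * X ^ D.n))

/-- Evaluation of elements of `K(w)[a]` along the sequences. -/
def ev1 : (FractionRing K[X])[X] →+* Germ (atTop : Filter ℕ) K :=
  eval₂RingHom D.ev0 (D.a : Germ (atTop : Filter ℕ) K)

/-- Evaluation of elements of `K(w)[a][s]` along the sequences. -/
def ev2 : (FractionRing K[X])[X][X] →+* Germ (atTop : Filter ℕ) K :=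
  eval₂RingHom D.ev1 (D.s : Germ (atTop : Filter ℕ) K)

lemma sh_a : germShift K (D.a : Germ (atTop : Filter ℕ) K) =
    D.ev0 D.u * (D.a : Germ (atTop : Filter ℕ) K) := by
  have h1 : D.ev0 (algebraMap K[X] _ D.c) * germShift K (D.a : Germ (atTop : Filter ℕ) K) =
      (D.a : Germ (atTop : Filter ℕ) K) := by
    rw [WSeq.ev0_algebraMap, WSeq.evP_apply, germShift_coe, ← Germ.coe_mul]
    congr 1
    funext k
    simp only [Pi.mul_apply]
    rw [mul_comm, D.ha]
  have h2 : D.ev0 D.u * D.ev0 (algebraMap K[X] _ D.c) = 1 := by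
    rw [← map_mul, WSeq.u, inv_mul_cancel₀ D.algebraMap_c_ne_zero, map_one]
  rw [← h1, ← mul_assoc, h2, one_mul, h1]

lemma ev1_injective : Function.Injective D.ev1 :=
  injective_scale D.τ (germShift K) D.ev0 D.sh_ev0 D.u D.u_ne_zero D.no_semi_invariant _
    (germ_isUnit _ (Eventually.of_forall D.ha0)) D.sh_a

lemma sh_ev1 (P : (FractionRing K[X])[X]) : germShift K (D.ev1 P) = D.ev1 (D.T1 P) :=
  sh_eval₂ D.τ (germShift K) D.ev0 D.sh_ev0 _ _ (by rw [D.sh_a]; simp) P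

lemma T1_injective : Function.Injective D.T1 :=
  extEnd_injective _ _ (by rw [natDegree_C_mul_X _ D.u_ne_zero]; exact one_ne_zero)

section
variable (F₁ : Type*) [Field F₁] [Algebra (FractionRing K[X])[X] F₁]
  [IsFractionRing (FractionRing K[X])[X] F₁]

/-- The endomorphism of `F₁ = K(w)(a)`. -/
def τ1 : F₁ →+* F₁ := fracEnd F₁ D.T1 D.T1_injective

lemma τ1_algebraMap (P : (FractionRing K[X])[X]) :
    D.τ1 F₁ (algebraMap _ F₁ P) = algebraMap _ _ (D.T1 P) :=
  fracEnd_algebraMap _ _ _ _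

/-- The element `γ aⁿ` of `F₁ = K(w)(a)`. -/
def g1 : F₁ := algebraMap _ _ (C D.γ0 * X ^ D.n)
end

lemma sh_s : germShift K (D.s : Germ (atTop : Filter ℕ) K) =
    (D.s : Germ (atTop : Filter ℕ) K) + D.ev1 (C D.γ0 * X ^ D.n) := by
  have : D.ev1 (C D.γ0 * X ^ D.n) =
      ((fun k => D.γ.eval (D.w k) * D.a k ^ D.n : ℕ → K) : Germ (atTop : Filter ℕ) K) := by
    simp only [ev1, coe_eval₂RingHom, eval₂_mul, eval₂_C, eval₂_X_pow, γ0, WSeq.ev0_algebraMap,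
      WSeq.evP_apply]
    rfl
  rw [this, germShift_coe, ← Germ.coe_add]
  congr 1
  funext k
  exact D.hs k

/-- No `γ ^ (p ^ e)` is a twisted coboundary. -/
def Generic (p : ℕ) : Prop :=
  ∀ (e : ℕ) (A : K[X]), A.comp D.t = D.c ^ (D.n * p ^ e) * (A + -(D.γ ^ p ^ e)) → False

lemma charP_frac (R : Type*) [CommRing R] [IsDomain R] (p : ℕ) [CharP R p] :
    CharP (FractionRing R) p :=
  charP_of_injective_ringHom (IsFractionRing.injective R (FractionRing R)) p

section
variable (F₁ : Type*) [Field F₁] [Algebra (FractionRing K[X])[X] F₁]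
  [IsFractionRing (FractionRing K[X])[X] F₁]

lemma charP_of_frac (R F : Type*) [CommRing R] [IsDomain R] [Field F] [Algebra R F]
    [IsFractionRing R F] (p : ℕ) [CharP R p] : CharP F p :=
  charP_of_injective_ringHom (IsFractionRing.injective R F) p

lemma no_invariant_one (p : ℕ) [Fact p.Prime] [CharP K p] (hgen : D.Generic p)
    (Φ : F₁[X]) (hΦ : extEnd (D.τ1 F₁) (X + C (D.g1 F₁)) Φ = Φ) :
    Φ.natDegree = 0 := by
  have := charP_frac K[X] p
  have := charP_of_frac (FractionRing K[X])[X] F₁ p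
  refine no_invariant_S p D.τ D.u D.u_ne_zero D.no_semi_invariant (D.τ1 F₁) (D.τ1_algebraMap F₁)
    D.n D.hn D.γ0 ?_ Φ hΦ
  intro e β hβ
  rw [γ0, ← map_pow] at hβ
  obtain ⟨A, hA, _⟩ := D.exists_poly _ β _ hβ
  exact hgen e A hA

lemma ev2_injective (p : ℕ) [Fact p.Prime] [CharP K p] (hgen : D.Generic p) :
    Function.Injective D.ev2 := by
  by_contra hni
  obtain ⟨Φ, h1, h2⟩ := invariant_of_not_injective D.T1 (germShift K) D.ev1 D.ev1_injective
    D.sh_ev1 (algebraMap _ (FractionRing (FractionRing K[X])[X]))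
    (IsFractionRing.injective _ _) (D.τ1 _) (D.τ1_algebraMap _) _ _ D.sh_s hni
  exact h2 (D.no_invariant_one _ p hgen Φ h1)

lemma sh_ev2 (P : (FractionRing K[X])[X][X]) : germShift K (D.ev2 P) = D.ev2 (D.T2 P) :=
  sh_eval₂ D.T1 (germShift K) D.ev1 D.sh_ev1 _ _ (by
    rw [D.sh_s, eval₂_add, eval₂_X, eval₂_C]) P

variable (F₂ : Type*) [Field F₂] [Algebra F₁[X] F₂] [IsFractionRing F₁[X] F₂]

/-- The endomorphism of `F₂ = K(w)(a)(s)`. -/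
def τ2 : F₂ →+* F₂ :=
  fracEnd F₂ (extEnd (D.τ1 F₁) (X + C (D.g1 F₁))) (extEnd_injective _ _ (by
    rw [natDegree_X_add_C]; exact one_ne_zero))

lemma τ2_algebraMap (P : F₁[X]) :
    D.τ2 F₁ F₂ (algebraMap _ F₂ P) =
      algebraMap _ _ (extEnd (D.τ1 F₁) (X + C (D.g1 F₁)) P) :=
  fracEnd_algebraMap _ _ _ _

variable (K) in
/-- The embedding of `K(w)[a][s]` into its field of fractions `F₂ = K(w)(a)(s)`. -/
def j2 : (FractionRing K[X])[X][X] →+* F₂ :=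
  (algebraMap F₁[X] F₂).comp (mapRingHom (algebraMap (FractionRing K[X])[X] F₁))

lemma j2_apply (P : (FractionRing K[X])[X][X]) :
    j2 K F₁ F₂ P = algebraMap F₁[X] F₂ (P.map (algebraMap (FractionRing K[X])[X] F₁)) := rfl

lemma j2_injective : Function.Injective (j2 K F₁ F₂) := by
  intro P Q h
  rw [j2_apply, j2_apply] at h
  exact map_injective _ (IsFractionRing.injective (FractionRing K[X])[X] F₁)
    (IsFractionRing.injective F₁[X] F₂ h)

lemma τ2_j2 (P : (FractionRing K[X])[X][X]) :
    D.τ2 F₁ F₂ (j2 K F₁ F₂ P) = j2 K F₁ F₂ (D.T2 P) := by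
  rw [j2, RingHom.comp_apply, RingHom.comp_apply, τ2_algebraMap]
  congr 1
  have : (extEnd (D.τ1 F₁) (X + C (D.g1 F₁))).comp
      (mapRingHom (algebraMap (FractionRing K[X])[X] F₁)) =
      (mapRingHom (algebraMap (FractionRing K[X])[X] F₁)).comp D.T2 := by
    apply Polynomial.ringHom_ext
    · intro a; simp [T2, τ1_algebraMap]
    · simp [T2, g1]
  exact congrArg (fun f => f P) this

lemma j2_mul : j2 K F₁ F₂ (C (C D.γ0 * X ^ D.n) * X) = algebraMap F₁[X] F₂ (C (D.g1 F₁) * X) := by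
  rw [j2_apply, Polynomial.map_mul, map_C, map_X, g1]

lemma j2_sq : j2 K F₁ F₂ (C ((C D.γ0 * X ^ D.n) ^ 2)) = algebraMap F₁[X] F₂ (C (D.g1 F₁ ^ 2)) := by
  rw [j2_apply, map_C, map_pow, g1]

end

variable (K) in
/-- The ring `K(w)[a][s]`. -/
def R2 : Type _ := (FractionRing K[X])[X][X]

instance : CommRing (R2 K) := inferInstanceAs (CommRing (FractionRing K[X])[X][X])

instance : IsDomain (R2 K) := inferInstanceAs (IsDomain (FractionRing K[X])[X][X])

variable (K) in
/-- The identity map from `K(w)[a][s]` to `R2`. -/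
def toR2 : (FractionRing K[X])[X][X] ≃+* R2 K := RingEquiv.refl _

/-- Evaluation of elements of `K(w)[a][s]` along the sequences. -/
def evR2 : R2 K →+* Germ (atTop : Filter ℕ) K := D.ev2.comp (toR2 K).symm.toRingHom

lemma evR2_toR2 (P : (FractionRing K[X])[X][X]) : D.evR2 (toR2 K P) = D.ev2 P := rfl

lemma evR2_injective (p : ℕ) [Fact p.Prime] [CharP K p] (hgen : D.Generic p) :
    Function.Injective D.evR2 :=
  (D.ev2_injective p hgen).comp (toR2 K).symm.injective

/-- The endomorphism of `K(w)[a][s]`. -/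
def TR2 : R2 K →+* R2 K := ((toR2 K).toRingHom.comp D.T2).comp (toR2 K).symm.toRingHom

lemma sh_evR2 (P : R2 K) : germShift K (D.evR2 P) = D.evR2 (D.TR2 P) := D.sh_ev2 _

section
variable (F₁ : Type*) [Field F₁] [Algebra (FractionRing K[X])[X] F₁]
  [IsFractionRing (FractionRing K[X])[X] F₁]
variable (F₂ : Type*) [Field F₂] [Algebra F₁[X] F₂] [IsFractionRing F₁[X] F₂]

variable (K) in
/-- The embedding of `K(w)[a][s]` into its field of fractions `F₂ = K(w)(a)(s)`. -/
def jR2 : R2 K →+* F₂ := (j2 K F₁ F₂).comp (toR2 K).symm.toRingHom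

lemma jR2_toR2 (P : (FractionRing K[X])[X][X]) : jR2 K F₁ F₂ (toR2 K P) = j2 K F₁ F₂ P := rfl

lemma jR2_injective : Function.Injective (jR2 K F₁ F₂) :=
  (j2_injective F₁ F₂).comp (toR2 K).symm.injective

lemma τ2_jR2 (P : R2 K) : D.τ2 F₁ F₂ (jR2 K F₁ F₂ P) = jR2 K F₁ F₂ (D.TR2 P) := D.τ2_j2 F₁ F₂ _

lemma ev2_mul : D.ev2 (C (C D.γ0 * X ^ D.n) * X) = ((fun k => D.γ.eval (D.w k) * D.a k ^ D.n *
    D.s k : ℕ → K) : Germ (atTop : Filter ℕ) K) := by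
  simp only [ev2, ev1, coe_eval₂RingHom, eval₂_mul, eval₂_C, eval₂_X_pow, eval₂_X, γ0,
    WSeq.ev0_algebraMap, WSeq.evP_apply]
  rfl

lemma ev2_sq : D.ev2 (C ((C D.γ0 * X ^ D.n) ^ 2)) =
    ((fun k => (D.γ.eval (D.w k) * D.a k ^ D.n) ^ 2 : ℕ → K) : Germ (atTop : Filter ℕ) K) := by
  simp only [ev2, ev1, coe_eval₂RingHom, eval₂_mul, eval₂_C, eval₂_pow, eval₂_X, γ0,
    WSeq.ev0_algebraMap, WSeq.evP_apply]
  rfl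

include F₁ F₂ in
lemma ev3_injective_two_aux [CharP K 2] (hgen : D.Generic 2) (v : ℕ → K)
    (hv : ∀ k, v (k + 1) = v k + D.γ.eval (D.w k) * D.a k ^ D.n * D.s k) :
    Function.Injective (eval₂RingHom D.evR2 (v : Germ (atTop : Filter ℕ) K)) := by
  have : Fact (Nat.Prime 2) := ⟨Nat.prime_two⟩
  have := charP_frac K[X] 2
  have := charP_of_frac (FractionRing K[X])[X] F₁ 2
  have := charP_of_frac F₁[X] F₂ 2
  by_contra hni
  have hsh : germShift K (v : Germ (atTop : Filter ℕ) K) =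
      v + D.evR2 (toR2 K (C (C D.γ0 * X ^ D.n) * X)) := by
    rw [evR2_toR2, ev2_mul, germShift_coe, ← Germ.coe_add]
    congr 1
    funext k
    exact hv k
  obtain ⟨Φ, h1, h2⟩ := invariant_of_not_injective D.TR2 (germShift K) D.evR2
    (D.evR2_injective 2 hgen) D.sh_evR2 (jR2 K F₁ F₂) (jR2_injective F₁ F₂) (D.τ2 F₁ F₂)
    (D.τ2_jR2 F₁ F₂) _ _ hsh hni
  rw [jR2_toR2, j2_mul] at h1
  exact h2 (no_invariant_V_two (D.τ1 F₁) (D.g1 F₁) (D.no_invariant_one F₁ 2 hgen) (D.τ2 F₁ F₂)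
    (D.τ2_algebraMap F₁ F₂) Φ h1)

include F₁ F₂ in
lemma ev3_injective_odd_aux (p : ℕ) [Fact p.Prime] [CharP K p] (hp2 : p ≠ 2) (hgen : D.Generic p)
    (v : ℕ → K) (hv : ∀ k, v (k + 1) = v k + (D.γ.eval (D.w k) * D.a k ^ D.n) ^ 2) :
    Function.Injective (eval₂RingHom D.evR2 (v : Germ (atTop : Filter ℕ) K)) ∨
    ∃ (e : ℕ) (A : K[X]),
      A.comp D.t = D.c ^ (D.n * (2 * p ^ e)) * (A + -(D.γ ^ (2 * p ^ e))) := by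
  have := charP_frac K[X] p
  have := charP_of_frac (FractionRing K[X])[X] F₁ p
  have := charP_of_frac F₁[X] F₂ p
  by_cases hni : Function.Injective (eval₂RingHom D.evR2 (v : Germ (atTop : Filter ℕ) K))
  · exact Or.inl hni
  right
  have hsh : germShift K (v : Germ (atTop : Filter ℕ) K) =
      v + D.evR2 (toR2 K (C ((C D.γ0 * X ^ D.n) ^ 2))) := by
    rw [evR2_toR2, ev2_sq, germShift_coe, ← Germ.coe_add]
    congr 1
    funext k
    exact hv k
  obtain ⟨Φ, h1, h2⟩ := invariant_of_not_injective D.TR2 (germShift K) D.evR2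
    (D.evR2_injective p hgen) D.sh_evR2 (jR2 K F₁ F₂) (jR2_injective F₁ F₂) (D.τ2 F₁ F₂)
    (D.τ2_jR2 F₁ F₂) _ _ hsh hni
  rw [jR2_toR2, j2_sq] at h1
  obtain ⟨e, β, hβ⟩ := invariant_V_odd p hp2 D.τ D.u D.u_ne_zero D.no_semi_invariant (D.τ1 F₁)
    (D.τ1_algebraMap F₁) D.n D.hn D.γ0 (D.g1 F₁) rfl (D.no_invariant_one F₁ p hgen) (D.τ2 F₁ F₂)
    (D.τ2_algebraMap F₁ F₂) Φ h1 h2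
  rw [γ0, ← map_pow] at hβ
  obtain ⟨A, hA, _⟩ := D.exists_poly _ β _ hβ
  exact ⟨e, A, hA⟩

end

/-- Algebraic independence of the germs in characteristic two, for `v (k+1) = v k + s k S k`. -/
lemma ev3_injective_two [CharP K 2] (hgen : D.Generic 2) (v : ℕ → K)
    (hv : ∀ k, v (k + 1) = v k + D.γ.eval (D.w k) * D.a k ^ D.n * D.s k) :
    Function.Injective (eval₂RingHom D.evR2 (v : Germ (atTop : Filter ℕ) K)) :=
  D.ev3_injective_two_aux (FractionRing (FractionRing K[X])[X])
    (FractionRing (FractionRing (FractionRing K[X])[X])[X]) hgen v hv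

/-- In odd characteristic, for `v (k+1) = v k + S k ^ 2`: algebraic independence of the germs, or
some `γ ^ (2 p ^ e)` is a twisted coboundary. -/
lemma ev3_injective_odd (p : ℕ) [Fact p.Prime] [CharP K p] (hp2 : p ≠ 2) (hgen : D.Generic p)
    (v : ℕ → K) (hv : ∀ k, v (k + 1) = v k + (D.γ.eval (D.w k) * D.a k ^ D.n) ^ 2) :
    Function.Injective (eval₂RingHom D.evR2 (v : Germ (atTop : Filter ℕ) K)) ∨
    ∃ (e : ℕ) (A : K[X]),
      A.comp D.t = D.c ^ (D.n * (2 * p ^ e)) * (A + -(D.γ ^ (2 * p ^ e))) :=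
  D.ev3_injective_odd_aux (FractionRing (FractionRing K[X])[X])
    (FractionRing (FractionRing (FractionRing K[X])[X])[X]) p hp2 hgen v hv

/-- A ring of polynomials in `m + 1` variables as a ring of polynomials in one variable over
another ring `S`, given a map from the ring of polynomials in the last `m` variables to `S`. -/
def iterSucc {R S : Type*} [CommRing R] [CommRing S] {m : ℕ} (f : MvPolynomial (Fin m) R →+* S) :
    MvPolynomial (Fin (m + 1)) R →+* S[X] :=
  (mapRingHom f).comp (MvPolynomial.finSuccEquiv R m).toRingEquiv.toRingHom

section
variable {R S : Type*} [CommRing R] [CommRing S] {m : ℕ} (f : MvPolynomial (Fin m) R →+* S)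

lemma iterSucc_apply (P : MvPolynomial (Fin (m + 1)) R) :
    iterSucc f P = (MvPolynomial.finSuccEquiv R m P).map f := rfl

lemma iterSucc_injective (hf : Function.Injective f) : Function.Injective (iterSucc f) := by
  intro P Q h
  rw [iterSucc_apply, iterSucc_apply] at h
  exact (MvPolynomial.finSuccEquiv R m).injective (map_injective f hf h)

lemma iterSucc_C (x : R) : iterSucc f (MvPolynomial.C x) = C (f (MvPolynomial.C x)) := by
  have h : MvPolynomial.finSuccEquiv R m (MvPolynomial.C x) = C (MvPolynomial.C x) :=
    (MvPolynomial.finSuccEquiv R m).eq_symm_apply.mp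
      (congrArg (fun g => g x) (MvPolynomial.finSuccEquiv_comp_C_eq_C (R := R) m)).symm
  rw [iterSucc_apply, h, map_C]

lemma iterSucc_X_zero : iterSucc f (MvPolynomial.X 0) = X := by
  rw [iterSucc_apply, MvPolynomial.finSuccEquiv_X_zero, map_X]

lemma iterSucc_X_succ (j : Fin m) :
    iterSucc f (MvPolynomial.X j.succ) = C (f (MvPolynomial.X j)) := by
  rw [iterSucc_apply, MvPolynomial.finSuccEquiv_X_succ, map_C]
end

variable (K) in
/-- The embedding of `K[w]` into `K(w)`. -/
def iter0 : MvPolynomial (Fin 0) K[X] →+* FractionRing K[X] :=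
  (algebraMap K[X] (FractionRing K[X])).comp
    (MvPolynomial.isEmptyRingEquiv K[X] (Fin 0)).toRingHom

lemma iter0_injective : Function.Injective (iter0 K) := by
  intro P Q h
  exact (MvPolynomial.isEmptyRingEquiv K[X] (Fin 0)).injective
    (IsFractionRing.injective K[X] (FractionRing K[X]) h)

lemma iter0_C (x : K[X]) : iter0 K (MvPolynomial.C x) = algebraMap K[X] (FractionRing K[X]) x := by
  rw [iter0, RingHom.comp_apply]
  congr 1
  exact MvPolynomial.isEmptyRingEquiv_symm_apply K[X] (Fin 0) x ▸
    (MvPolynomial.isEmptyRingEquiv K[X] (Fin 0)).apply_symm_apply x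

variable (K) in
/-- The embedding of `K[w][a]` into `K(w)[a]`. -/
abbrev iter1 : MvPolynomial (Fin 1) K[X] →+* (FractionRing K[X])[X] := iterSucc (iter0 K)

variable (K) in
/-- The embedding of `K[w][s, a]` into `K(w)[a][s]`. -/
abbrev iter2 : MvPolynomial (Fin 2) K[X] →+* (FractionRing K[X])[X][X] := iterSucc (iter1 K)

variable (K) in
/-- The embedding of `K[w][s, a]` into `K(w)[a][s]`. -/
def iterR2 : MvPolynomial (Fin 2) K[X] →+* R2 K := (toR2 K).toRingHom.comp (iter2 K)

variable (K) in
/-- The embedding of `K[w][v, s, a]` into `K(w)[a][s][v]`. -/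
def iter3 : MvPolynomial (Fin 3) K[X] →+* (R2 K)[X] := iterSucc (iterR2 K)

lemma iter2_injective : Function.Injective (iter2 K) :=
  iterSucc_injective _ (iterSucc_injective _ iter0_injective)

lemma iter3_injective : Function.Injective (iter3 K) :=
  iterSucc_injective _ ((toR2 K).injective.comp iter2_injective)

lemma iter2_C (x : K[X]) :
    iter2 K (MvPolynomial.C x) = C (C (algebraMap K[X] (FractionRing K[X]) x)) := by
  rw [iter2, iterSucc_C, iter1, iterSucc_C, iter0_C]

lemma iter2_X0 : iter2 K (MvPolynomial.X 0) = X := iterSucc_X_zero _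

lemma iter2_X1 : iter2 K (MvPolynomial.X 1) = C X :=
  (iterSucc_X_succ _ 0).trans (congrArg C (iterSucc_X_zero _))

lemma iter3_C (x : K[X]) : iter3 K (MvPolynomial.C x) =
    C (toR2 K (C (C (algebraMap K[X] (FractionRing K[X]) x)))) :=
  (iterSucc_C _ x).trans (congrArg (fun y => C (toR2 K y)) (iter2_C x))

lemma iter3_X0 : iter3 K (MvPolynomial.X 0) = X := iterSucc_X_zero _

lemma iter3_X1 : iter3 K (MvPolynomial.X 1) = C (toR2 K X) :=
  (iterSucc_X_succ _ 0).trans (congrArg (fun y => C (toR2 K y)) iter2_X0)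

lemma iter3_X2 : iter3 K (MvPolynomial.X 2) = C (toR2 K (C X)) :=
  (iterSucc_X_succ _ 1).trans (congrArg (fun y => C (toR2 K y)) iter2_X1)

lemma frequently_of_germ (f : ℕ → K) (h : (f : Germ (atTop : Filter ℕ) K) ≠ 0) :
    ∃ᶠ k in atTop, f k ≠ 0 := by
  intro h2
  apply h
  refine Germ.coe_eq.mpr ?_
  filter_upwards [h2] with k hk
  simpa using hk

/-- Evaluation of polynomials in `K[w][σ]` along sequences. -/
def evSeq (w : ℕ → K) {σ : Type*} (y : ℕ → σ → K) (k : ℕ) : MvPolynomial σ K[X] →+* K :=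
  MvPolynomial.eval₂Hom (evalRingHom (w k)) (y k)

/-- Density of the points `(w k, s k, a k)`. -/
lemma dense_two (p : ℕ) [Fact p.Prime] [CharP K p] (hgen : D.Generic p)
    (P : MvPolynomial (Fin 2) K[X]) (hP : P ≠ 0) :
    ∃ᶠ k in atTop, evSeq D.w (fun k => ![D.s k, D.a k]) k P ≠ 0 := by
  apply frequently_of_germ
  have h1 : D.ev2 (iter2 K P) ≠ 0 := by
    rw [Ne, map_eq_zero_iff _ (D.ev2_injective p hgen), map_eq_zero_iff _ iter2_injective]
    exact hP
  have h2 : D.ev2.comp (iter2 K) = (Germ.coeRingHom (atTop : Filter ℕ)).comp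
      (RingHom.pi (fun k => evSeq D.w (fun k => ![D.s k, D.a k]) k)) := by
    apply MvPolynomial.ringHom_ext
    · intro r
      rw [RingHom.comp_apply, iter2_C]
      simp only [ev2, ev1, coe_eval₂RingHom, eval₂_C, WSeq.ev0_algebraMap, WSeq.evP_apply]
      refine congrArg Germ.ofFun (funext fun k => ?_)
      simp [evSeq]
    · intro i
      fin_cases i
      · simp only [RingHom.comp_apply, Fin.zero_eta, iter2_X0, ev2, coe_eval₂RingHom, eval₂_X]
        refine congrArg Germ.ofFun (funext fun k => ?_)
        simp [evSeq]
      · simp only [RingHom.comp_apply, Fin.mk_one, iter2_X1, ev2, ev1, coe_eval₂RingHom, eval₂_X,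
          eval₂_C]
        refine congrArg Germ.ofFun (funext fun k => ?_)
        simp [evSeq]
  rw [← RingHom.comp_apply, h2] at h1
  exact h1

/-- Density of the points `(w k, v k, s k, a k)`. -/
lemma dense_three (v : ℕ → K)
    (hinj : Function.Injective (eval₂RingHom D.evR2 (v : Germ (atTop : Filter ℕ) K)))
    (P : MvPolynomial (Fin 3) K[X]) (hP : P ≠ 0) :
    ∃ᶠ k in atTop, evSeq D.w (fun k => ![v k, D.s k, D.a k]) k P ≠ 0 := by
  apply frequently_of_germ
  have h1 : eval₂RingHom D.evR2 (v : Germ (atTop : Filter ℕ) K) (iter3 K P) ≠ 0 := by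
    rw [Ne, map_eq_zero_iff _ hinj, map_eq_zero_iff _ iter3_injective]
    exact hP
  have h2 : (eval₂RingHom D.evR2 (v : Germ (atTop : Filter ℕ) K)).comp (iter3 K) =
      (Germ.coeRingHom (atTop : Filter ℕ)).comp
      (RingHom.pi (fun k => evSeq D.w (fun k => ![v k, D.s k, D.a k]) k)) := by
    apply MvPolynomial.ringHom_ext
    · intro r
      rw [RingHom.comp_apply, iter3_C]
      simp only [coe_eval₂RingHom, eval₂_C, evR2_toR2, ev2, ev1, WSeq.ev0_algebraMap, WSeq.evP_apply]
      refine congrArg Germ.ofFun (funext fun k => ?_)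
      simp [evSeq]
    · intro i
      fin_cases i
      · simp only [RingHom.comp_apply, Fin.zero_eta, iter3_X0, coe_eval₂RingHom, eval₂_X]
        refine congrArg Germ.ofFun (funext fun k => ?_)
        simp [evSeq]
      · simp only [RingHom.comp_apply, Fin.mk_one, iter3_X1, evR2_toR2, ev2, coe_eval₂RingHom, eval₂_X,
          eval₂_C]
        refine congrArg Germ.ofFun (funext fun k => ?_)
        simp [evSeq]
      · simp only [RingHom.comp_apply, Fin.reduceFinMk, iter3_X2, evR2_toR2, ev2, ev1, coe_eval₂RingHom,
          eval₂_X, eval₂_C]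
        refine congrArg Germ.ofFun (funext fun k => ?_)
        simp [evSeq]
  rw [← RingHom.comp_apply, h2] at h1
  exact h1

end ASSeq
end Density

/-! ### Auxiliary polynomials and the zero estimate -/

section Mahler
open Filter Polynomial ASSeq

/-- Valuation-theoretic data on a field: `B N` is the group of elements of valuation at least `N`,
and `A` is a ring of integers with field of fractions `K` in which only `0` has positive
valuation. -/
structure ValData (K : Type*) [Field K] where
  B : ℤ → AddSubgroup K
  mono : ∀ {N M : ℤ}, N ≤ M → B M ≤ B N
  mul : ∀ {N M : ℤ} {x y : K}, x ∈ B N → y ∈ B M → x * y ∈ B (N + M)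
  one : (1 : K) ∈ B 0
  exh : ∀ x, ∃ N, x ∈ B N
  A : Subring K
  int : ∀ x ∈ A, x ∈ B 1 → x = 0
  den : ∀ x, ∃ b ∈ A, b ≠ 0 ∧ b * x ∈ A

namespace ValData
variable {K : Type*} [Field K] (V : ValData K)

lemma B_pow_mem {N : ℤ} {x : K} (hx : x ∈ V.B N) (m : ℕ) : x ^ m ∈ V.B (m * N) := by
  induction m with
  | zero => simpa using V.one
  | succ m ih =>
    rw [pow_succ]
    have := V.mul ih hx
    rwa [show (m : ℤ) * N + N = ((m + 1 : ℕ) : ℤ) * N by push_cast; ring] at this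

/-- Sequences of bounded valuation. -/
def Bdd (z : ℕ → K) : Prop := ∃ c : ℤ, ∀ k, z k ∈ V.B c

lemma bdd_add {z z' : ℕ → K} (h : V.Bdd z) (h' : V.Bdd z') : V.Bdd (fun k => z k + z' k) := by
  obtain ⟨c, hc⟩ := h
  obtain ⟨c', hc'⟩ := h'
  exact ⟨min c c', fun k => add_mem (V.mono (min_le_left _ _) (hc k))
    (V.mono (min_le_right _ _) (hc' k))⟩

lemma bdd_mul {z z' : ℕ → K} (h : V.Bdd z) (h' : V.Bdd z') : V.Bdd (fun k => z k * z' k) := by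
  obtain ⟨c, hc⟩ := h
  obtain ⟨c', hc'⟩ := h'
  exact ⟨c + c', fun k => V.mul (hc k) (hc' k)⟩

lemma bdd_const (x : K) : V.Bdd (fun _ => x) := by
  obtain ⟨c, hc⟩ := V.exh x
  exact ⟨c, fun _ => hc⟩

lemma bdd_eval (w : ℕ → K) (hw : V.Bdd w) (P : K[X]) : V.Bdd (fun k => P.eval (w k)) := by
  induction P using Polynomial.induction_on with
  | C a => simpa using V.bdd_const a
  | add p q hp hq => simpa using V.bdd_add hp hq
  | monomial m a ih =>
    have := V.bdd_mul ih hw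
    simpa [pow_succ, mul_assoc] using this

lemma bdd_evSeq {σ : Type*} (w : ℕ → K) (hw : V.Bdd w) (y : ℕ → σ → K)
    (hy : ∀ i, V.Bdd (fun k => y k i)) (P : MvPolynomial σ K[X]) :
    V.Bdd (fun k => evSeq w y k P) := by
  induction P using MvPolynomial.induction_on with
  | C a => simpa [evSeq] using V.bdd_eval w hw a
  | add p q hp hq => simpa using V.bdd_add hp hq
  | mul_X p i ih =>
    have := V.bdd_mul ih (hy i)
    simpa [evSeq] using this

/-- Sequences whose denominators are bounded by a constant times `den ^ t`. -/
def Good (den : ℕ → K) (t : ℕ) (z : ℕ → K) : Prop :=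
  ∃ h ∈ V.A, h ≠ 0 ∧ ∀ k, h * den k ^ t * z k ∈ V.A

variable {den : ℕ → K} (hden : ∀ k, den k ∈ V.A)

include hden in
lemma good_mono {t t' : ℕ} (htt : t ≤ t') {z : ℕ → K} (h : V.Good den t z) : V.Good den t' z := by
  obtain ⟨b, hb, hb0, hbk⟩ := h
  refine ⟨b, hb, hb0, fun k => ?_⟩
  rw [show b * den k ^ t' * z k = den k ^ (t' - t) * (b * den k ^ t * z k) by
    rw [← Nat.sub_add_cancel htt, pow_add]; simp; ring]
  exact mul_mem (pow_mem (hden k) _) (hbk k)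

lemma good_zero (t : ℕ) : V.Good den t (fun _ => 0) :=
  ⟨1, one_mem _, one_ne_zero, fun k => by simp⟩

lemma good_const (x : K) : V.Good den 0 (fun _ => x) := by
  obtain ⟨b, hb, hb0, hbx⟩ := V.den x
  exact ⟨b, hb, hb0, fun k => by simpa using hbx⟩

lemma good_add {t : ℕ} {z z' : ℕ → K} (h : V.Good den t z) (h' : V.Good den t z') :
    V.Good den t (fun k => z k + z' k) := by
  obtain ⟨b, hb, hb0, hbk⟩ := h
  obtain ⟨b', hb', hb0', hbk'⟩ := h'
  refine ⟨b * b', mul_mem hb hb', mul_ne_zero hb0 hb0', fun k => ?_⟩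
  rw [show b * b' * den k ^ t * (z k + z' k) =
    b' * (b * den k ^ t * z k) + b * (b' * den k ^ t * z' k) by ring]
  exact add_mem (mul_mem hb' (hbk k)) (mul_mem hb (hbk' k))

lemma good_mul {t t' : ℕ} {z z' : ℕ → K} (h : V.Good den t z) (h' : V.Good den t' z') :
    V.Good den (t + t') (fun k => z k * z' k) := by
  obtain ⟨b, hb, hb0, hbk⟩ := h
  obtain ⟨b', hb', hb0', hbk'⟩ := h'
  refine ⟨b * b', mul_mem hb hb', mul_ne_zero hb0 hb0', fun k => ?_⟩
  rw [show b * b' * den k ^ (t + t') * (z k * z' k) =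
    (b * den k ^ t * z k) * (b' * den k ^ t' * z' k) by rw [pow_add]; ring]
  exact mul_mem (hbk k) (hbk' k)

lemma good_sum {ι : Type*} (s : Finset ι) {t : ℕ} {z : ι → ℕ → K}
    (h : ∀ i ∈ s, V.Good den t (z i)) : V.Good den t (fun k => ∑ i ∈ s, z i k) := by
  classical
  induction s using Finset.induction_on with
  | empty => simpa using V.good_zero t
  | insert a s ha ih =>
    simp only [Finset.sum_insert ha]
    exact V.good_add (h a (Finset.mem_insert_self _ _))
      (ih fun i hi => h i (Finset.mem_insert_of_mem hi))

lemma good_pow {t : ℕ} {z : ℕ → K} (h : V.Good den t z) (m : ℕ) :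
    V.Good den (m * t) (fun k => z k ^ m) := by
  induction m with
  | zero => simpa using V.good_const (den := den) 1
  | succ m ih =>
    simp only [pow_succ, Nat.succ_mul]
    exact V.good_mul ih h

lemma good_prod {ι : Type*} (s : Finset ι) {t : ι → ℕ} {z : ι → ℕ → K}
    (h : ∀ i ∈ s, V.Good den (t i) (z i)) :
    V.Good den (∑ i ∈ s, t i) (fun k => ∏ i ∈ s, z i k) := by
  classical
  induction s using Finset.induction_on with
  | empty => simpa using V.good_const (den := den) 1
  | insert a s ha ih =>
    simp only [Finset.sum_insert ha, Finset.prod_insert ha]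
    exact V.good_mul (h a (Finset.mem_insert_self _ _))
      (ih fun i hi => h i (Finset.mem_insert_of_mem hi))

include hden in
/-- Denominators of the values of a polynomial of given degrees. -/
lemma good_evSeq {σ : Type*} [Fintype σ] (w : ℕ → K) (y : ℕ → σ → K) (hw : V.Good den 1 w)
    (hy : ∀ i, V.Good den 1 (fun k => y k i)) (δ d : ℕ) (P : MvPolynomial σ K[X])
    (hδ : ∀ e, (P.coeff e).natDegree ≤ δ) (hd : ∀ i, P.degreeOf i ≤ d) :
    V.Good den (δ + Fintype.card σ * d) (fun k => evSeq w y k P) := by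
  classical
  have h1 : ∀ k, evSeq w y k P = ∑ e ∈ P.support, (P.coeff e).eval (w k) * ∏ i, y k i ^ e i := by
    intro k
    rw [evSeq, MvPolynomial.coe_eval₂Hom, MvPolynomial.eval₂_eq']
    rfl
  simp only [h1]
  refine V.good_sum _ fun e he => V.good_mul ?_ ?_
  · simp only [eval_eq_sum_range]
    refine V.good_sum _ fun b hb => V.good_mono hden (t := 0 + b * 1) ?_
      (V.good_mul (V.good_const _) (V.good_pow hw b))
    have := hδ e
    rw [Finset.mem_range] at hb
    omega
  · refine V.good_mono hden (t := ∑ i, e i * 1) ?_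
      (V.good_prod _ fun i _ => V.good_pow (hy i) (e i))
    calc ∑ i, e i * 1 ≤ ∑ _i : σ, d := Finset.sum_le_sum fun i _ => by
          rw [mul_one]; exact (MvPolynomial.degreeOf_le_iff.mp (hd i)) e he
      _ = Fintype.card σ * d := by simp

end ValData

/-- A common root of a relation `∑ P j * L ^ j ≡ 0` modulo a prime power: after division by `L`,
the first nonzero `P j` is congruent to a multiple of `L`. -/
lemma exists_first {R : Type*} [CommRing R] [IsDomain R] (π L : R) (hπ : Prime π) (hL : ¬ π ∣ L)
    (M J : ℕ) (P : ℕ → R) (hP : ∃ j < J, P j ≠ 0)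
    (hdvd : π ^ M ∣ ∑ j ∈ Finset.range J, P j * L ^ j) :
    ∃ j < J, P j ≠ 0 ∧ ∃ E, π ^ M ∣ P j + L * E := by
  induction J generalizing P with
  | zero => obtain ⟨j, hj, _⟩ := hP; omega
  | succ J ih =>
    rw [Finset.sum_range_succ'] at hdvd
    have e : ∑ j ∈ Finset.range J, P (j + 1) * L ^ (j + 1) =
        L * ∑ j ∈ Finset.range J, P (j + 1) * L ^ j := by
      rw [Finset.mul_sum]
      exact Finset.sum_congr rfl fun j _ => by ring
    rw [e, pow_zero, mul_one] at hdvd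
    by_cases h0 : P 0 = 0
    · rw [h0, add_zero] at hdvd
      have h1 := hπ.pow_dvd_of_dvd_mul_left M hL hdvd
      obtain ⟨j, hj, hPj⟩ := hP
      obtain ⟨j', rfl⟩ : ∃ j', j = j' + 1 := by
        refine ⟨j - 1, ?_⟩
        have : j ≠ 0 := by rintro rfl; exact hPj h0
        omega
      obtain ⟨i, hi, h2, h3⟩ := ih (fun j => P (j + 1)) ⟨j', by omega, hPj⟩ h1
      exact ⟨i + 1, by omega, h2, h3⟩
    · exact ⟨0, by omega, h0, _, by rwa [add_comm]⟩

section Siegel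
variable {K : Type*} [Field K] {σ : Type*} [Fintype σ] [DecidableEq σ]

/-- The exponent vector with entries `e`. -/
def expVec {N : ℕ} (e : σ → Fin N) : σ →₀ ℕ := Finsupp.equivFunOnFinite.symm (fun i => (e i : ℕ))

lemma expVec_injective {N : ℕ} : Function.Injective (expVec (σ := σ) (N := N)) := by
  intro e f h
  funext i
  have := congrArg (fun g : σ →₀ ℕ => g i) h
  exact Fin.ext this

/-- The polynomial with coefficient vector `x`. -/
def polyOf {δ D : ℕ} (x : Fin δ → (σ → Fin (D + 1)) → K) : MvPolynomial σ K[X] :=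
  ∑ e : σ → Fin (D + 1), MvPolynomial.monomial (expVec e) (∑ b : Fin δ, Polynomial.monomial (b : ℕ) (x b e))

lemma coeff_polyOf {δ D : ℕ} (x : Fin δ → (σ → Fin (D + 1)) → K) (b : Fin δ) (e : σ → Fin (D + 1)) :
    ((polyOf x).coeff (expVec e)).coeff b = x b e := by
  rw [polyOf, MvPolynomial.coeff_sum, Finset.sum_eq_single e]
  · rw [MvPolynomial.coeff_monomial, if_pos rfl, finsetSum_coeff, Finset.sum_eq_single b]
    · simp
    · intro b' _ hb
      rw [Polynomial.coeff_monomial, if_neg]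
      exact fun h => hb (Fin.ext h)
    · simp
  · intro f _ hf
    rw [MvPolynomial.coeff_monomial, if_neg]
    exact fun h => hf (expVec_injective h)
  · simp

lemma degreeOf_polyOf {δ D : ℕ} (x : Fin δ → (σ → Fin (D + 1)) → K) (i : σ) :
    (polyOf x).degreeOf i ≤ D := by
  refine (MvPolynomial.degreeOf_sum_le _ _ _).trans (Finset.sup_le fun e _ => ?_)
  refine MvPolynomial.degreeOf_le_iff.mpr fun m hm => ?_
  rw [MvPolynomial.mem_support_iff, MvPolynomial.coeff_monomial] at hm
  split_ifs at hm with h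
  · rw [← h]
    exact Nat.lt_succ_iff.mp (e i).2
  · exact absurd rfl hm

lemma natDegree_polyOf {δ D : ℕ} (x : Fin δ → (σ → Fin (D + 1)) → K) (m : σ →₀ ℕ) :
    ((polyOf x).coeff m).natDegree ≤ δ := by
  rw [polyOf, MvPolynomial.coeff_sum]
  refine natDegree_sum_le_of_forall_le _ _ fun e _ => ?_
  rw [MvPolynomial.coeff_monomial]
  split_ifs
  · refine natDegree_sum_le_of_forall_le _ _ fun b _ => ?_
    exact (natDegree_monomial_le _).trans b.2.le
  · simp

lemma polyOf_add {δ D : ℕ} (x y : Fin δ → (σ → Fin (D + 1)) → K) :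
    polyOf (x + y) = polyOf x + polyOf y := by
  simp only [polyOf, Pi.add_apply, map_add, Finset.sum_add_distrib]

lemma polyOf_smul {δ D : ℕ} (c : K) (x : Fin δ → (σ → Fin (D + 1)) → K) :
    polyOf (c • x) = c • polyOf x := by
  simp only [polyOf, Pi.smul_apply, Finset.smul_sum]
  refine Finset.sum_congr rfl fun e _ => ?_
  rw [MvPolynomial.smul_monomial, Finset.smul_sum]
  simp only [Polynomial.smul_monomial]

/-- Linear algebra produces polynomials `P j` of bounded degrees such that `∑ P j * L ^ j` is
divisible by a high power of the variable of `K[X]`. -/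
lemma exists_aux (L : MvPolynomial σ K[X]) (J δ D M : ℕ) (hL : ∀ i, J * L.degreeOf i ≤ D)
    (hcount : M * (2 * D + 1) ^ Fintype.card σ < (J + 1) * (δ * (D + 1) ^ Fintype.card σ)) :
    ∃ P : ℕ → MvPolynomial σ K[X], (∃ j < J + 1, P j ≠ 0) ∧ (∀ j i, (P j).degreeOf i ≤ D) ∧
      (∀ j e, ((P j).coeff e).natDegree ≤ δ) ∧
      (MvPolynomial.C X) ^ M ∣ ∑ j ∈ Finset.range (J + 1), P j * L ^ j := by
  let E : (Fin (J + 1) → Fin δ → (σ → Fin (D + 1)) → K) → MvPolynomial σ K[X] :=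
    fun x => ∑ j, polyOf (x j) * L ^ (j : ℕ)
  let Φ : (Fin (J + 1) → Fin δ → (σ → Fin (D + 1)) → K) →ₗ[K]
      (Fin M × (σ → Fin (2 * D + 1)) → K) :=
    { toFun := fun x af => ((E x).coeff (expVec af.2)).coeff (af.1 : ℕ)
      map_add' := by
        intro x y
        funext af
        simp only [E, Pi.add_apply, polyOf_add, add_mul, Finset.sum_add_distrib,
          MvPolynomial.coeff_add, Polynomial.coeff_add]
      map_smul' := by
        intro c x
        funext af
        simp only [E, Pi.smul_apply, polyOf_smul, smul_mul_assoc, ← Finset.smul_sum,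
          MvPolynomial.coeff_smul, Polynomial.coeff_smul, RingHom.id_apply] }
  have hker : LinearMap.ker Φ ≠ ⊥ := by
    apply LinearMap.ker_ne_bot_of_finrank_lt
    simp only [Module.finrank_pi, Module.finrank_pi_fintype, Fintype.card_prod, Fintype.card_fin,
      Fintype.card_pi, Finset.prod_const, Finset.card_univ, Finset.sum_const, smul_eq_mul]
    exact hcount
  obtain ⟨x, hx, hx0⟩ := (Submodule.ne_bot_iff _).mp hker
  refine ⟨fun j => if h : j < J + 1 then polyOf (x ⟨j, h⟩) else 0, ?_, ?_, ?_, ?_⟩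
  · by_contra hcon
    push Not at hcon
    apply hx0
    funext j b e
    have := hcon j j.2
    rw [dif_pos j.2] at this
    rw [← coeff_polyOf (x j) b e]
    change polyOf (x j) = 0 at this
    rw [this]
    simp
  · intro j i
    dsimp only
    split_ifs
    · exact degreeOf_polyOf _ _
    · simp
  · intro j e
    dsimp only
    split_ifs
    · exact natDegree_polyOf _ _
    · simp
  · have hE : ∑ j ∈ Finset.range (J + 1),
        (if h : j < J + 1 then polyOf (x ⟨j, h⟩) else 0) * L ^ j = E x := by
      rw [Finset.sum_range]
      exact Finset.sum_congr rfl fun j _ => by rw [dif_pos j.2]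
    rw [hE, ← map_pow, MvPolynomial.C_dvd_iff_dvd_coeff]
    intro m
    rw [X_pow_dvd_iff]
    intro a ha
    by_cases hm : ∀ i, m i < 2 * D + 1
    · have := congrFun (LinearMap.mem_ker.mp hx) (⟨a, ha⟩, fun i => ⟨m i, hm i⟩)
      have e : expVec (fun i => (⟨m i, hm i⟩ : Fin (2 * D + 1))) = m := by ext i; rfl
      change ((E x).coeff (expVec (fun i => (⟨m i, hm i⟩ : Fin (2 * D + 1))))).coeff a = 0 at this
      rwa [e] at this
    · push Not at hm
      obtain ⟨i, hi⟩ := hm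
      have hdeg : (E x).degreeOf i ≤ 2 * D := by
        refine (MvPolynomial.degreeOf_sum_le _ _ _).trans (Finset.sup_le fun j _ => ?_)
        have h1 := MvPolynomial.degreeOf_mul_le i (polyOf (x j)) (L ^ (j : ℕ))
        have h2 := MvPolynomial.degreeOf_pow_le i L j
        have h3 := degreeOf_polyOf (x j) i
        have h4 : (j : ℕ) * L.degreeOf i ≤ J * L.degreeOf i :=
          Nat.mul_le_mul_right _ (Nat.lt_succ_iff.mp j.2)
        have h5 := hL i
        omega
      have : (E x).coeff m = 0 := by
        by_contra hne
        have := MvPolynomial.degreeOf_le_iff.mp hdeg m (MvPolynomial.mem_support_iff.mpr hne)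
        omega
      rw [this, Polynomial.coeff_zero]

end Siegel

/-- The zero estimate of Mahler's method: a Zariski dense sequence of points `(w k, y k)` with
controlled denominators does not allow polynomials `L` of bounded degree in `y`, nonzero at `w = 0`,
whose values are arbitrarily small compared with the size of the points. -/
theorem mahler_zero_estimate {K : Type*} [Field K] (V : ValData K) {σ : Type*} [Fintype σ] (w : ℕ → K)
    (y : ℕ → σ → K) (N : ℕ → ℕ) (hN : Tendsto N atTop atTop) (hwN : ∀ k, w k ∈ V.B (N k))
    (hy : ∀ i, V.Bdd (fun k => y k i)) (C : ℕ) (den : ℕ → K)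
    (hden : ∀ k, den k ∈ V.A) (hden0 : ∀ k, den k ≠ 0)
    (hdenB : ∀ k, den k ∈ V.B (-(C * (N k + 1) : ℕ)))
    (hdw : ∀ k, den k * w k ∈ V.A) (hdy : ∀ k i, den k * y k i ∈ V.A)
    (dense : ∀ P : MvPolynomial σ K[X], P ≠ 0 → ∃ᶠ k in atTop, evSeq w y k P ≠ 0)
    (DL : ℕ) (hL : ∀ G : ℕ, ∃ L : MvPolynomial σ K[X],
      MvPolynomial.map (constantCoeff (R := K)) L ≠ 0 ∧ (∀ i, L.degreeOf i ≤ DL) ∧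
      ∃ c : ℤ, ∀ k, evSeq w y k L ∈ V.B (G * N k - c)) : False := by
  classical
  set m := Fintype.card σ with hm
  set J := 2 ^ m * (C * (m + 1) + 1) with hJ
  set D := J * DL with hD
  set δ := D + 1 with hδ
  set M := C * (δ + m * D) + 1 with hM
  obtain ⟨L, hL0, hLd, c1, hLc⟩ := hL M
  obtain ⟨P, hP0, hPd, hPδ, hPdvd⟩ := exists_aux L J δ D M
    (fun i => Nat.mul_le_mul_left _ (hLd i)) (by
      rw [← hm]
      have h1 : (2 * D + 1) ^ m ≤ 2 ^ m * (D + 1) ^ m := by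
        rw [← mul_pow]; exact Nat.pow_le_pow_left (by omega) m
      have h2 : M ≤ (C * (m + 1) + 1) * (D + 1) := by
        rw [hM, hδ]; nlinarith [Nat.zero_le (C * m), Nat.zero_le D]
      calc M * (2 * D + 1) ^ m
          ≤ ((C * (m + 1) + 1) * (D + 1)) * (2 ^ m * (D + 1) ^ m) := Nat.mul_le_mul h2 h1
        _ = J * (δ * (D + 1) ^ m) := by rw [hJ, hδ]; ring
        _ < (J + 1) * (δ * (D + 1) ^ m) := by
            apply Nat.mul_lt_mul_of_pos_right (Nat.lt_succ_self J)
            positivity)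
  have hprime : Prime (MvPolynomial.C X : MvPolynomial σ K[X]) :=
    (MvPolynomial.prime_C_iff σ).mpr Polynomial.prime_X
  have hndvd : ¬ (MvPolynomial.C X : MvPolynomial σ K[X]) ∣ L := by
    rintro ⟨Q, rfl⟩
    apply hL0
    rw [map_mul, MvPolynomial.map_C]
    simp
  obtain ⟨j, -, hj0, E, Q, hQ⟩ := exists_first _ L hprime hndvd M (J + 1) P hP0 hPdvd
  have hw0 : V.Bdd w := ⟨0, fun k => V.mono (by positivity) (hwN k)⟩
  obtain ⟨cE, hcE⟩ := V.bdd_evSeq w hw0 y hy E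
  obtain ⟨cQ, hcQ⟩ := V.bdd_evSeq w hw0 y hy Q
  obtain ⟨b, hbA, hb0, hb⟩ := V.good_evSeq hden w y
    ⟨1, one_mem _, one_ne_zero, fun k => by simpa using hdw k⟩
    (fun i => ⟨1, one_mem _, one_ne_zero, fun k => by simpa using hdy k i⟩) δ D (P j) (hPδ j)
    (hPd j)
  obtain ⟨cb, hcb⟩ := V.exh b
  refine dense (P j) hj0 ?_
  -- an exponent valid for both contributions to the value of `P j`
  obtain ⟨c, hc⟩ : ∃ c : ℤ, ∀ k, evSeq w y k (P j) ∈ V.B (M * N k - c) := by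
    refine ⟨max (-cQ) (c1 - cE), fun k => ?_⟩
    have e : evSeq w y k (P j) = w k ^ M * evSeq w y k Q - evSeq w y k L * evSeq w y k E := by
      have := congrArg (evSeq w y k) hQ
      rw [map_add, map_mul, map_mul, map_pow] at this
      have e2 : evSeq w y k (MvPolynomial.C X) = w k := by simp [evSeq]
      rw [e2] at this
      linear_combination this
    rw [e]
    refine sub_mem (V.mono ?_ (V.mul (V.B_pow_mem (hwN k) M) (hcQ k)))
      (V.mono ?_ (V.mul (hLc k) (hcE k)))
    · have := le_max_left (-cQ) (c1 - cE); linarith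
    · have := le_max_right (-cQ) (c1 - cE); linarith
  have hlarge := hN.eventually_ge_atTop (c - cb + C * (δ + m * D) + 1).toNat
  filter_upwards [hlarge] with k hk
  rw [not_not]
  have h1 : b * den k ^ (δ + m * D) * evSeq w y k (P j) = 0 := by
    refine V.int _ (hb k) (V.mono ?_ (V.mul (V.mul hcb (V.B_pow_mem (hdenB k) _)) (hc k)))
    have hk' : c - cb + C * (δ + m * D) + 1 ≤ N k := by
      exact (Int.self_le_toNat _).trans (by exact_mod_cast hk)
    have hM' : (M : ℤ) = C * (δ + m * D) + 1 := by rw [hM]; push_cast; ring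
    rw [hM']
    push_cast
    nlinarith
  exact (mul_eq_zero.mp h1).resolve_left (mul_ne_zero hb0 (pow_ne_zero _ (hden0 k)))

end Mahler

/-! ### Algebraic independence of limits -/

section MahlerIndep
open Filter Polynomial ASSeq

/-- A ring filtration, `B N` being the elements of valuation at least `N`. -/
structure RingFilt (F : Type*) [Field F] where
  B : ℤ → AddSubgroup F
  mono : ∀ {N M : ℤ}, N ≤ M → B M ≤ B N
  mul : ∀ {N M : ℤ} {x y : F}, x ∈ B N → y ∈ B M → x * y ∈ B (N + M)
  exh : ∀ x, ∃ N, x ∈ B N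

/-- Values of a polynomial at points approximating `y∞` approximate the value at `y∞`. -/
lemma RingFilt.approx {K F : Type*} [Field K] [Field F] [Algebra K F] (W : RingFilt F)
    {σ : Type*} (N : ℕ → ℕ) (y : ℕ → σ → F) (y' : σ → F)
    (hy' : ∀ i, ∃ c : ℤ, ∀ k, y k i - y' i ∈ W.B (N k - c)) (R : MvPolynomial σ K) :
    ∃ c : ℤ, ∀ k, MvPolynomial.aeval (y k) R - MvPolynomial.aeval y' R ∈ W.B (N k - c) := by
  induction R using MvPolynomial.induction_on with
  | C a => exact ⟨0, fun k => by simp⟩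
  | add p q hp hq =>
    obtain ⟨c, hc⟩ := hp
    obtain ⟨c', hc'⟩ := hq
    refine ⟨max c c', fun k => ?_⟩
    rw [map_add, map_add, add_sub_add_comm]
    exact add_mem (W.mono (by have := le_max_left c c'; linarith) (hc k))
      (W.mono (by have := le_max_right c c'; linarith) (hc' k))
  | mul_X p i ih =>
    obtain ⟨c, hc⟩ := ih
    obtain ⟨c', hc'⟩ := hy' i
    obtain ⟨a, ha⟩ := W.exh (MvPolynomial.aeval y' p)
    obtain ⟨b, hb⟩ := W.exh (y' i)
    refine ⟨max (c + c') (max (c - b) (c' - a)), fun k => ?_⟩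
    have h1 := le_max_left (c + c') (max (c - b) (c' - a))
    have h2 := (le_max_left (c - b) (c' - a)).trans (le_max_right (c + c') _)
    have h3 := (le_max_right (c - b) (c' - a)).trans (le_max_right (c + c') _)
    rw [map_mul, map_mul, MvPolynomial.aeval_X, MvPolynomial.aeval_X]
    set P := MvPolynomial.aeval (y k) p
    set Q := MvPolynomial.aeval y' p
    rw [show P * y k i - Q * y' i = (P - Q) * (y k i - y' i) + (P - Q) * y' i + Q * (y k i - y' i)
      by ring]
    refine add_mem (add_mem (W.mono ?_ (W.mul (hc k) (hc' k))) (W.mono ?_ (W.mul (hc k) hb)))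
      (W.mono ?_ (W.mul ha (hc' k)))
    · have : (0 : ℤ) ≤ N k := by positivity
      linarith
    · linarith
    · linarith

/-- The limits of a sequence of points satisfying Mahler type recursions are algebraically
independent as soon as the points are Zariski dense. -/
theorem mahler_algIndep {K F : Type*} [Field K] [Field F] [Algebra K F] (V : ValData K)
    (W : RingFilt F) (hVW : ∀ N x, algebraMap K F x ∈ W.B N ↔ x ∈ V.B N)
    {σ : Type*} [Fintype σ] (w : ℕ → K)
    (y : ℕ → σ → K) (N : ℕ → ℕ) (hN : Tendsto N atTop atTop)
    (hNG : ∀ G : ℕ, ∃ h, ∀ k, G * N k ≤ N (k + h)) (hwN : ∀ k, w k ∈ V.B (N k))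
    (hy : ∀ i, V.Bdd (fun k => y k i)) (C : ℕ) (den : ℕ → K)
    (hden : ∀ k, den k ∈ V.A) (hden0 : ∀ k, den k ≠ 0)
    (hdenB : ∀ k, den k ∈ V.B (-(C * (N k + 1) : ℕ)))
    (hdw : ∀ k, den k * w k ∈ V.A) (hdy : ∀ k i, den k * y k i ∈ V.A)
    (dense : ∀ P : MvPolynomial σ K[X], P ≠ 0 → ∃ᶠ k in atTop, evSeq w y k P ≠ 0)
    (Dn : ℕ) (transfer : ∀ h : ℕ, ∃ (d : K[X]) (T : σ → MvPolynomial σ K[X]), d.coeff 0 = 1 ∧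
      ∀ i, MvPolynomial.map (constantCoeff (R := K)) (T i) = MvPolynomial.X i ∧
        (T i).totalDegree ≤ Dn ∧ ∀ k, evSeq w y k (T i) = d.eval (w k) * y (k + h) i)
    (y' : σ → F) (hy' : ∀ i, ∃ c : ℤ, ∀ k, algebraMap K F (y k i) - y' i ∈ W.B (N k - c)) :
    AlgebraicIndependent K y' := by
  classical
  rw [algebraicIndependent_iff]
  intro R hR
  by_contra hR0
  set t := R.totalDegree with ht
  refine mahler_zero_estimate V w y N hN hwN hy C den hden hden0 hdenB hdw hdy dense (t * Dn) ?_
  intro G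
  obtain ⟨h, hG⟩ := hNG G
  obtain ⟨d, T, hd, hT⟩ := transfer h
  have hμ : ∀ μ ∈ R.support, ∑ i, μ i ≤ t := by
    intro μ hμ
    have := MvPolynomial.le_totalDegree hμ
    rwa [Finsupp.sum_fintype _ _ (fun _ => rfl)] at this
  refine ⟨∑ μ ∈ R.support, MvPolynomial.C (Polynomial.C (R.coeff μ) * d ^ (t - ∑ i, μ i)) *
    ∏ i, T i ^ μ i, ?_, ?_, ?_⟩
  · have : MvPolynomial.map (constantCoeff (R := K)) (∑ μ ∈ R.support,
        MvPolynomial.C (Polynomial.C (R.coeff μ) * d ^ (t - ∑ i, μ i)) * ∏ i, T i ^ μ i) = R := by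
      conv_rhs => rw [R.as_sum]
      rw [map_sum]
      refine Finset.sum_congr rfl fun μ _ => ?_
      rw [map_mul, MvPolynomial.map_C, map_prod]
      simp only [map_pow, (hT _).1]
      rw [MvPolynomial.monomial_eq, Finsupp.prod_fintype _ _ (fun _ => pow_zero _)]
      have hdp : ∀ m, (d ^ m).coeff 0 = 1 := fun m => by
        rw [coeff_zero_eq_eval_zero, eval_pow, ← coeff_zero_eq_eval_zero, hd, one_pow]
      simp [hdp]
    rw [this]
    exact hR0
  · intro i
    refine (MvPolynomial.degreeOf_le_totalDegree _ _).trans ?_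
    refine MvPolynomial.totalDegree_finsetSum_le fun μ hμ' => ?_
    refine (MvPolynomial.totalDegree_mul _ _).trans ?_
    rw [MvPolynomial.totalDegree_C, zero_add]
    refine (MvPolynomial.totalDegree_finsetProd _ _).trans ?_
    calc ∑ i, (T i ^ μ i).totalDegree ≤ ∑ i, μ i * Dn := Finset.sum_le_sum fun i _ =>
          (MvPolynomial.totalDegree_pow _ _).trans (Nat.mul_le_mul_left _ (hT i).2.1)
      _ = (∑ i, μ i) * Dn := (Finset.sum_mul _ _ _).symm
      _ ≤ t * Dn := Nat.mul_le_mul_right _ (hμ μ hμ')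
  · have hev : ∀ k, evSeq w y k (∑ μ ∈ R.support,
        MvPolynomial.C (Polynomial.C (R.coeff μ) * d ^ (t - ∑ i, μ i)) * ∏ i, T i ^ μ i) =
        d.eval (w k) ^ t * MvPolynomial.aeval (y (k + h)) R := by
      intro k
      rw [map_sum, MvPolynomial.aeval_def, MvPolynomial.eval₂_eq', Finset.mul_sum]
      refine Finset.sum_congr rfl fun μ hμ' => ?_
      rw [map_mul, map_prod]
      simp only [map_pow, (hT _).2.2, mul_pow, Finset.prod_mul_distrib]
      rw [Finset.prod_pow_eq_pow_sum]
      have e : evSeq w y k (MvPolynomial.C (Polynomial.C (R.coeff μ) * d ^ (t - ∑ i, μ i))) =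
          R.coeff μ * d.eval (w k) ^ (t - ∑ i, μ i) := by simp [evSeq]
      rw [e]
      have e2 : d.eval (w k) ^ t = d.eval (w k) ^ (t - ∑ i, μ i) * d.eval (w k) ^ (∑ i, μ i) := by
        rw [← pow_add, Nat.sub_add_cancel (hμ μ hμ')]
      rw [e2, Algebra.algebraMap_self_apply]
      ring
    obtain ⟨c, hc⟩ := W.approx N (fun k i => algebraMap K F (y k i)) y' hy' R
    have hc2 : ∀ k, MvPolynomial.aeval (y k) R ∈ V.B (N k - c) := by
      intro k
      rw [← hVW]
      have := hc k
      rw [hR, sub_zero] at this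
      convert this using 1
      exact (MvPolynomial.aeval_algebraMap_apply F (y k) R).symm
    have hw0 : V.Bdd w := ⟨0, fun k => V.mono (by positivity) (hwN k)⟩
    obtain ⟨c', hc'⟩ := V.bdd_eval w hw0 d
    refine ⟨c - t * c', fun k => ?_⟩
    rw [hev]
    refine V.mono ?_ (V.mul (V.B_pow_mem (hc' k) t) (hc2 (k + h)))
    have : (G : ℤ) * N k ≤ N (k + h) := by exact_mod_cast hG k
    linarith

namespace ASSeq
variable {K : Type*} [Field K] (D : ASSeq K)

lemma coeff_zero_comp_t (P : K[X]) : (P.comp D.t).coeff 0 = P.coeff 0 := by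
  have hq := D.hq
  rw [coeff_zero_eq_eval_zero, eval_comp, coeff_zero_eq_eval_zero, WSeq.t]
  simp [show D.q ≠ 0 by omega]

lemma coeff_zero_c : D.c.coeff 0 = 1 := by
  have hq := D.hq
  rw [coeff_zero_eq_eval_zero, WSeq.c, WSeq.t]
  simp [show D.q ≠ 0 by omega, show D.q - 1 ≠ 0 by omega]

/-- The recursions iterated `h` times. -/
lemma transfer_poly (hγ : D.γ.coeff 0 = 0) (e₁ e₂ : K) (v : ℕ → K)
    (hv : ∀ k, v (k + 1) = v k + (e₁ * (D.γ.eval (D.w k) * D.a k ^ D.n * D.s k) +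
      e₂ * (D.γ.eval (D.w k) * D.a k ^ D.n) ^ 2)) (h : ℕ) :
    ∃ d β δ : K[X], d.coeff 0 = 1 ∧ β.coeff 0 = 0 ∧ δ.coeff 0 = 0 ∧ ∀ k,
      d.eval (D.w k) * D.a (k + h) = D.a k ∧
      d.eval (D.w k) ^ D.n * D.s (k + h) =
        d.eval (D.w k) ^ D.n * D.s k + β.eval (D.w k) * D.a k ^ D.n ∧
      d.eval (D.w k) ^ (2 * D.n) * v (k + h) = d.eval (D.w k) ^ (2 * D.n) * v k +
        e₁ * β.eval (D.w k) * d.eval (D.w k) ^ D.n * D.s k * D.a k ^ D.n +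
        δ.eval (D.w k) * D.a k ^ (2 * D.n) := by
  induction h with
  | zero => exact ⟨1, 0, 0, by simp, by simp, by simp, fun k => by simp⟩
  | succ h ih =>
    obtain ⟨d, β, δ, hd, hβ, hδ, H⟩ := ih
    have hd' : (D.c * d.comp D.t).coeff 0 = 1 := by
      rw [mul_coeff_zero, coeff_zero_comp_t, hd, coeff_zero_c, mul_one]
    refine ⟨D.c * d.comp D.t, β.comp D.t + (D.c * d.comp D.t) ^ D.n * D.γ,
      C e₁ * β.comp D.t * (D.c * d.comp D.t) ^ D.n * D.γ + δ.comp D.t +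
        C e₂ * (D.c * d.comp D.t) ^ (2 * D.n) * D.γ ^ 2, hd', ?_, ?_, fun k => ?_⟩
    · rw [coeff_add, mul_coeff_zero, coeff_zero_comp_t, hβ, hγ]; simp
    · simp [mul_coeff_zero, coeff_zero_comp_t, hδ, hγ, pow_two]
    · obtain ⟨H1, H2, H3⟩ := H (k + 1)
      have ha := D.ha k
      have hs := D.hs k
      have hv' := hv k
      rw [show k + 1 + h = k + (h + 1) by ring] at H1 H2 H3
      simp only [eval_add, eval_mul, eval_pow, WSeq.eval_comp_t, eval_C]
      set c := D.c.eval (D.w k)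
      set d' := d.eval (D.w (k + 1))
      set β' := β.eval (D.w (k + 1))
      set δ' := δ.eval (D.w (k + 1))
      set g := D.γ.eval (D.w k)
      have han : D.a (k + 1) ^ D.n * c ^ D.n = D.a k ^ D.n := by rw [← mul_pow, ha]
      refine ⟨by rw [mul_assoc, H1, mul_comm, ha], ?_, ?_⟩
      · rw [mul_pow]
        linear_combination c ^ D.n * H2 + β' * han + c ^ D.n * d' ^ D.n * hs
      · rw [hs, hv'] at H3
        rw [pow_mul'] at H3 ⊢
        rw [pow_mul' (D.a k), mul_pow]
        rw [pow_mul' (D.a (k + 1))] at H3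
        set cn := c ^ D.n
        set dn := d' ^ D.n
        set an := D.a k ^ D.n
        set an' := D.a (k + 1) ^ D.n
        linear_combination cn ^ 2 * H3 + e₁ * β' * dn * cn * (D.s k + g * an) * han +
          δ' * (an' * cn + an) * han

/-- The transfer polynomials for the pair `(s, a)`. -/
lemma transfer_two (hγ : D.γ.coeff 0 = 0) (h : ℕ) :
    ∃ (d : K[X]) (T : Fin 2 → MvPolynomial (Fin 2) K[X]), d.coeff 0 = 1 ∧
      ∀ i, MvPolynomial.map (constantCoeff (R := K)) (T i) = MvPolynomial.X i ∧
        (T i).totalDegree ≤ 2 * D.n + 1 ∧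
        ∀ k, evSeq D.w (fun k => ![D.s k, D.a k]) k (T i) =
          d.eval (D.w k) * (fun k => ![D.s k, D.a k]) (k + h) i := by
  obtain ⟨d, β, δ, hd, hβ, hδ, H⟩ := D.transfer_poly hγ 0 0 (fun _ => 0) (fun k => by simp) h
  have hn := D.hn
  refine ⟨d ^ D.n, ![MvPolynomial.C (d ^ D.n) * MvPolynomial.X 0 +
    MvPolynomial.C β * MvPolynomial.X 1 ^ D.n,
    MvPolynomial.C (d ^ (D.n - 1)) * MvPolynomial.X 1], ?_, ?_⟩
  · rw [coeff_zero_eq_eval_zero, eval_pow, ← coeff_zero_eq_eval_zero, hd, one_pow]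
  intro i
  fin_cases i
  · refine ⟨?_, ?_, fun k => ?_⟩
    · simp [hd, hβ]
    · simp only [Fin.zero_eta, Matrix.cons_val_zero]
      refine (MvPolynomial.totalDegree_add _ _).trans (max_le ?_ ?_)
      · refine (MvPolynomial.totalDegree_mul _ _).trans ?_
        rw [MvPolynomial.totalDegree_C, MvPolynomial.totalDegree_X]; omega
      · refine (MvPolynomial.totalDegree_mul _ _).trans ?_
        rw [MvPolynomial.totalDegree_C, MvPolynomial.totalDegree_X_pow]; omega
    · have := (H k).2.1
      simp [evSeq, this]
  · refine ⟨?_, ?_, fun k => ?_⟩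
    · simp [hd]
    · simp only [Fin.mk_one, Matrix.cons_val_one]
      refine (MvPolynomial.totalDegree_mul _ _).trans ?_
      rw [MvPolynomial.totalDegree_C, MvPolynomial.totalDegree_X]; omega
    · have h1 := (H k).1
      simp only [evSeq, Fin.mk_one, Matrix.cons_val, map_mul, MvPolynomial.coe_eval₂Hom,
        MvPolynomial.eval₂_C, MvPolynomial.eval₂_X, coe_evalRingHom, eval_pow]
      rw [← h1, ← mul_assoc, ← pow_succ, Nat.sub_add_cancel hn]

/-- The transfer polynomials for the triple `(v, s, a)`. -/
lemma transfer_three (hγ : D.γ.coeff 0 = 0) (e₁ e₂ : K) (v : ℕ → K)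
    (hv : ∀ k, v (k + 1) = v k + (e₁ * (D.γ.eval (D.w k) * D.a k ^ D.n * D.s k) +
      e₂ * (D.γ.eval (D.w k) * D.a k ^ D.n) ^ 2)) (h : ℕ) :
    ∃ (d : K[X]) (T : Fin 3 → MvPolynomial (Fin 3) K[X]), d.coeff 0 = 1 ∧
      ∀ i, MvPolynomial.map (constantCoeff (R := K)) (T i) = MvPolynomial.X i ∧
        (T i).totalDegree ≤ 2 * D.n + 1 ∧
        ∀ k, evSeq D.w (fun k => ![v k, D.s k, D.a k]) k (T i) =
          d.eval (D.w k) * (fun k => ![v k, D.s k, D.a k]) (k + h) i := by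
  obtain ⟨d, β, δ, hd, hβ, hδ, H⟩ := D.transfer_poly hγ e₁ e₂ v hv h
  have hn := D.hn
  refine ⟨d ^ (2 * D.n), ![MvPolynomial.C (d ^ (2 * D.n)) * MvPolynomial.X 0 +
      MvPolynomial.C (C e₁ * β * d ^ D.n) * (MvPolynomial.X 1 * MvPolynomial.X 2 ^ D.n) +
      MvPolynomial.C δ * MvPolynomial.X 2 ^ (2 * D.n),
    MvPolynomial.C (d ^ (2 * D.n)) * MvPolynomial.X 1 +
      MvPolynomial.C (d ^ D.n * β) * MvPolynomial.X 2 ^ D.n,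
    MvPolynomial.C (d ^ (2 * D.n - 1)) * MvPolynomial.X 2], ?_, ?_⟩
  · rw [coeff_zero_eq_eval_zero, eval_pow, ← coeff_zero_eq_eval_zero, hd, one_pow]
  intro i
  fin_cases i
  · refine ⟨?_, ?_, fun k => ?_⟩
    · simp [hd, hβ, hδ]
    · simp only [Fin.zero_eta, Matrix.cons_val_zero]
      refine (MvPolynomial.totalDegree_add _ _).trans
        (max_le ((MvPolynomial.totalDegree_add _ _).trans (max_le ?_ ?_)) ?_)
      · refine (MvPolynomial.totalDegree_mul _ _).trans ?_
        rw [MvPolynomial.totalDegree_C, MvPolynomial.totalDegree_X]; omega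
      · refine (MvPolynomial.totalDegree_mul _ _).trans ?_
        have := MvPolynomial.totalDegree_mul (MvPolynomial.X 1 : MvPolynomial (Fin 3) K[X])
          (MvPolynomial.X 2 ^ D.n)
        rw [MvPolynomial.totalDegree_X, MvPolynomial.totalDegree_X_pow] at this
        rw [MvPolynomial.totalDegree_C]; omega
      · refine (MvPolynomial.totalDegree_mul _ _).trans ?_
        rw [MvPolynomial.totalDegree_C, MvPolynomial.totalDegree_X_pow]; omega
    · have := (H k).2.2
      simp [evSeq, this]
      ring
  · refine ⟨?_, ?_, fun k => ?_⟩
    · simp [hd, hβ]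
    · simp only [Fin.mk_one, Matrix.cons_val_one]
      refine (MvPolynomial.totalDegree_add _ _).trans (max_le ?_ ?_)
      · refine (MvPolynomial.totalDegree_mul _ _).trans ?_
        rw [MvPolynomial.totalDegree_C, MvPolynomial.totalDegree_X]; omega
      · refine (MvPolynomial.totalDegree_mul _ _).trans ?_
        rw [MvPolynomial.totalDegree_C, MvPolynomial.totalDegree_X_pow]; omega
    · have := (H k).2.1
      simp [evSeq]
      rw [two_mul, pow_add]
      linear_combination -d.eval (D.w k) ^ D.n * this
  · refine ⟨?_, ?_, fun k => ?_⟩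
    · simp [hd]
    · simp only [Fin.reduceFinMk, Matrix.cons_val]
      refine (MvPolynomial.totalDegree_mul _ _).trans ?_
      rw [MvPolynomial.totalDegree_C, MvPolynomial.totalDegree_X]; omega
    · have h1 := (H k).1
      simp only [evSeq, Fin.reduceFinMk, Matrix.cons_val, map_mul, MvPolynomial.coe_eval₂Hom,
        MvPolynomial.eval₂_C, MvPolynomial.eval₂_X, coe_evalRingHom, eval_pow]
      rw [← h1, ← mul_assoc, ← pow_succ, Nat.sub_add_cancel (by omega)]

end ASSeq
end MahlerIndep

/-! ### Carlitz polynomials and power sums -/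

section Carlitz
open Polynomial

/-- The sequence `(-1)^k θ^{-(q^k-1)/(q-1)}`, defined recursively. -/
def cW {K : Type*} [Field K] (q : ℕ) (θ : K) : ℕ → K
  | 0 => 1
  | k + 1 => -θ⁻¹ * cW q θ k ^ q

/-- The partial products of `∏ (1 - θ^{1-q^i})⁻¹`. -/
def cA {K : Type*} [Field K] (q : ℕ) (θ : K) : ℕ → K
  | 0 => 1
  | k + 1 => cA q θ k * (1 - θ ^ ((1 : ℤ) - (q : ℤ) ^ (k + 1)))⁻¹

/-- The coefficient of `X ^ (q ^ i)` in the `d`-th Carlitz polynomial, which takes the value `1`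
at monic polynomials of degree `d` in `θ` and `0` at those of smaller degree. -/
def cE {K : Type*} [Field K] (q : ℕ) (θ : K) : ℕ → ℕ → K
  | 0, 0 => 1
  | 0, _ + 1 => 0
  | d + 1, 0 => -cE q θ d 0 / (θ ^ q ^ (d + 1) - θ)
  | d + 1, i + 1 => (cE q θ d i ^ q - cE q θ d (i + 1)) / (θ ^ q ^ (d + 1) - θ)

variable {Fq : Type*} [Field Fq] [Fintype Fq] {K : Type*} [Field K] [Algebra Fq K] {θ : K}

local notation "q" => Fintype.card Fq

omit [Fintype Fq] in
lemma bracket_ne_zero (hθ : Transcendental Fq θ) {m : ℕ} (hm : 2 ≤ m) : θ ^ m - θ ≠ 0 := by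
  intro h
  refine hθ ⟨X ^ m - X, ?_, by simpa using h⟩
  intro h0
  have := congrArg (fun P => coeff P m) h0
  simp [coeff_X, show (1 : ℕ) ≠ m by omega] at this

lemma two_le_pow_card (i : ℕ) : 2 ≤ q ^ (i + 1) :=
  (Fintype.one_lt_card (α := Fq)).trans_le (Nat.le_self_pow (by omega) _)

variable (Fq) in
lemma frob_sub (x y : K) : (x - y) ^ q = x ^ q - y ^ q :=
  map_sub (FiniteField.frobeniusAlgHom Fq K) x y

variable (Fq) in
lemma frob_neg (x : K) : (-x) ^ q = -x ^ q :=
  map_neg (FiniteField.frobeniusAlgHom Fq K) x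

variable (Fq) in
lemma frob_sum {ι : Type*} (s : Finset ι) (f : ι → K) : (∑ i ∈ s, f i) ^ q = ∑ i ∈ s, f i ^ q :=
  map_sum (FiniteField.frobeniusAlgHom Fq K) f s

lemma frob_algebraMap (z : Fq) : (algebraMap Fq K z) ^ q = algebraMap Fq K z := by
  rw [← map_pow, FiniteField.pow_card]

variable (Fq) in
lemma frob_iter_add (i : ℕ) (x y : K) : (x + y) ^ q ^ i = x ^ q ^ i + y ^ q ^ i := by
  induction i with
  | zero => simp
  | succ i ih =>
    rw [pow_succ, pow_mul, ih, pow_mul, pow_mul]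
    exact map_add (FiniteField.frobeniusAlgHom Fq K) _ _

lemma frob_iter_algebraMap (i : ℕ) (z : Fq) : (algebraMap Fq K z) ^ q ^ i = algebraMap Fq K z := by
  rw [← map_pow, FiniteField.pow_card_pow]

omit [Algebra Fq K] in
lemma cE_eq_zero (d i : ℕ) (h : d < i) : cE q θ d i = 0 := by
  induction d generalizing i with
  | zero => obtain ⟨j, rfl⟩ : ∃ j, i = j + 1 := ⟨i - 1, by omega⟩; rfl
  | succ d ih =>
    obtain ⟨j, rfl⟩ : ∃ j, i = j + 1 := ⟨i - 1, by omega⟩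
    rw [cE, ih j (by omega), ih (j + 1) (by omega), zero_pow Fintype.card_ne_zero]
    simp

lemma cE_twist (hθ : Transcendental Fq θ) (d i : ℕ) :
    (θ ^ q ^ (i + 1) - θ) * cE q θ (d + 1) (i + 1) = cE q θ d i ^ q := by
  have hb : ∀ d, θ ^ q ^ (d + 1) - θ ≠ 0 := fun d => bracket_ne_zero hθ (two_le_pow_card d)
  induction d generalizing i with
  | zero =>
    cases i with
    | zero =>
      simp only [cE]
      have := hb 0
      field_simp
      simp
    | succ i => simp [cE]
  | succ d ih =>
    -- the key identity `(θ^{q^i} - θ^{q^{d+1}}) e_{d+1,i} = e_{d,i}`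
    have key : (θ ^ q ^ i - θ ^ q ^ (d + 1)) * cE q θ (d + 1) i = cE q θ d i := by
      cases i with
      | zero =>
        rw [cE, pow_zero, pow_one]
        have := hb d
        field_simp
        ring
      | succ i =>
        have h1 := ih i
        have h2 : (θ ^ q ^ (d + 1) - θ) * cE q θ (d + 1) (i + 1) =
            cE q θ d i ^ q - cE q θ d (i + 1) := by
          rw [cE, mul_div_cancel₀ _ (hb d)]
        linear_combination h1 - h2
    have key2 := congrArg (· ^ q) key
    simp only [mul_pow, frob_sub, ← pow_mul, ← pow_succ] at key2
    have h1 := ih i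
    have h2 : (θ ^ q ^ (d + 1 + 1) - θ) * cE q θ (d + 1 + 1) (i + 1) =
        cE q θ (d + 1) i ^ q - cE q θ (d + 1) (i + 1) := by
      rw [cE, mul_div_cancel₀ _ (hb _)]
    apply mul_left_cancel₀ (hb (d + 1))
    linear_combination (θ ^ q ^ (i + 1) - θ) * h2 + key2 - h1

variable (Fq θ) in
/-- The `d`-th Carlitz polynomial as an `𝔽_q`-linear map. -/
def cLin (d : ℕ) : K →ₗ[Fq] K where
  toFun z := ∑ i ∈ Finset.range (d + 1), cE q θ d i * z ^ q ^ i
  map_add' x y := by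
    rw [← Finset.sum_add_distrib]
    exact Finset.sum_congr rfl fun i _ => by rw [frob_iter_add Fq, mul_add]
  map_smul' z x := by
    rw [RingHom.id_apply, Finset.smul_sum]
    refine Finset.sum_congr rfl fun i _ => ?_
    rw [Algebra.smul_def, mul_pow, frob_iter_algebraMap, Algebra.smul_def]
    ring

lemma cLin_apply (d : ℕ) (z : K) :
    cLin Fq θ d z = ∑ i ∈ Finset.range (d + 1), cE q θ d i * z ^ q ^ i := rfl

lemma cLin_theta_mul (hθ : Transcendental Fq θ) (d : ℕ) (z : K) :
    cLin Fq θ (d + 1) (θ * z) = θ * cLin Fq θ (d + 1) z + cLin Fq θ d z ^ q := by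
  rw [cLin_apply, cLin_apply, cLin_apply, Finset.sum_range_succ', Finset.sum_range_succ' _ (d + 1),
    frob_sum, mul_add, Finset.mul_sum]
  have : ∀ i, cE q θ (d + 1) (i + 1) * (θ * z) ^ q ^ (i + 1) =
      θ * (cE q θ (d + 1) (i + 1) * z ^ q ^ (i + 1)) + (cE q θ d i * z ^ q ^ i) ^ q := by
    intro i
    have h := cE_twist hθ d i
    rw [mul_pow, mul_pow, ← pow_mul, ← pow_succ, ← h]
    ring
  simp only [this, Finset.sum_add_distrib, pow_zero, pow_one]
  ring

lemma cLin_succ (hθ : Transcendental Fq θ) (d : ℕ) (z : K) :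
    (θ ^ q ^ (d + 1) - θ) * cLin Fq θ (d + 1) z = cLin Fq θ d z ^ q - cLin Fq θ d z := by
  have hb := bracket_ne_zero hθ (two_le_pow_card (Fq := Fq) d)
  have h2 : cLin Fq θ d z = ∑ i ∈ Finset.range (d + 2), cE q θ d i * z ^ q ^ i := by
    rw [Finset.sum_range_succ, cE_eq_zero _ _ (Nat.lt_succ_self d), zero_mul, add_zero, cLin_apply]
  have h3 : cLin Fq θ d z ^ q =
      ∑ i ∈ Finset.range (d + 1), cE q θ d i ^ q * z ^ q ^ (i + 1) := by
    rw [cLin_apply, frob_sum]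
    exact Finset.sum_congr rfl fun i _ => by rw [mul_pow, ← pow_mul, ← pow_succ]
  rw [h3, h2, cLin_apply, Finset.sum_range_succ', Finset.sum_range_succ' _ (d + 1), mul_add,
    Finset.mul_sum, ← sub_sub, ← Finset.sum_sub_distrib, sub_eq_add_neg (Finset.sum _ _)]
  congr 1
  · refine Finset.sum_congr rfl fun i _ => ?_
    rw [cE]
    field_simp
  · rw [cE]
    field_simp

lemma cLin_theta_pow (hθ : Transcendental Fq θ) (d j : ℕ) (h : j ≤ d) :
    cLin Fq θ d (θ ^ j) = if j = d then 1 else 0 := by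
  induction d generalizing j with
  | zero =>
    obtain rfl : j = 0 := by omega
    simp [cLin_apply, cE]
  | succ d ih =>
    have h1 : cLin Fq θ (d + 1) 1 = 0 := by
      have h2 := cLin_succ hθ d (1 : K)
      have h3 := ih 0 (by omega)
      rw [pow_zero] at h3
      rw [h3] at h2
      have : (if 0 = d then (1 : K) else 0) ^ q - (if 0 = d then (1 : K) else 0) = 0 := by
        split_ifs
        · simp
        · rw [zero_pow Fintype.card_ne_zero, sub_zero]
      rw [this] at h2
      exact (mul_eq_zero.mp h2).resolve_left (bracket_ne_zero hθ (two_le_pow_card d))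
    have aux : ∀ j, j ≤ d → cLin Fq θ (d + 1) (θ ^ j) = 0 := by
      intro j
      induction j with
      | zero => intro _; rw [pow_zero, h1]
      | succ j ihj =>
        intro hj
        rw [pow_succ', cLin_theta_mul hθ, ihj (by omega), ih j (by omega), if_neg (by omega),
          zero_pow Fintype.card_ne_zero, mul_zero, zero_add]
    rcases Nat.lt_or_ge j (d + 1) with hj | hj
    · rw [aux j (by omega), if_neg (by omega)]
    · obtain rfl : j = d + 1 := by omega
      rw [pow_succ', cLin_theta_mul hθ, aux d le_rfl, ih d le_rfl]
      simp

lemma cLin_monic (hθ : Transcendental Fq θ) (d : ℕ) (a : Fq[X]) (ha : a.Monic)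
    (hd : a.natDegree = d) : cLin Fq θ d (aeval θ a) = 1 := by
  rw [aeval_eq_sum_range, map_sum, hd, Finset.sum_eq_single_of_mem d (by simp)]
  · rw [map_smul, cLin_theta_pow hθ d d le_rfl, if_pos rfl, ← hd, ha.coeff_natDegree, one_smul]
  · intro j hj hjd
    rw [map_smul, cLin_theta_pow hθ d j (by simp at hj; omega), if_neg hjd, smul_zero]

/-- The monic polynomial of degree `d` with given lower coefficients. -/
def monicOf (d : ℕ) (c : Fin d → Fq) : Fq[X] := X ^ d + ((degreeLTEquiv Fq d).symm c : Fq[X])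

omit [Fintype Fq] in
lemma degree_lt_monicOf (d : ℕ) (c : Fin d → Fq) :
    ((degreeLTEquiv Fq d).symm c : Fq[X]).degree < d :=
  mem_degreeLT.mp ((degreeLTEquiv Fq d).symm c).2

omit [Fintype Fq] in
lemma monicOf_monic (d : ℕ) (c : Fin d → Fq) : (monicOf d c).Monic :=
  monic_X_pow_add (degree_lt_monicOf d c)

omit [Fintype Fq] in
lemma monicOf_natDegree (d : ℕ) (c : Fin d → Fq) : (monicOf d c).natDegree = d := by
  apply natDegree_eq_of_degree_eq_some
  rw [monicOf, degree_add_eq_left_of_degree_lt, degree_X_pow]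
  rw [degree_X_pow]; exact degree_lt_monicOf d c

omit [Fintype Fq] in
lemma monicOf_injective (d : ℕ) : Function.Injective (monicOf (Fq := Fq) d) := by
  intro c c' h
  have := add_left_cancel h
  exact (degreeLTEquiv Fq d).symm.injective (Subtype.ext this)

omit [Fintype Fq] in
lemma monicOf_surj (d : ℕ) (a : Fq[X]) (ha : a.Monic) (hd : a.natDegree = d) :
    ∃ c, monicOf d c = a := by
  have h : a - X ^ d ∈ degreeLT Fq d := by
    rw [mem_degreeLT]
    have h1 : a.degree = d := by rw [degree_eq_natDegree ha.ne_zero, hd]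
    rw [← h1]
    apply degree_sub_lt_left _ ha.ne_zero _
    · rw [h1, degree_X_pow]
    · rw [ha, monic_X_pow]
  exact ⟨degreeLTEquiv Fq d ⟨_, h⟩, by simp [monicOf]⟩

variable (Fq θ) in
/-- The power sum of the `-n`-th powers of the monic polynomials of degree `d` in `θ`. -/
def cS (d n : ℕ) : K := ∑ c : Fin d → Fq, (aeval θ (monicOf d c))⁻¹ ^ n

variable (Fq θ) in
/-- The polynomial `1 + E_d`. -/
def cPoly (d : ℕ) : K[X] := 1 + ∑ i ∈ Finset.range (d + 1), C (cE q θ d i) * X ^ q ^ i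

lemma eval_cPoly (d : ℕ) (z : K) : (cPoly Fq θ d).eval z = 1 + cLin Fq θ d z := by
  rw [cPoly, cLin_apply, eval_add, eval_finsetSum]
  simp

lemma cast_card_eq_zero : ((q : ℕ) : K) = 0 := by
  rw [← map_natCast (algebraMap Fq K), FiniteField.cast_card_eq_zero, map_zero]

lemma derivative_cPoly (d : ℕ) : derivative (cPoly Fq θ d) = C (cE q θ d 0) := by
  rw [cPoly, derivative_add, derivative_one, zero_add, derivative_sum, Finset.sum_range_succ']
  rw [Finset.sum_eq_zero]
  · simp
  · intro i _
    rw [derivative_C_mul, derivative_X_pow, pow_succ, Nat.cast_mul, cast_card_eq_zero]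
    simp

omit [Fintype Fq] in
lemma aeval_monicOf_injective (hθ : Transcendental Fq θ) (d : ℕ) :
    Function.Injective (fun c : Fin d → Fq => aeval θ (monicOf d c)) :=
  (transcendental_iff_injective.mp hθ).comp (monicOf_injective d)

omit [Fintype Fq] in
lemma aeval_monicOf_ne_zero (hθ : Transcendental Fq θ) (d : ℕ) (c : Fin d → Fq) :
    aeval θ (monicOf d c) ≠ 0 := fun h => hθ ⟨_, (monicOf_monic d c).ne_zero, h⟩

lemma cPoly_factor (hθ : Transcendental Fq θ) (d : ℕ) : ∃ u : K,
    cPoly Fq θ d = C u * ∏ c : Fin d → Fq, (X + C (aeval θ (monicOf d c))) := by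
  have h1 : ∏ c : Fin d → Fq, (X + C (aeval θ (monicOf d c))) ∣ cPoly Fq θ d := by
    apply Fintype.prod_dvd_of_coprime
    · have := pairwise_coprime_X_sub_C (s := fun c : Fin d → Fq => -aeval θ (monicOf d c))
        (neg_injective.comp (aeval_monicOf_injective hθ d))
      simpa using this
    · intro c
      rw [← sub_neg_eq_add, ← C_neg, dvd_iff_isRoot, IsRoot, eval_cPoly, map_neg,
        cLin_monic hθ d _ (monicOf_monic d c) (monicOf_natDegree d c), add_neg_cancel]
  obtain ⟨Q, hQ⟩ := h1
  have hne : cPoly Fq θ d ≠ 0 := by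
    intro h
    have := congrArg (eval 0) h
    rw [eval_cPoly] at this
    simp at this
  have hQ0 : Q ≠ 0 := by rintro rfl; exact hne (by rw [hQ, mul_zero])
  have hm : (∏ c : Fin d → Fq, (X + C (aeval θ (monicOf d c)))).Monic :=
    monic_prod_of_monic _ _ fun c _ => monic_X_add_C _
  have hdeg : (cPoly Fq θ d).natDegree ≤ q ^ d := by
    rw [cPoly]
    refine (natDegree_add_le _ _).trans (max_le (by simp) ?_)
    refine natDegree_sum_le_of_forall_le _ _ fun i hi => ?_
    refine (natDegree_C_mul_X_pow_le _ _).trans ?_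
    exact Nat.pow_le_pow_right Fintype.card_pos (by simp at hi; omega)
  have hprod : (∏ c : Fin d → Fq, (X + C (aeval θ (monicOf d c)))).natDegree = q ^ d := by
    rw [natDegree_prod_of_monic _ _ fun c _ => monic_X_add_C _]
    simp
  rw [hQ, hm.natDegree_mul' hQ0, hprod] at hdeg
  refine ⟨Q.coeff 0, ?_⟩
  rw [hQ, mul_comm]
  congr 1
  exact eq_C_of_natDegree_eq_zero (by omega)

/-- The expansion of `1 / (X + a)`. -/
def invSeries (a : K) : PowerSeries K := PowerSeries.mk fun m => (-1) ^ m * a⁻¹ ^ (m + 1)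

lemma invSeries_mul (a : K) (ha : a ≠ 0) :
    ((X + C a : K[X]) : PowerSeries K) * invSeries a = 1 := by
  rw [Polynomial.coe_add, coe_X, coe_C, add_mul]
  ext m
  rw [map_add, PowerSeries.coeff_C_mul, PowerSeries.coeff_one]
  cases m with
  | zero => simp [invSeries, ha]
  | succ m =>
    rw [PowerSeries.coeff_succ_X_mul]
    simp only [invSeries, PowerSeries.coeff_mk]
    rw [if_neg (by omega), pow_succ a⁻¹ (m + 1), pow_succ (-1 : K)]
    field_simp
    ring

/-- The logarithmic derivative of `1 + E_d`. -/
lemma cPoly_mul_series (hθ : Transcendental Fq θ) (d : ℕ) :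
    (cPoly Fq θ d : PowerSeries K) * PowerSeries.mk (fun m => (-1) ^ m * cS Fq θ d (m + 1)) =
      PowerSeries.C (cE q θ d 0) := by
  classical
  obtain ⟨u, hu⟩ := cPoly_factor hθ d
  have h1 : PowerSeries.mk (fun m => (-1) ^ m * cS Fq θ d (m + 1)) =
      ∑ c : Fin d → Fq, invSeries (aeval θ (monicOf d c)) := by
    ext m
    simp [invSeries, cS, Finset.mul_sum]
  have h2 := derivative_cPoly (Fq := Fq) (θ := θ) d
  rw [hu, derivative_C_mul, derivative_prod_finset] at h2
  rw [h1, ← Polynomial.coe_C, ← h2, hu, Polynomial.coe_mul, Polynomial.coe_mul, mul_assoc]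
  congr 1
  rw [Finset.mul_sum]
  simp only [derivative_add, derivative_X, derivative_C, add_zero, mul_one]
  rw [← coeToPowerSeries.ringHom_apply, ← coeToPowerSeries.ringHom_apply, map_sum]
  refine Finset.sum_congr rfl fun c _ => ?_
  rw [← Finset.mul_prod_erase _ _ (Finset.mem_univ c), map_mul, mul_comm, ← mul_assoc,
    mul_comm (invSeries _), coeToPowerSeries.ringHom_apply, invSeries_mul _
      (aeval_monicOf_ne_zero hθ d c), one_mul]

lemma cS_rec (hθ : Transcendental Fq θ) (d m : ℕ) :
    (-1) ^ m * cS Fq θ d (m + 1) + ∑ i ∈ Finset.range (m + 1),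
      (if q ^ i ≤ m then cE q θ d i * ((-1) ^ (m - q ^ i) * cS Fq θ d (m - q ^ i + 1)) else 0) =
      if m = 0 then cE q θ d 0 else 0 := by
  have h := congrArg (PowerSeries.coeff m) (cPoly_mul_series hθ d)
  rw [PowerSeries.coeff_C] at h
  rw [← h, cPoly, ← coeToPowerSeries.ringHom_apply, map_add, map_one, add_mul, one_mul, map_add,
    PowerSeries.coeff_mk, map_sum, Finset.sum_mul, map_sum]
  congr 1
  have h2 : ∀ i, PowerSeries.coeff m ((coeToPowerSeries.ringHom (C (cE q θ d i) * X ^ q ^ i)) *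
      PowerSeries.mk (fun m => (-1) ^ m * cS Fq θ d (m + 1))) =
      if q ^ i ≤ m then cE q θ d i * ((-1) ^ (m - q ^ i) * cS Fq θ d (m - q ^ i + 1)) else 0 := by
    intro i
    rw [map_mul coeToPowerSeries.ringHom, map_pow coeToPowerSeries.ringHom,
      coeToPowerSeries.ringHom_apply, coeToPowerSeries.ringHom_apply, coe_C,
      coe_X, mul_assoc, PowerSeries.coeff_C_mul, PowerSeries.coeff_X_pow_mul']
    split_ifs
    · rw [PowerSeries.coeff_mk]
    · rw [mul_zero]
  simp only [h2]
  have e1 : Finset.range (m + 1) ⊆ Finset.range (m + d + 2) :=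
    Finset.range_mono (by omega)
  have e2 : Finset.range (d + 1) ⊆ Finset.range (m + d + 2) :=
    Finset.range_mono (by omega)
  rw [Finset.sum_subset e1, Finset.sum_subset e2]
  · intro i _ hi
    rw [cE_eq_zero d i (by simp at hi; omega)]
    simp
  · intro i _ hi
    rw [if_neg]
    have h3 : i < q ^ i := Nat.lt_pow_self Fintype.one_lt_card
    simp at hi
    omega


omit [Algebra Fq K] [Fintype Fq] [Field Fq] in
lemma cW_ne_zero (Q : ℕ) (hθ0 : θ ≠ 0) (k : ℕ) : cW Q θ k ≠ 0 := by
  induction k with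
  | zero => simp [cW]
  | succ k ih =>
    rw [cW]
    exact mul_ne_zero (neg_ne_zero.mpr (inv_ne_zero hθ0)) (pow_ne_zero _ ih)

variable (Fq) in
lemma cW_succ (k : ℕ) : cW q θ (k + 1) = -cW q θ k * (θ ^ q ^ k)⁻¹ := by
  induction k with
  | zero => simp [cW]
  | succ k ih =>
    have h2 : cW q θ (k + 2) = -θ⁻¹ * cW q θ (k + 1) ^ q := rfl
    have h3 : cW q θ (k + 1) = -θ⁻¹ * cW q θ k ^ q := rfl
    rw [h2]
    conv_lhs => rw [ih]
    rw [h3, mul_pow, frob_neg, inv_pow, ← pow_mul, ← pow_succ]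
    ring

lemma cW_pow (hθ0 : θ ≠ 0) (k : ℕ) : cW q θ k ^ (q - 1) = θ ^ ((1 : ℤ) - (q : ℤ) ^ k) := by
  have h1 : cW q θ (k + 1) = -θ⁻¹ * cW q θ k ^ q := rfl
  rw [cW_succ Fq, ← Nat.sub_add_cancel (Fintype.card_pos (α := Fq)), pow_succ,
    Nat.sub_add_cancel (Fintype.card_pos (α := Fq))] at h1
  have hw := cW_ne_zero q hθ0 k
  rw [zpow_sub₀ hθ0, zpow_one]
  have e : θ ^ ((q : ℤ) ^ k) = θ ^ q ^ k := by
    rw [← zpow_natCast]; push_cast; rfl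
  rw [e]
  have hp : θ ^ q ^ k ≠ 0 := pow_ne_zero _ hθ0
  field_simp at h1 ⊢
  linear_combination h1

omit [Fintype Fq] in
lemma transcendental_ne_zero (hθ : Transcendental Fq θ) : θ ≠ 0 := by
  rintro rfl
  exact hθ (isAlgebraic_zero)

lemma one_sub_ne_zero (hθ : Transcendental Fq θ) (k : ℕ) :
    1 - θ ^ ((1 : ℤ) - (q : ℤ) ^ (k + 1)) ≠ 0 := by
  have hθ0 := transcendental_ne_zero hθ
  intro h
  apply bracket_ne_zero hθ (two_le_pow_card (Fq := Fq) k)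
  have e : θ ^ ((q : ℤ) ^ (k + 1)) = θ ^ q ^ (k + 1) := by
    rw [← zpow_natCast]; push_cast; rfl
  have h1 := sub_eq_zero.mp h
  rw [zpow_sub₀ hθ0, zpow_one, e, eq_div_iff (pow_ne_zero _ hθ0), one_mul] at h1
  rw [h1, sub_self]

lemma cA_ne_zero (hθ : Transcendental Fq θ) (k : ℕ) : cA q θ k ≠ 0 := by
  induction k with
  | zero => simp [cA]
  | succ k ih => rw [cA]; exact mul_ne_zero ih (inv_ne_zero (one_sub_ne_zero hθ k))

lemma cA_succ (hθ : Transcendental Fq θ) (k : ℕ) :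
    cA q θ (k + 1) * (1 - cW q θ (k + 1) ^ (q - 1)) = cA q θ k := by
  rw [cA, cW_pow (transcendental_ne_zero hθ), mul_assoc, inv_mul_cancel₀ (one_sub_ne_zero hθ k),
    mul_one]

lemma cE_zero_eq (hθ : Transcendental Fq θ) (d : ℕ) : cE q θ d 0 = cW q θ d ^ q * cA q θ d := by
  have hθ0 := transcendental_ne_zero hθ
  induction d with
  | zero => simp [cE, cW, cA]
  | succ d ih =>
    have hb := bracket_ne_zero hθ (two_le_pow_card (Fq := Fq) d)
    have h1 := one_sub_ne_zero hθ d
    have e : θ ^ ((q : ℤ) ^ (d + 1)) = θ ^ q ^ (d + 1) := by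
      rw [← zpow_natCast]; push_cast; rfl
    have hp : θ ^ q ^ (d + 1) ≠ 0 := pow_ne_zero _ hθ0
    rw [cE, ih, cA, cW_succ Fq, mul_pow, frob_neg, inv_pow, ← pow_mul, ← pow_succ]
    rw [zpow_sub₀ hθ0, zpow_one, e] at h1 ⊢
    have h2 : 1 - θ / θ ^ q ^ (d + 1) = (θ ^ q ^ (d + 1) - θ) / θ ^ q ^ (d + 1) := by
      field_simp
    rw [h2]
    field_simp

/-- Scaling of the variable by `ζ ∈ 𝔽_q` multiplies the polynomial by `ζ ^ m`. -/
def Isotypic (Fq : Type*) [Field Fq] {K : Type*} [Field K] [Algebra Fq K] (m : ℕ) (G : K[X]) :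
    Prop := ∀ z : Fq, G.comp (C (algebraMap Fq K z) * X) = C (algebraMap Fq K z ^ m) * G

/-- The coefficients of the Carlitz polynomials are `G_i(w_d) a_d^{q^i}` with `G_i` independent
of `d`. -/
lemma exists_G (hθ : Transcendental Fq θ) (i : ℕ) : ∃ G : K[X], Isotypic Fq 1 G ∧
    ∀ d, cE q θ d i = G.eval (cW q θ d) * cA q θ d ^ q ^ i := by
  have hq1 : 1 < q := Fintype.one_lt_card
  induction i with
  | zero =>
    refine ⟨X ^ q, fun z => ?_, fun d => ?_⟩
    · rw [pow_comp, X_comp, mul_pow, ← C_pow, frob_algebraMap, pow_one]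
    · rw [cE_zero_eq hθ]; simp
  | succ i ih =>
    obtain ⟨G, hG, hd⟩ := ih
    have hb := bracket_ne_zero hθ (two_le_pow_card (Fq := Fq) i)
    set φ : K →+* K := (FiniteField.frobeniusAlgHom Fq K : K →+* K) with hφ
    have hφa : ∀ x, φ x = x ^ q := fun x => rfl
    refine ⟨C (θ ^ q ^ (i + 1) - θ)⁻¹ * ((G.map φ).comp (C (-θ) * X)) *
      (1 - X ^ (q - 1)) ^ q ^ (i + 1), fun z => ?_, fun d => ?_⟩
    · have h1 := congrArg (Polynomial.map φ) (hG z)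
      rw [Polynomial.map_comp, Polynomial.map_mul, Polynomial.map_mul, map_C, map_C, map_X,
        pow_one, hφa, frob_algebraMap] at h1
      have h2 := congrArg (fun P => P.comp (C (-θ) * X)) h1
      simp only [comp_assoc, mul_comp, C_comp, X_comp] at h2
      have h3 : C (algebraMap Fq K z) * (C (-θ) * X) =
          C (-θ) * (C (algebraMap Fq K z) * X) := by ring
      rw [h3] at h2
      rw [mul_comp, mul_comp, C_comp, comp_assoc, mul_comp, C_comp, X_comp, h2, pow_comp, sub_comp,
        one_comp, pow_comp, X_comp, pow_one]
      rcases eq_or_ne z 0 with rfl | hz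
      · simp
      · rw [mul_pow, ← C_pow, ← map_pow (algebraMap Fq K), FiniteField.pow_card_sub_one_eq_one z hz,
          map_one, C_1, one_mul]
        ring
    · have hev : ∀ x, ((G.map φ).eval (x ^ q)) = G.eval x ^ q := by
        intro x
        rw [← hφa x, eval_map, eval₂_hom, hφa]
      cases d with
      | zero =>
        have : (0 : K) ^ q ^ (i + 1) = 0 := zero_pow (pow_ne_zero _ Fintype.card_ne_zero)
        simp [cE, cW, this]
      | succ d =>
        have h1 := cE_twist hθ d i
        rw [hd d, ← cA_succ hθ d, mul_pow, ← pow_mul, ← pow_succ, mul_pow, ← hev] at h1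
        have h2 : cW q θ d ^ q = -θ * cW q θ (d + 1) := by
          rw [cW, ← mul_assoc, neg_mul_neg, mul_inv_cancel₀ (transcendental_ne_zero hθ), one_mul]
        rw [h2] at h1
        simp only [eval_mul, eval_C, eval_comp, eval_X, eval_pow, eval_sub, eval_one]
        apply mul_left_cancel₀ hb
        rw [h1]
        field_simp

omit [Fintype Fq] in
lemma isotypic_mul {m m' : ℕ} {G H : K[X]} (hG : Isotypic Fq m G) (hH : Isotypic Fq m' H) :
    Isotypic Fq (m + m') (G * H) := by
  intro z
  rw [mul_comp, hG z, hH z, pow_add, C_mul]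
  ring

omit [Fintype Fq] in
lemma isotypic_sum {m : ℕ} {ι : Type*} (s : Finset ι) (G : ι → K[X])
    (h : ∀ i ∈ s, Isotypic Fq m (G i)) : Isotypic Fq m (∑ i ∈ s, G i) := by
  intro z
  rw [Polynomial.sum_comp, Finset.mul_sum]
  exact Finset.sum_congr rfl fun i hi => h i hi z

omit [Fintype Fq] in
lemma isotypic_congr {m m' : ℕ} {G : K[X]} (hG : Isotypic Fq m G)
    (h : ∀ z : Fq, z ^ m = z ^ m') : Isotypic Fq m' G := by
  intro z
  rw [hG z, ← map_pow, h, map_pow]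

lemma exists_g (hθ : Transcendental Fq θ) (m : ℕ) : ∃ g : K[X], Isotypic Fq (m + 1) g ∧
    ∀ d, (-1) ^ m * cS Fq θ d (m + 1) = g.eval (cW q θ d) * cA q θ d ^ (m + 1) := by
  induction m using Nat.strong_induction_on with
  | _ m ih =>
    choose G hG hGd using exists_G hθ
    choose! g hg hgd using ih
    refine ⟨(if m = 0 then G 0 else 0) - ∑ i ∈ Finset.range (m + 1),
      (if q ^ i ≤ m then G i * g (m - q ^ i) else 0), ?_, fun d => ?_⟩
    · have h1 : Isotypic Fq (m + 1) (if m = 0 then G 0 else 0) := by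
        split_ifs with h
        · rw [h]; exact hG 0
        · intro z; simp
      have h2 : Isotypic Fq (m + 1) (∑ i ∈ Finset.range (m + 1),
          (if q ^ i ≤ m then G i * g (m - q ^ i) else 0)) := by
        refine isotypic_sum _ _ fun i _ => ?_
        split_ifs with h
        · have hpos : 0 < q ^ i := pow_pos Fintype.card_pos _
          refine isotypic_congr (isotypic_mul (hG i) (hg _ (by omega))) fun z => ?_
          have : z ^ (m + 1) = z ^ q ^ i * z ^ (m - q ^ i + 1) := by
            rw [← pow_add]; congr 1; omega
          rw [this, FiniteField.pow_card_pow, pow_add, pow_one]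
        · intro z; simp
      intro z
      rw [sub_comp, h1 z, h2 z, mul_sub]
    · have hrec := cS_rec hθ d m
      rw [eval_sub, eval_finsetSum, sub_mul, Finset.sum_mul]
      rw [eq_sub_iff_add_eq]
      convert hrec using 2
      · refine Finset.sum_congr rfl fun i _ => ?_
        split_ifs with h
        · have hpos : 0 < q ^ i := pow_pos Fintype.card_pos _
          rw [hGd, hgd _ (by omega), eval_mul,
            show m + 1 = q ^ i + (m - q ^ i + 1) by omega, pow_add]
          ring
        · simp
      · split_ifs with h
        · rw [hGd, h]; simp
        · simp

/-- The power sums `S_d(n)` are `γ(w_d) a_d^n` with a polynomial `γ` independent of `d`. -/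
theorem exists_gamma (hθ : Transcendental Fq θ) (n : ℕ) (hn : 1 ≤ n) :
    ∃ γ : K[X], Isotypic Fq n γ ∧ ∀ d, cS Fq θ d n = γ.eval (cW q θ d) * cA q θ d ^ n := by
  obtain ⟨m, rfl⟩ : ∃ m, n = m + 1 := ⟨n - 1, by omega⟩
  obtain ⟨g, hg, hgd⟩ := exists_g hθ m
  refine ⟨C ((-1) ^ m) * g, fun z => ?_, fun d => ?_⟩
  · rw [mul_comp, C_comp, hg z]; ring
  · rw [eval_mul, eval_C, mul_assoc, ← hgd, ← mul_assoc, ← mul_pow]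
    simp

end Carlitz

/-! ### Valuations and denominators -/

section Sizes
open Polynomial Filter

/-- The exponents `(q^k - 1)/(q - 1)`. -/
def cN (Q : ℕ) : ℕ → ℕ
  | 0 => 0
  | k + 1 => Q * cN Q k + 1

lemma cN_succ (Q k : ℕ) : cN Q (k + 1) = cN Q k + Q ^ k := by
  induction k with
  | zero => simp [cN]
  | succ k ih =>
    have h1 : cN Q (k + 1 + 1) = Q * cN Q (k + 1) + 1 := rfl
    have h2 : cN Q (k + 1) = Q * cN Q k + 1 := rfl
    rw [h1]
    conv_lhs => rw [ih]
    rw [h2, pow_succ]; ring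

lemma cN_growth (Q : ℕ) (hQ : 2 ≤ Q) (G : ℕ) : ∃ h, ∀ k, G * cN Q k ≤ cN Q (k + h) := by
  refine ⟨G, fun k => ?_⟩
  have h1 : ∀ h, 2 ^ h * cN Q k ≤ cN Q (k + h) := by
    intro h
    induction h with
    | zero => simp
    | succ h ih =>
      calc 2 ^ (h + 1) * cN Q k = 2 * (2 ^ h * cN Q k) := by ring
        _ ≤ 2 * cN Q (k + h) := Nat.mul_le_mul_left _ ih
        _ ≤ Q * cN Q (k + h) := Nat.mul_le_mul_right _ hQ
        _ ≤ cN Q (k + (h + 1)) := Nat.le_succ _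
  exact (Nat.mul_le_mul_right _ (Nat.lt_two_pow_self).le).trans (h1 G)

lemma cN_ge (Q : ℕ) (hQ : 2 ≤ Q) (k : ℕ) : k ≤ cN Q k := by
  induction k with
  | zero => simp
  | succ k ih =>
    have : cN Q k ≤ Q * cN Q k := Nat.le_mul_of_pos_left _ (by omega)
    simp only [cN]; omega

lemma cN_tendsto (Q : ℕ) (hQ : 2 ≤ Q) : Tendsto (cN Q) atTop atTop :=
  tendsto_atTop_mono (cN_ge Q hQ) tendsto_id

/-- Valuation data for which `A` contains `𝔽_q[θ]` and polynomials in `θ` have the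
valuation given by minus the degree. -/
structure DegData (Fq : Type*) [Field Fq] {K : Type*} [Field K] [Algebra Fq K] (θ : K)
    (V : ValData K) : Prop where
  trans : Transcendental Fq θ
  memA : ∀ P : Fq[X], aeval θ P ∈ V.A
  pol : ∀ P : Fq[X], aeval θ P ∈ V.B (-(P.natDegree : ℤ))
  inv : ∀ P : Fq[X], P.Monic → (aeval θ P)⁻¹ ∈ V.B P.natDegree

variable {Fq : Type*} [Field Fq] [Fintype Fq] {K : Type*} [Field K] [Algebra Fq K] {θ : K}
  {V : ValData K}

local notation "q" => Fintype.card Fq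

namespace DegData
variable (H : DegData Fq θ V)
include H

omit [Field Fq] [Fintype Fq] [Algebra Fq K] H in
lemma one_notMem : (1 : K) ∉ V.B 1 := fun h => one_ne_zero (V.int 1 (one_mem _) h)

omit [Fintype Fq] in
lemma theta_mem : θ ∈ V.A := by simpa using H.memA X

omit [Fintype Fq] in
lemma theta_B : θ ∈ V.B (-1) := by simpa using H.pol X

omit [Fintype Fq] in
lemma theta_inv_B : θ⁻¹ ∈ V.B 1 := by simpa using H.inv X monic_X

lemma w_B (k : ℕ) : cW q θ k ∈ V.B (cN q k) := by
  induction k with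
  | zero => simpa [cW, cN] using V.one
  | succ k ih =>
    rw [cW, neg_mul]
    refine neg_mem (V.mono ?_ (V.mul H.theta_inv_B (V.B_pow_mem ih q)))
    simp only [cN]; push_cast; linarith

omit [Fintype Fq] in
lemma pow_sub_one_inv (m : ℕ) (hm : m ≠ 0) : (θ ^ m - 1)⁻¹ ∈ V.B m := by
  have := H.inv (X ^ m - C 1) (monic_X_pow_sub_C 1 hm)
  rw [natDegree_X_pow_sub_C] at this
  simpa using this

lemma a_step (k : ℕ) : cA q θ (k + 1) - cA q θ k =
    cA q θ k * (θ ^ (q ^ (k + 1) - 1) - 1)⁻¹ ∧ cA q θ (k + 1) =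
    cA q θ k * (θ ^ (q ^ (k + 1) - 1) * (θ ^ (q ^ (k + 1) - 1) - 1)⁻¹) := by
  have hθ0 := transcendental_ne_zero H.trans
  have h1 := one_sub_ne_zero H.trans k
  have h2 := two_le_pow_card (Fq := Fq) k
  have e : θ ^ ((1 : ℤ) - (q : ℤ) ^ (k + 1)) = (θ ^ (q ^ (k + 1) - 1))⁻¹ := by
    rw [← zpow_natCast, ← zpow_neg]
    congr 1
    rw [Nat.cast_sub (by omega)]
    push_cast
    ring
  rw [cA]
  rw [e] at h1 ⊢
  have hx : θ ^ (q ^ (k + 1) - 1) ≠ 0 := pow_ne_zero _ hθ0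
  set x := θ ^ (q ^ (k + 1) - 1)
  have h3 : x - 1 ≠ 0 := by
    intro h; apply h1; rw [sub_eq_zero.mp h]; simp
  have h4 : (1 - x⁻¹)⁻¹ = x * (x - 1)⁻¹ := by
    rw [show 1 - x⁻¹ = (x - 1) * x⁻¹ by field_simp, mul_inv, inv_inv, mul_comm]
  rw [h4]
  refine ⟨?_, rfl⟩
  field_simp
  ring

lemma a_B (k : ℕ) : cA q θ k ∈ V.B 0 := by
  induction k with
  | zero => simpa [cA] using V.one
  | succ k ih =>
    rw [(H.a_step k).2]
    have h2 := two_le_pow_card (Fq := Fq) k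
    have h3 := V.mul (V.B_pow_mem H.theta_B (q ^ (k + 1) - 1))
      (H.pow_sub_one_inv (q ^ (k + 1) - 1) (by omega))
    exact V.mono (by linarith) (V.mul ih h3)

lemma a_pow_B (k m : ℕ) : cA q θ k ^ m ∈ V.B 0 := by
  simpa using V.B_pow_mem (H.a_B k) m

lemma a_diff (k : ℕ) : cA q θ (k + 1) - cA q θ k ∈ V.B (cN q k) := by
  rw [(H.a_step k).1]
  have h2 := two_le_pow_card (Fq := Fq) k
  have h3 := V.mul (H.a_B k) (H.pow_sub_one_inv (q ^ (k + 1) - 1) (by omega))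
  refine V.mono ?_ h3
  rw [zero_add, Nat.cast_le]
  -- `(q - 1) N_{k+1} = q^{k+1} - 1`
  have h4 : cN q (k + 1) = cN q k + q ^ k := cN_succ _ _
  have h5 : cN q (k + 1) = q * cN q k + 1 := rfl
  have h6 : 1 < q := Fintype.one_lt_card
  have h7 : 2 * cN q k ≤ q * cN q k := Nat.mul_le_mul_right _ h6
  have h8 : q ^ (k + 1) = q ^ k * q := pow_succ _ _
  have h9 : q ^ k * 2 ≤ q ^ k * q := Nat.mul_le_mul_left _ h6
  have h10 : 0 < q ^ k := pow_pos Fintype.card_pos _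
  omega

lemma S_B (d n : ℕ) : cS Fq θ d n ∈ V.B (n * d) := by
  refine sum_mem fun c _ => ?_
  have := V.B_pow_mem (H.inv _ (monicOf_monic d c)) n
  rwa [monicOf_natDegree] at this

omit H in
lemma eval_small (w : ℕ → K) (N : ℕ → ℕ) (hw : ∀ k, w k ∈ V.B (N k)) (A : K[X])
    (hA : A.coeff 0 = 0) : ∃ c : ℤ, ∀ k, A.eval (w k) ∈ V.B (N k - c) := by
  obtain ⟨A', rfl⟩ := X_dvd_iff.mpr hA
  obtain ⟨c, hc⟩ := V.bdd_eval w ⟨0, fun k => V.mono (by positivity) (hw k)⟩ A'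
  refine ⟨-c, fun k => ?_⟩
  rw [eval_mul, eval_X]
  exact V.mono (by linarith) (V.mul (hw k) (hc k))

/-- The power sums in degree `d` decay like `w_d`. -/
lemma S_small (n : ℕ) (γ : K[X]) (hγ0 : γ.coeff 0 = 0)
    (hγ : ∀ d, cS Fq θ d n = γ.eval (cW q θ d) * cA q θ d ^ n) :
    ∃ c : ℤ, ∀ k, cS Fq θ k n ∈ V.B (cN q k - c) := by
  obtain ⟨c, hc⟩ := eval_small _ _ H.w_B γ hγ0
  refine ⟨c, fun k => ?_⟩
  rw [hγ]
  exact V.mono (by linarith) (V.mul (hc k) (H.a_pow_B k n))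

omit [Field Fq] [Fintype Fq] [Algebra Fq K] H in
lemma exists_clear (γ : K[X]) : ∃ h ∈ V.A, h ≠ 0 ∧ ∀ j, h * γ.coeff j ∈ V.A := by
  induction γ using Polynomial.induction_on' with
  | add p r hp hr =>
    obtain ⟨h, hA, h0, hj⟩ := hp
    obtain ⟨h', hA', h0', hj'⟩ := hr
    refine ⟨h * h', mul_mem hA hA', mul_ne_zero h0 h0', fun j => ?_⟩
    rw [coeff_add, mul_add]
    exact add_mem (by rw [mul_right_comm]; exact mul_mem (hj j) hA')
      (by rw [mul_assoc]; exact mul_mem hA (hj' j))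
  | monomial m a =>
    obtain ⟨b, hb, hb0, hba⟩ := V.den a
    refine ⟨b, hb, hb0, fun j => ?_⟩
    rw [coeff_monomial]
    split_ifs
    · exact hba
    · simp

lemma theta_w (k : ℕ) : θ ^ cN q k * cW q θ k ∈ V.A := by
  have hθ0 := transcendental_ne_zero H.trans
  induction k with
  | zero => simp [cN, cW]
  | succ k ih =>
    rw [cN, cW, pow_succ]
    have : θ ^ (q * cN q k) * θ * (-θ⁻¹ * cW q θ k ^ q) = -(θ ^ cN q k * cW q θ k) ^ q := by
      rw [mul_pow, ← pow_mul, mul_comm q]; field_simp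
    rw [this]
    exact neg_mem (pow_mem ih _)

end DegData

/-- The denominators `∏_{i ≤ k} (θ^{q^i - 1} - 1)` of the partial products. -/
def cQ {K : Type*} [Field K] (Q : ℕ) (θ : K) : ℕ → K
  | 0 => 1
  | k + 1 => cQ Q θ k * (θ ^ (Q ^ (k + 1) - 1) - 1)

namespace DegData
variable (H : DegData Fq θ V)
include H

lemma Q_mem (k : ℕ) : cQ q θ k ∈ V.A := by
  induction k with
  | zero => simp [cQ]
  | succ k ih => exact mul_mem ih (sub_mem (pow_mem H.theta_mem _) (one_mem _))

lemma pow_sub_one_ne (k : ℕ) : θ ^ (q ^ (k + 1) - 1) - 1 ≠ 0 := by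
  intro h
  have := H.pow_sub_one_inv (q ^ (k + 1) - 1) (by have := two_le_pow_card (Fq := Fq) k; omega)
  have h2 := bracket_ne_zero H.trans (two_le_pow_card (Fq := Fq) k)
  apply h2
  have h3 : θ ^ q ^ (k + 1) = θ ^ (q ^ (k + 1) - 1) * θ := by
    rw [← pow_succ]; congr 1; have := two_le_pow_card (Fq := Fq) k; omega
  rw [h3, sub_eq_zero.mp h, one_mul, sub_self]

lemma Q_ne (k : ℕ) : cQ q θ k ≠ 0 := by
  induction k with
  | zero => simp [cQ]
  | succ k ih => exact mul_ne_zero ih (H.pow_sub_one_ne k)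

lemma Q_B (k : ℕ) : cQ q θ k ∈ V.B (-(q * cN q k : ℕ)) := by
  induction k with
  | zero => simpa [cQ, cN] using V.one
  | succ k ih =>
    have h2 := two_le_pow_card (Fq := Fq) k
    have h1 := H.pol (X ^ (q ^ (k + 1) - 1) - C 1)
    rw [natDegree_X_pow_sub_C] at h1
    simp only [map_sub, map_pow, aeval_X, map_one] at h1
    refine V.mono ?_ (V.mul ih h1)
    rw [cN_succ, ← neg_add, neg_le_neg_iff]
    norm_cast
    rw [mul_add, ← pow_succ']
    omega

lemma Q_a (k : ℕ) : cQ q θ k * cA q θ k ∈ V.A := by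
  induction k with
  | zero => simp [cQ, cA]
  | succ k ih =>
    rw [(H.a_step k).2, cQ]
    have := H.pow_sub_one_ne k
    set x := θ ^ (q ^ (k + 1) - 1) with hx
    rw [show cQ q θ k * (x - 1) * (cA q θ k * (x * (x - 1)⁻¹)) = cQ q θ k * cA q θ k * x by
      field_simp]
    exact mul_mem ih (pow_mem H.theta_mem _)

/-- A common denominator for the sums of power sums, their squares, and the partial products. -/
lemma exists_den (n : ℕ) (hn : 1 ≤ n) (γ : K[X])
    (hγ : ∀ d, cS Fq θ d n = γ.eval (cW q θ d) * cA q θ d ^ n) :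
    ∃ (C : ℕ) (u : ℕ → K), (∀ k, u k ∈ V.A) ∧ (∀ k, u k ≠ 0) ∧
      (∀ k, ∃ b ∈ V.A, u (k + 1) = b * u k) ∧ (∀ k, u k * cS Fq θ k n ∈ V.A) ∧
      (∀ k, u k * cA q θ k ∈ V.A) ∧
      ∀ k, u k ^ 2 * θ ^ cN q k ∈ V.B (-(C * (cN q k + 1) : ℕ)) := by
  obtain ⟨h, hA, h0, hj⟩ := exists_clear (V := V) γ
  have hθ0 := transcendental_ne_zero H.trans
  obtain ⟨c, hc⟩ := V.exh h
  set g := γ.natDegree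
  refine ⟨2 * c.natAbs + 2 * g + 2 * n * q + 1, fun k => h * θ ^ (cN q k * g) * cQ q θ k ^ n,
    ?_, ?_, ?_, ?_, ?_, ?_⟩
  · exact fun k => mul_mem (mul_mem hA (pow_mem H.theta_mem _)) (pow_mem (H.Q_mem k) _)
  · exact fun k => mul_ne_zero (mul_ne_zero h0 (pow_ne_zero _ hθ0)) (pow_ne_zero _ (H.Q_ne k))
  · intro k
    refine ⟨θ ^ (q ^ k * g) * (θ ^ (q ^ (k + 1) - 1) - 1) ^ n, mul_mem (pow_mem H.theta_mem _)
      (pow_mem (sub_mem (pow_mem H.theta_mem _) (one_mem _)) _), ?_⟩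
    beta_reduce
    rw [cN_succ, cQ, mul_pow, add_mul, pow_add]
    ring
  · intro k
    rw [hγ, show h * θ ^ (cN q k * g) * cQ q θ k ^ n * (γ.eval (cW q θ k) * cA q θ k ^ n) =
      (h * θ ^ (cN q k * g) * γ.eval (cW q θ k)) * (cQ q θ k * cA q θ k) ^ n by ring]
    refine mul_mem ?_ (pow_mem (H.Q_a k) _)
    rw [eval_eq_sum_range, Finset.mul_sum]
    refine sum_mem fun j hjr => ?_
    have hjg : j ≤ g := by simp at hjr; omega
    have e : h * θ ^ (cN q k * g) * (γ.coeff j * cW q θ k ^ j) =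
        h * γ.coeff j * (θ ^ cN q k * cW q θ k) ^ j * θ ^ (cN q k * (g - j)) := by
      have : θ ^ (cN q k * g) = θ ^ (cN q k * j) * θ ^ (cN q k * (g - j)) := by
        rw [← pow_add, ← mul_add, Nat.add_sub_cancel' hjg]
      rw [this, mul_pow, ← pow_mul]
      ring
    rw [e]
    exact mul_mem (mul_mem (hj j) (pow_mem (H.theta_w k) _)) (pow_mem H.theta_mem _)
  · intro k
    obtain ⟨m, rfl⟩ : ∃ m, n = m + 1 := ⟨n - 1, by omega⟩
    beta_reduce
    rw [pow_succ, show h * θ ^ (cN q k * g) * (cQ q θ k ^ m * cQ q θ k) * cA q θ k =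
      h * θ ^ (cN q k * g) * cQ q θ k ^ m * (cQ q θ k * cA q θ k) by ring]
    exact mul_mem (mul_mem (mul_mem hA (pow_mem H.theta_mem _)) (pow_mem (H.Q_mem k) _)) (H.Q_a k)
  · intro k
    have h1 := V.mul (V.B_pow_mem (V.mul (V.mul hc (V.B_pow_mem H.theta_B (cN q k * g)))
      (V.B_pow_mem (H.Q_B k) n)) 2) (V.B_pow_mem H.theta_B (cN q k))
    refine V.mono ?_ h1
    have h2 : -(c.natAbs : ℤ) ≤ c := by omega
    have h3 : (0 : ℤ) ≤ (c.natAbs : ℤ) * cN q k := by positivity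
    have h4 : (0 : ℤ) ≤ (n : ℤ) * q := by positivity
    have h5 : (0 : ℤ) ≤ (g : ℤ) := by positivity
    push_cast at h1 h2 h3 ⊢
    nlinarith

end DegData
end Sizes

/-! ### The twisted coboundary equation for power sums -/

section Core
open Polynomial Filter

variable {Fq : Type*} [Field Fq] [Fintype Fq] {K : Type*} [Field K] [Algebra Fq K] {θ : K}
  {V : ValData K}

namespace DegData
variable (H : DegData Fq θ V)
include H

lemma w_injective : Function.Injective (cW (Fintype.card Fq) θ) := by
  have hθ0 := transcendental_ne_zero H.trans
  have h1 : ∀ i m, ∃ x ∈ V.B 1, cW (Fintype.card Fq) θ (i + (m + 1)) =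
      cW (Fintype.card Fq) θ i * x := by
    intro i m
    have h2 : ∀ k, -(θ⁻¹ ^ (Fintype.card Fq) ^ k) ∈ V.B 1 := fun k => by
      refine neg_mem (V.mono ?_ (V.B_pow_mem H.theta_inv_B _))
      have : 0 < (Fintype.card Fq) ^ k := pow_pos Fintype.card_pos _
      push_cast
      have : (1 : ℤ) ≤ ((Fintype.card Fq) ^ k : ℕ) := by exact_mod_cast this
      push_cast at this
      linarith
    induction m with
    | zero =>
      refine ⟨_, h2 i, ?_⟩
      rw [zero_add, cW_succ Fq, inv_pow]; ring
    | succ m ih =>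
      obtain ⟨x, hx, hxe⟩ := ih
      refine ⟨_, V.mono (by norm_num) (V.mul hx (h2 (i + (m + 1)))), ?_⟩
      rw [← add_assoc, cW_succ Fq, hxe, inv_pow]; ring
  have h3 : ∀ i j, i < j → cW (Fintype.card Fq) θ i ≠ cW (Fintype.card Fq) θ j := by
    intro i j hij h
    obtain ⟨m, rfl⟩ : ∃ m, j = i + (m + 1) := ⟨j - i - 1, by omega⟩
    obtain ⟨x, hx, hxe⟩ := h1 i m
    have hw := cW_ne_zero (Fintype.card Fq) hθ0 i
    rw [hxe] at h
    have : x = 1 := by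
      apply mul_left_cancel₀ hw; rw [← h, mul_one]
    exact one_notMem (V := V) (this ▸ hx)
  intro i j h
  rcases lt_trichotomy i j with hij | hij | hij
  · exact absurd h (h3 i j hij)
  · exact hij
  · exact absurd h.symm (h3 j i hij)

/-- The orbit `w`, `w (k + 1) = - w k ^ q / θ`, of `1`. -/
def wseq : WSeq K where
  q := Fintype.card Fq
  hq := Fintype.one_lt_card
  θ := θ
  hθ := transcendental_ne_zero H.trans
  w := cW (Fintype.card Fq) θ
  w0 := rfl
  wsucc _ := rfl
  winj := H.w_injective

/-- The sequences attached to the power sums `S_d(n)`. -/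
def seq (n : ℕ) (hn : 1 ≤ n) (γ : K[X]) (hγ : ∀ d, cS Fq θ d n =
    γ.eval (cW (Fintype.card Fq) θ d) * cA (Fintype.card Fq) θ d ^ n) : ASSeq K where
  toWSeq := H.wseq
  n := n
  hn := hn
  γ := γ
  a := cA (Fintype.card Fq) θ
  s k := ∑ d ∈ Finset.range k, cS Fq θ d n
  ha0 := cA_ne_zero H.trans
  ha k := by
    rw [WSeq.c, eval_sub, eval_one, eval_pow, WSeq.eval_t]
    exact cA_succ H.trans k
  hs k := by rw [Finset.sum_range_succ, hγ k]; rfl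

end DegData

/-- A twisted coboundary computes the partial sums. -/
lemma ASSeq.coboundary {K : Type*} [Field K] (D : ASSeq K) (p : ℕ) [Fact p.Prime] [CharP K p]
    (m : ℕ) (hm : 1 ≤ m) (Γ : K[X]) (u : ℕ → K) (hu0 : u 0 = 0)
    (hu : ∀ k, u (k + 1) = u k + Γ.eval (D.w k) * D.a k ^ m) (e : ℕ) (A : K[X])
    (hA : A.comp D.t = D.c ^ (m * p ^ e) * (A + -(Γ ^ p ^ e))) (k : ℕ) :
    A.eval (D.w k) * D.a k ^ (m * p ^ e) = -u k ^ p ^ e := by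
  have hpe : 0 < p ^ e := pow_pos (Fact.out : p.Prime).pos _
  induction k with
  | zero =>
    have h1 := D.eval_one_eq_zero (m * p ^ e) (Nat.mul_pos hm hpe) A _ hA
    rw [D.w0, h1, hu0, zero_pow hpe.ne', neg_zero, zero_mul]
  | succ k ih =>
    rw [hu, add_pow_char_pow, ← D.eval_comp_t, hA, neg_add, ← ih]
    have ha := congrArg (· ^ (m * p ^ e)) (D.ha k)
    simp only [mul_pow] at ha
    simp only [eval_mul, eval_pow, eval_add, eval_neg, mul_pow]
    rw [← ha, ← pow_mul (D.a k), show D.a k ^ (m * p ^ e) =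
      D.a (k + 1) ^ (m * p ^ e) * D.c.eval (D.w k) ^ (m * p ^ e) from ha.symm]
    ring

namespace DegData
variable (H : DegData Fq θ V)
include H

/-- For `q - 1 ∤ n`, no `γ ^ (p ^ e)` is a twisted coboundary: a solution `A` would be homogeneous of
nontrivial weight under `𝔽_q^×`, hence vanish at `0`, while its values along the orbit are those of
the partial sums of `ζ(n)`, which are `1` up to positive valuation. -/
lemma generic (n : ℕ) (hn : 1 ≤ n) (hodd : ¬ (Fintype.card Fq - 1) ∣ n) (γ : K[X])
    (hiso : Isotypic Fq n γ) (hγ : ∀ d, cS Fq θ d n =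
      γ.eval (cW (Fintype.card Fq) θ d) * cA (Fintype.card Fq) θ d ^ n)
    (p : ℕ) [Fact p.Prime] [CharP K p] : (H.seq n hn γ hγ).Generic p := by
  set D := H.seq n hn γ hγ with hD
  intro e A hA
  have hpe : 0 < p ^ e := pow_pos (Fact.out : p.Prime).pos _
  have hM : 1 ≤ D.n * p ^ e := Nat.mul_pos hn hpe
  have hs : ∀ k, A.eval (D.w k) * D.a k ^ (n * p ^ e) = -D.s k ^ p ^ e :=
    D.coboundary p n hn γ D.s (by simp [hD, seq]) D.hs e A hA
  -- `A` is isotypic, hence vanishes at `0`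
  have hA0 : A.coeff 0 = 0 := by
    obtain ⟨z, hz⟩ : ∃ z : Fqˣ, z ^ n ≠ 1 := by
      by_contra hcon
      push Not at hcon
      exact hodd ((FiniteField.forall_pow_eq_one_iff Fq n).mp hcon)
    set ζ : K := algebraMap Fq K z with hζ
    have hζ0 : ζ ≠ 0 := by simp [hζ]
    have hζq : ζ ^ (Fintype.card Fq - 1) = 1 := by
      rw [hζ, ← map_pow, FiniteField.pow_card_sub_one_eq_one _ z.ne_zero, map_one]
    have hζqq : ζ ^ Fintype.card Fq = ζ := frob_algebraMap _
    have hζn : ζ ^ (n * p ^ e) ≠ 1 := by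
      intro h
      rw [pow_mul] at h
      have h2 : (ζ ^ n - 1) ^ p ^ e = 0 := by rw [sub_pow_char_pow, h, one_pow, sub_self]
      have h3 := sub_eq_zero.mp (pow_eq_zero_iff hpe.ne' |>.mp h2)
      rw [hζ, ← map_pow, ← map_one (algebraMap Fq K)] at h3
      apply hz
      ext
      simpa using (algebraMap Fq K).injective h3
    have ht : D.t.comp (C ζ * X) = C ζ * D.t := by
      rw [WSeq.t, mul_comp, C_comp, pow_comp, X_comp, mul_pow, ← C_pow]
      have : D.q = Fintype.card Fq := rfl
      rw [this, hζqq]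
      ring
    have hc : D.c.comp (C ζ * X) = D.c := by
      rw [WSeq.c, sub_comp, one_comp, pow_comp, ht, mul_pow, ← C_pow]
      have : D.q = Fintype.card Fq := rfl
      rw [this, hζq]
      simp
    have hγz : D.γ.comp (C ζ * X) = C (ζ ^ n) * D.γ := hiso z
    have h1 : (A.comp (C ζ * X)).comp D.t =
        D.c ^ (D.n * p ^ e) * (A.comp (C ζ * X) + -(C (ζ ^ (n * p ^ e)) * D.γ ^ p ^ e)) := by
      have h2 := congrArg (fun P => P.comp (C ζ * X)) hA
      simp only [mul_comp, pow_comp, add_comp, neg_comp, comp_assoc, ht, hc, hγz] at h2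
      rw [comp_assoc, mul_comp, C_comp, X_comp, h2, mul_pow, ← C_pow, ← pow_mul]
    have h3 : A.comp (C ζ * X) - C (ζ ^ (n * p ^ e)) * A = 0 := by
      apply D.eq_zero_of_comp _ hM
      rw [sub_comp, h1, mul_comp, C_comp, hA]
      ring
    have h4 := congrArg (eval 0) h3
    simp only [eval_sub, eval_comp, eval_mul, eval_C, eval_X, mul_zero, eval_zero] at h4
    rw [coeff_zero_eq_eval_zero]
    have h5 : (1 - ζ ^ (n * p ^ e)) * A.eval 0 = 0 := by linear_combination h4
    exact (mul_eq_zero.mp h5).resolve_left (sub_ne_zero.mpr hζn.symm)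
  -- but the partial sums are `1` up to elements of positive valuation
  have hs1 : ∀ k, D.s (k + 1) - 1 ∈ V.B 1 := by
    intro k
    have e1 : D.s (k + 1) - 1 = ∑ d ∈ Finset.range k, cS Fq θ (d + 1) n := by
      change ∑ d ∈ Finset.range (k + 1), cS Fq θ d n - 1 = _
      rw [Finset.sum_range_succ']
      have : cS Fq θ 0 n = 1 := by
        have : ∀ c : Fin 0 → Fq, monicOf 0 c = 1 := fun c =>
          (monicOf_monic 0 c).natDegree_eq_zero.mp (monicOf_natDegree 0 c)
        simp [cS, this]
      rw [this, add_sub_cancel_right]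
    rw [e1]
    refine sum_mem fun d _ => V.mono ?_ (H.S_B (d + 1) n)
    have : (1 : ℤ) ≤ n := by exact_mod_cast hn
    push_cast
    nlinarith
  obtain ⟨c, hc⟩ := eval_small (V := V) _ _ H.w_B A hA0
  obtain ⟨k, hk⟩ : ∃ k, c + 1 ≤ cN (Fintype.card Fq) (k + 1) := by
    refine ⟨c.natAbs + 1, ?_⟩
    have := cN_ge (Fintype.card Fq) Fintype.one_lt_card (c.natAbs + 1 + 1)
    omega
  have h1 := V.mul (hc (k + 1)) (H.a_pow_B (k + 1) (n * p ^ e))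
  have h2 : A.eval (cW (Fintype.card Fq) θ (k + 1)) *
      cA (Fintype.card Fq) θ (k + 1) ^ (n * p ^ e) = _ := hs (k + 1)
  rw [h2] at h1
  have h3 : D.s (k + 1) ^ p ^ e ∈ V.B 1 := by
    have := neg_mem (V.mono (show (1 : ℤ) ≤ _ by linarith) h1)
    simpa using this
  have h4 : D.s (k + 1) ^ p ^ e - 1 ∈ V.B 1 := by
    have e4 : D.s (k + 1) ^ p ^ e - 1 = (D.s (k + 1) - 1) ^ p ^ e := by
      rw [sub_pow_char_pow, one_pow]
    rw [e4]
    refine V.mono ?_ (V.B_pow_mem (hs1 k) (p ^ e))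
    have : (1 : ℤ) ≤ (p ^ e : ℕ) := by exact_mod_cast hpe
    linarith
  exact one_notMem (V := V) (by simpa using sub_mem h3 h4)

end DegData
end Core

/-! ### Limits of the partial sums and products -/

section Limits
open Polynomial Filter

lemma algIndep_vecCons_iff {R A : Type*} [CommRing R] [CommRing A] [Algebra R A] {m : ℕ}
    (a : A) (x : Fin m → A) : AlgebraicIndependent R (Matrix.vecCons a x) ↔
      AlgebraicIndependent R x ∧ Transcendental (Algebra.adjoin R (Set.range x)) a := by
  rw [← AlgebraicIndependent.option_iff]
  refine (algebraicIndependent_equiv' (finSuccEquiv m).symm (funext fun o => ?_)).symm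
  cases o <;> simp

lemma isAlgebraic_of_mem {K F : Type*} [Field K] [Field F] [Algebra K F] (S : Subalgebra K F)
    {x : F} (hx : x ∈ S) : IsAlgebraic S x :=
  isAlgebraic_algebraMap (⟨x, hx⟩ : S)

lemma isAlgebraic_of_le {K F : Type*} [Field K] [Field F] [Algebra K F] {S T : Subalgebra K F}
    (h : S ≤ T) {x : F} (hx : IsAlgebraic S x) : IsAlgebraic T x := by
  let _ := (Subalgebra.inclusion h).toAlgebra
  have : IsScalarTower S T F := IsScalarTower.of_algebraMap_eq fun _ => rfl
  exact IsAlgebraic.extendScalars (Subalgebra.inclusion_injective h) hx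

variable {Fq : Type*} [Field Fq] [Fintype Fq] {K : Type*} [Field K] [Algebra Fq K] {θ : K}
  {V : ValData K}

local notation "q" => Fintype.card Fq

omit [Fintype Fq] in
lemma Isotypic.coeff_zero {m : ℕ} (hm : 1 ≤ m) {γ : K[X]} (h : Isotypic Fq m γ) :
    γ.coeff 0 = 0 := by
  have h1 := h 0
  simp only [map_zero, zero_mul, comp_zero, zero_pow (show m ≠ 0 by omega)] at h1
  rwa [coeff_zero_eq_eval_zero, ← C_eq_zero]

namespace DegData
variable (H : DegData Fq θ V)
include H

lemma s_B {n : ℕ} (hn : 1 ≤ n) {γ : K[X]}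
    (hγ : ∀ d, cS Fq θ d n = γ.eval (cW q θ d) * cA q θ d ^ n)
    (k : ℕ) : (H.seq n hn γ hγ).s k ∈ V.B 0 := by
  change ∑ d ∈ Finset.range k, cS Fq θ d n ∈ V.B 0
  exact sum_mem fun d _ => V.mono (by positivity) (H.S_B d n)

lemma S_B0 (n k : ℕ) : cS Fq θ k n ∈ V.B 0 := V.mono (by positivity) (H.S_B k n)

lemma den_s {n : ℕ} (hn : 1 ≤ n) {γ : K[X]}
    (hγ : ∀ d, cS Fq θ d n = γ.eval (cW q θ d) * cA q θ d ^ n) (u : ℕ → K)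
    (hdvd : ∀ k, ∃ b ∈ V.A, u (k + 1) = b * u k) (huS : ∀ k, u k * cS Fq θ k n ∈ V.A) (k : ℕ) :
    u k * (H.seq n hn γ hγ).s k ∈ V.A := by
  induction k with
  | zero => simp [seq]
  | succ k ih =>
    obtain ⟨b, hb, hbe⟩ := hdvd k
    rw [(H.seq n hn γ hγ).hs, mul_add, hbe, mul_assoc, mul_assoc]
    refine add_mem (mul_mem hb ih) (mul_mem hb ?_)
    have := huS k
    rwa [hγ] at this

lemma den_v {n : ℕ} (hn : 1 ≤ n) {γ : K[X]}
    (hγ : ∀ d, cS Fq θ d n = γ.eval (cW q θ d) * cA q θ d ^ n)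
    (u : ℕ → K)
    (hdvd : ∀ k, ∃ b ∈ V.A, u (k + 1) = b * u k) (huS : ∀ k, u k * cS Fq θ k n ∈ V.A)
    (e₁ e₂ : K) (he₁ : e₁ ∈ V.A) (he₂ : e₂ ∈ V.A) (v : ℕ → K) (hv0 : v 0 = 0)
    (hv : ∀ k, v (k + 1) = v k + (e₁ * (cS Fq θ k n * (H.seq n hn γ hγ).s k) +
      e₂ * cS Fq θ k n ^ 2)) (k : ℕ) :
    u k ^ 2 * v k ∈ V.A := by
  induction k with
  | zero => simp [hv0]
  | succ k ih =>
    obtain ⟨b, hb, hbe⟩ := hdvd k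
    have h1 := H.den_s hn hγ u hdvd huS k
    rw [hv, hbe, show (b * u k) ^ 2 * (v k + (e₁ * (cS Fq θ k n * (H.seq n hn γ hγ).s k) +
      e₂ * cS Fq θ k n ^ 2)) = b ^ 2 * (u k ^ 2 * v k + (e₁ * ((u k * cS Fq θ k n) *
        (u k * (H.seq n hn γ hγ).s k)) + e₂ * (u k * cS Fq θ k n) ^ 2)) by ring]
    exact mul_mem (pow_mem hb _) (add_mem ih (add_mem (mul_mem he₁ (mul_mem (huS k) h1))
      (mul_mem he₂ (pow_mem (huS k) _))))

lemma v_B {n : ℕ} (hn : 1 ≤ n) {γ : K[X]}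
    (hγ : ∀ d, cS Fq θ d n = γ.eval (cW q θ d) * cA q θ d ^ n)
    (e₁ e₂ : K) (he₁ : e₁ ∈ V.B 0) (he₂ : e₂ ∈ V.B 0) (v : ℕ → K) (hv0 : v 0 = 0)
    (hv : ∀ k, v (k + 1) = v k + (e₁ * (cS Fq θ k n * (H.seq n hn γ hγ).s k) +
      e₂ * cS Fq θ k n ^ 2)) (k : ℕ) : v k ∈ V.B 0 := by
  induction k with
  | zero => rw [hv0]; exact zero_mem _
  | succ k ih =>
    rw [hv]
    refine add_mem ih (add_mem ?_ ?_)
    · simpa using V.mul he₁ (V.mul (H.S_B0 n k) (H.s_B hn hγ k))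
    · simpa using V.mul he₂ (V.B_pow_mem (H.S_B0 n k) 2)

variable {F : Type*} [Field F] [Algebra K F] (W : RingFilt F)

/-- Algebraic independence of `ζ(n)` and the period, for the limits `s'` and `a'`. -/
lemma algIndep_two {n : ℕ} (hn : 1 ≤ n) {γ : K[X]}
    (hγ : ∀ d, cS Fq θ d n = γ.eval (cW q θ d) * cA q θ d ^ n)
    (p : ℕ) [Fact p.Prime] [CharP K p]
    (hVW : ∀ N x, algebraMap K F x ∈ W.B N ↔ x ∈ V.B N)
    (hγ0 : γ.coeff 0 = 0) (hgen : (H.seq n hn γ hγ).Generic p) (s' a' : F)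
    (hs' : ∃ c : ℤ, ∀ k, algebraMap K F ((H.seq n hn γ hγ).s k) - s' ∈ W.B (cN q k - c))
    (ha' : ∃ c : ℤ, ∀ k, algebraMap K F (cA q θ k) - a' ∈ W.B (cN q k - c)) :
    AlgebraicIndependent K ![s', a'] := by
  obtain ⟨C, u, hu, hu0, hdvd, huS, hua, huB⟩ := H.exists_den n hn γ hγ
  have hθ0 := transcendental_ne_zero H.trans
  have hu2 : ∀ k x, u k * x ∈ V.A → u k ^ 2 * θ ^ cN q k * x ∈ V.A := fun k x hx => by
    rw [show u k ^ 2 * θ ^ cN q k * x = (u k * θ ^ cN q k) * (u k * x) by ring]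
    exact mul_mem (mul_mem (hu k) (pow_mem H.theta_mem _)) hx
  refine mahler_algIndep V W hVW (H.seq n hn γ hγ).w
    (fun k => ![(H.seq n hn γ hγ).s k, (H.seq n hn γ hγ).a k]) (cN q)
    (cN_tendsto _ Fintype.one_lt_card) (cN_growth _ Fintype.one_lt_card) H.w_B ?_ C
    (fun k => u k ^ 2 * θ ^ cN q k)
    (fun k => mul_mem (pow_mem (hu k) _) (pow_mem H.theta_mem _))
    (fun k => mul_ne_zero (pow_ne_zero _ (hu0 k)) (pow_ne_zero _ hθ0)) huB ?_ ?_
    ((H.seq n hn γ hγ).dense_two p hgen) (2 * n + 1)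
    ((H.seq n hn γ hγ).transfer_two hγ0) _ ?_
  · intro i
    fin_cases i
    · exact ⟨0, H.s_B hn hγ⟩
    · exact ⟨0, H.a_B⟩
  · intro k
    rw [mul_assoc]
    exact mul_mem (pow_mem (hu k) _) (H.theta_w k)
  · intro k i
    fin_cases i
    · exact hu2 k _ (H.den_s hn hγ u hdvd huS k)
    · exact hu2 k _ (hua k)
  · intro i
    fin_cases i
    · exact hs'
    · exact ha'

/-- Algebraic independence of three limits when the germs are algebraically independent. -/
lemma algIndep_three {n : ℕ} (hn : 1 ≤ n) {γ : K[X]}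
    (hγ : ∀ d, cS Fq θ d n = γ.eval (cW q θ d) * cA q θ d ^ n)
    (hVW : ∀ N x, algebraMap K F x ∈ W.B N ↔ x ∈ V.B N)
    (hγ0 : γ.coeff 0 = 0) (e₁ e₂ : K) (he₁ : e₁ ∈ V.A) (he₂ : e₂ ∈ V.A)
    (he₁' : e₁ ∈ V.B 0) (he₂' : e₂ ∈ V.B 0) (v : ℕ → K) (hv0 : v 0 = 0)
    (hv : ∀ k, v (k + 1) = v k + (e₁ * (cS Fq θ k n * (H.seq n hn γ hγ).s k) +
      e₂ * cS Fq θ k n ^ 2))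
    (hinj : Function.Injective (eval₂RingHom (H.seq n hn γ hγ).evR2
      (v : Germ (atTop : Filter ℕ) K))) (v' s' a' : F)
    (hv' : ∃ c : ℤ, ∀ k, algebraMap K F (v k) - v' ∈ W.B (cN q k - c))
    (hs' : ∃ c : ℤ, ∀ k, algebraMap K F ((H.seq n hn γ hγ).s k) - s' ∈ W.B (cN q k - c))
    (ha' : ∃ c : ℤ, ∀ k, algebraMap K F (cA q θ k) - a' ∈ W.B (cN q k - c)) :
    AlgebraicIndependent K ![v', s', a'] := by
  obtain ⟨C, u, hu, hu0, hdvd, huS, hua, huB⟩ := H.exists_den n hn γ hγ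
  have hθ0 := transcendental_ne_zero H.trans
  have hu2 : ∀ k x, u k * x ∈ V.A → u k ^ 2 * θ ^ cN q k * x ∈ V.A := fun k x hx => by
    rw [show u k ^ 2 * θ ^ cN q k * x = (u k * θ ^ cN q k) * (u k * x) by ring]
    exact mul_mem (mul_mem (hu k) (pow_mem H.theta_mem _)) hx
  refine mahler_algIndep V W hVW (H.seq n hn γ hγ).w
    (fun k => ![v k, (H.seq n hn γ hγ).s k, (H.seq n hn γ hγ).a k]) (cN q)
    (cN_tendsto _ Fintype.one_lt_card) (cN_growth _ Fintype.one_lt_card) H.w_B ?_ C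
    (fun k => u k ^ 2 * θ ^ cN q k)
    (fun k => mul_mem (pow_mem (hu k) _) (pow_mem H.theta_mem _))
    (fun k => mul_ne_zero (pow_ne_zero _ (hu0 k)) (pow_ne_zero _ hθ0)) huB ?_ ?_
    ((H.seq n hn γ hγ).dense_three v hinj) (2 * n + 1)
    ((H.seq n hn γ hγ).transfer_three hγ0 e₁ e₂ v ?_) _ ?_
  · intro i
    fin_cases i
    · exact ⟨0, H.v_B hn hγ e₁ e₂ he₁' he₂' v hv0 hv⟩
    · exact ⟨0, H.s_B hn hγ⟩
    · exact ⟨0, H.a_B⟩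
  · intro k
    rw [mul_assoc]
    exact mul_mem (pow_mem (hu k) _) (H.theta_w k)
  · intro k i
    fin_cases i
    · change u k ^ 2 * θ ^ cN q k * v k ∈ V.A
      rw [mul_right_comm]
      exact mul_mem (H.den_v hn hγ u hdvd huS e₁ e₂ he₁ he₂ v hv0 hv k)
        (pow_mem H.theta_mem _)
    · exact hu2 k _ (H.den_s hn hγ u hdvd huS k)
    · exact hu2 k _ (hua k)
  · intro k
    rw [hv, hγ]
    rfl
  · intro i
    fin_cases i
    · exact hv'
    · exact hs'
    · exact ha'

/-- In odd characteristic, `2 r' = s' ^ 2 - v'` with `v'` the limit of the partial sums of the squared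
power sums. Either `v'`, `s'` and `a'` are algebraically independent, or `v'` is algebraic over
`K(a')`; in both cases `r'` and `a'` are algebraically independent. -/
lemma algIndep_odd {n : ℕ} (hn : 1 ≤ n) {γ : K[X]}
    (hγ : ∀ d, cS Fq θ d n = γ.eval (cW q θ d) * cA q θ d ^ n)
    (p : ℕ) [Fact p.Prime] [CharP K p]
    (hodd : ¬ (q - 1) ∣ n) (hiso : Isotypic Fq n γ)
    (hVW : ∀ N x, algebraMap K F x ∈ W.B N ↔ x ∈ V.B N)
    (hsep : ∀ x : F, (∀ N, x ∈ W.B N) → x = 0) (hp2 : p ≠ 2) (r' s' a' : F)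
    (hr' : ∃ c : ℤ, ∀ k, algebraMap K F (∑ d ∈ Finset.range k,
      cS Fq θ d n * (H.seq n hn γ hγ).s d) - r' ∈ W.B (cN q k - c))
    (hs' : ∃ c : ℤ, ∀ k, algebraMap K F ((H.seq n hn γ hγ).s k) - s' ∈ W.B (cN q k - c))
    (ha' : ∃ c : ℤ, ∀ k, algebraMap K F (cA q θ k) - a' ∈ W.B (cN q k - c)) :
    AlgebraicIndependent K ![r', a'] := by
  have hγ0 := hiso.coeff_zero hn
  have hgen := H.generic n hn hodd γ hiso hγ p
  have h2 : AlgebraicIndependent K ![s', a'] := H.algIndep_two W hn hγ p hVW hγ0 hgen s' a' hs' ha'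
  have h30 := fun v h1 h2 h3 v' h4 => H.algIndep_three W hn hγ hVW hγ0 0 1 (zero_mem _) (one_mem _)
    (zero_mem _) V.one v h1 h2 h3 v' s' a' h4 hs' ha'
  generalize hD : H.seq n hn γ hγ = D at *
  have hDn : D.n = n := by rw [← hD]; rfl
  have hDγ : D.γ = γ := by rw [← hD]; rfl
  have hDw : D.w = cW q θ := by rw [← hD]; rfl
  have hDa : D.a = cA q θ := by rw [← hD]; rfl
  have hDs0 : D.s 0 = 0 := by rw [← hD]; rfl
  have hDS : ∀ k, cS Fq θ k n = D.γ.eval (D.w k) * D.a k ^ D.n := by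
    rw [hDn, hDγ, hDw, hDa]; exact hγ
  have hDs : ∀ k, D.s (k + 1) = D.s k + cS Fq θ k n := fun k => by rw [D.hs, hDS]
  rw [algIndep_vecCons_iff] at h2 ⊢
  refine ⟨h2.1, fun hr => ?_⟩
  set S := Algebra.adjoin K (Set.range ![a']) with hS
  have haS : a' ∈ S := Algebra.subset_adjoin ⟨0, rfl⟩
  -- `v k` is the sum of the squares of the power sums, and `s k ^ 2 = 2 r k + v k`
  set r : ℕ → K := fun k => ∑ d ∈ Finset.range k, cS Fq θ d n * D.s d with hrdef
  set v : ℕ → K := fun k => ∑ d ∈ Finset.range k, cS Fq θ d n ^ 2 with hvdef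
  have hvs : ∀ k, v k = D.s k ^ 2 - 2 * r k := by
    intro k
    induction k with
    | zero => simp [hvdef, hrdef, hDs0]
    | succ k ih =>
      have e1 : v (k + 1) = v k + cS Fq θ k n ^ 2 := Finset.sum_range_succ _ _
      have e2 : r (k + 1) = r k + cS Fq θ k n * D.s k := Finset.sum_range_succ _ _
      rw [e1, e2, hDs, ih]; ring
  have hv : ∀ k, v (k + 1) = v k + (D.γ.eval (D.w k) * D.a k ^ D.n) ^ 2 := by
    intro k
    rw [← hDS]
    exact Finset.sum_range_succ _ _
  set v' : F := s' ^ 2 - 2 * r' with hv'def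
  have hv' : ∃ c : ℤ, ∀ k, algebraMap K F (v k) - v' ∈ W.B (cN q k - c) := by
    have := RingFilt.approx (K := K) W (cN q) (fun k => ![algebraMap K F (r k),
      algebraMap K F (D.s k)]) ![r', s'] (fun i => by
        fin_cases i
        · exact hr'
        · exact hs') (MvPolynomial.X 1 ^ 2 - 2 * MvPolynomial.X 0)
    simpa [hvs, map_ofNat, hv'def] using this
  rcases D.ev3_injective_odd p hp2 hgen v hv with hinj | ⟨e, A, hA⟩
  · have h3 := h30 v (by simp [hvdef]) (fun k => by
        rw [zero_mul, zero_add, one_mul]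
        exact Finset.sum_range_succ _ _) hinj v' hv'
    rw [algIndep_vecCons_iff] at h3
    apply h3.2
    have hle : S ≤ Algebra.adjoin K (Set.range ![s', a']) := by
      apply Algebra.adjoin_mono
      rintro _ ⟨i, rfl⟩
      fin_cases i
      exact ⟨1, rfl⟩
    have hr2 := isAlgebraic_of_le hle hr
    have hs2 := isAlgebraic_of_mem (Algebra.adjoin K (Set.range ![s', a']))
      (Algebra.subset_adjoin (Set.mem_range_self 0))
    rw [Matrix.cons_val_zero] at hs2
    rw [hv'def, two_mul]
    exact (hs2.pow 2).sub (hr2.add hr2)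
  · apply h2.2
    have hpe : 0 < p ^ e := pow_pos (Fact.out : p.Prime).pos _
    have hcob := D.coboundary p (2 * n) (by omega) (γ ^ 2) v (by simp [hvdef]) (fun k => by
      rw [hv, eval_pow, mul_pow, ← pow_mul, mul_comm 2 n, hDn, hDγ]) e A (by
      rw [hA, ← pow_mul, hDn, hDγ, show 2 * n * p ^ e = n * (2 * p ^ e) by ring])
    -- in the limit, `v' ^ (p ^ e)` is a multiple of a power of `a'`
    have hvA : v' ^ p ^ e = -(algebraMap K F (A.coeff 0) * a' ^ (2 * n * p ^ e)) := by
      have h5 := RingFilt.approx (K := K) W (cN q) (fun k => ![algebraMap K F (v k),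
        algebraMap K F (D.a k)]) ![v', a'] (fun i => by
          fin_cases i
          · exact hv'
          · rw [hDa]; exact ha') (MvPolynomial.X 0 ^ p ^ e +
            MvPolynomial.C (A.coeff 0) * MvPolynomial.X 1 ^ (2 * n * p ^ e))
      obtain ⟨c, hc⟩ := h5
      obtain ⟨c', hc'⟩ := eval_small (V := V) _ _ H.w_B (A - C (A.coeff 0)) (by simp)
      rw [← sub_eq_zero, sub_neg_eq_add]
      apply hsep
      intro N
      obtain ⟨k, hk⟩ : ∃ k : ℕ, N ≤ cN q k - max c c' := by
        refine ⟨(N + max c c').natAbs, ?_⟩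
        have := cN_ge q Fintype.one_lt_card (N + max c c').natAbs
        omega
      have h6 := hc k
      have h7 : algebraMap K F (v k ^ p ^ e + A.coeff 0 * D.a k ^ (2 * n * p ^ e)) ∈
          W.B (cN q k - c') := by
        rw [hVW]
        have h8 := V.mul (hc' k) (H.a_pow_B k (2 * n * p ^ e))
        rw [add_zero, ← hDw, ← hDa] at h8
        have h9 := hcob k
        have h10 : v k ^ p ^ e + A.coeff 0 * D.a k ^ (2 * n * p ^ e) =
            -((A - C (A.coeff 0)).eval (D.w k) * D.a k ^ (2 * n * p ^ e)) := by
          rw [eval_sub, eval_C]; linear_combination h9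
        rw [h10]
        exact neg_mem h8
      simp only [map_add, map_mul, map_pow, MvPolynomial.aeval_X, MvPolynomial.aeval_C,
        Matrix.cons_val_zero, Matrix.cons_val_one] at h6 h7
      have h11 := sub_mem (W.mono (show N ≤ cN q k - c' by
        have := le_max_right c c'; omega) h7) (W.mono (show N ≤ cN q k - c by
        have := le_max_left c c'; omega) h6)
      simpa using h11
    have hva : IsAlgebraic S v' := by
      refine IsAlgebraic.of_pow hpe ?_
      rw [hvA]
      exact isAlgebraic_of_mem S (neg_mem (mul_mem (S.algebraMap_mem _) (pow_mem haS _)))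
    have : IsAlgebraic S (s' ^ 2) := by
      rw [show s' ^ 2 = v' + (r' + r') by rw [hv'def]; ring]
      exact hva.add (hr.add hr)
    exact IsAlgebraic.of_pow two_pos this

/-- In characteristic two, the limits `r'`, `s'` and `a'` of the partial sums of `ζ(n, n)`, `ζ(n)` and
of the partial products are algebraically independent; in particular so are `r'` and `a'`. -/
lemma algIndep_even {n : ℕ} (hn : 1 ≤ n) {γ : K[X]}
    (hγ : ∀ d, cS Fq θ d n = γ.eval (cW q θ d) * cA q θ d ^ n)
    [CharP K 2] (hodd : ¬ (q - 1) ∣ n) (hiso : Isotypic Fq n γ)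
    (hVW : ∀ N x, algebraMap K F x ∈ W.B N ↔ x ∈ V.B N) (r' s' a' : F)
    (hr' : ∃ c : ℤ, ∀ k, algebraMap K F (∑ d ∈ Finset.range k,
      cS Fq θ d n * (H.seq n hn γ hγ).s d) - r' ∈ W.B (cN q k - c))
    (hs' : ∃ c : ℤ, ∀ k, algebraMap K F ((H.seq n hn γ hγ).s k) - s' ∈ W.B (cN q k - c))
    (ha' : ∃ c : ℤ, ∀ k, algebraMap K F (cA q θ k) - a' ∈ W.B (cN q k - c)) :
    AlgebraicIndependent K ![r', a'] := by
  have : Fact (Nat.Prime 2) := ⟨Nat.prime_two⟩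
  set D := H.seq n hn γ hγ with hD
  have hγ0 := hiso.coeff_zero hn
  have hgen := H.generic n hn hodd γ hiso hγ 2
  set r : ℕ → K := fun k => ∑ d ∈ Finset.range k, cS Fq θ d n * D.s d with hrdef
  have hr : ∀ k, r (k + 1) = r k + cS Fq θ k n * D.s k := fun k => Finset.sum_range_succ _ _
  have hinj := D.ev3_injective_two hgen r (fun k => by
    rw [hr, hγ]; rfl)
  have h3 := H.algIndep_three W hn hγ hVW hγ0 1 0 (one_mem _) (zero_mem _) V.one (zero_mem _)
    r (by simp [hrdef]) (fun k => by rw [zero_mul, add_zero, one_mul]; exact hr k) hinj r' s' a'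
    hr' hs' ha'
  have h4 := h3.comp ![0, 2] (by decide)
  convert h4 using 1
  funext i
  fin_cases i <;> rfl

/-- Algebraic independence of the limits `a'` of the partial products and `r'` of the partial sums
of `ζ(n, n)`. -/
theorem algIndep {n : ℕ} (hn : 1 ≤ n) (hodd : ¬ (q - 1) ∣ n)
    (hVW : ∀ N x, algebraMap K F x ∈ W.B N ↔ x ∈ V.B N)
    (hsep : ∀ x : F, (∀ N, x ∈ W.B N) → x = 0)
    (hlim : ∀ z : ℕ → K, (∃ c : ℤ, ∀ k, z (k + 1) - z k ∈ V.B (cN q k - c)) →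
      ∃ z' : F, ∃ c : ℤ, ∀ k, algebraMap K F (z k) - z' ∈ W.B (cN q k - c)) :
    ∃ a' r' : F, (∃ c : ℤ, ∀ k, algebraMap K F (cA q θ k) - a' ∈ W.B (cN q k - c)) ∧
      (∃ c : ℤ, ∀ k, algebraMap K F (∑ d ∈ Finset.range k,
        cS Fq θ d n * ∑ e ∈ Finset.range d, cS Fq θ e n) - r' ∈ W.B (cN q k - c)) ∧
      AlgebraicIndependent K ![r', a'] := by
  obtain ⟨γ, hiso, hγ⟩ := exists_gamma H.trans n hn
  obtain ⟨c, hc⟩ := H.S_small n γ (hiso.coeff_zero hn) hγ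
  obtain ⟨a', ha'⟩ := hlim (cA q θ) ⟨0, fun k => by simpa using H.a_diff k⟩
  obtain ⟨s', hs'⟩ := hlim (H.seq n hn γ hγ).s ⟨c, fun k => by
    have : (H.seq n hn γ hγ).s (k + 1) = (H.seq n hn γ hγ).s k + cS Fq θ k n :=
      Finset.sum_range_succ _ _
    rw [this, add_sub_cancel_left]
    exact hc k⟩
  obtain ⟨r', hr'⟩ := hlim (fun k => ∑ d ∈ Finset.range k, cS Fq θ d n * (H.seq n hn γ hγ).s d)
    ⟨c, fun k => by
      rw [Finset.sum_range_succ, add_sub_cancel_left]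
      simpa using V.mul (hc k) (H.s_B hn hγ k)⟩
  refine ⟨a', r', ha', hr', ?_⟩
  obtain ⟨p, hp⟩ := CharP.exists K
  have hcard : ((Fintype.card Fq : ℕ) : K) = 0 := by
    rw [← map_natCast (algebraMap Fq K), FiniteField.cast_card_eq_zero, map_zero]
  have hp0 : p ≠ 0 := by
    rintro rfl
    have := (CharP.cast_eq_zero_iff K 0 _).mp hcard
    exact Fintype.card_ne_zero (zero_dvd_iff.mp this)
  have : Fact p.Prime := ⟨(CharP.char_is_prime_or_zero K p).resolve_right hp0⟩
  by_cases hp2 : p = 2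
  · subst hp2
    exact H.algIndep_even W hn hγ hodd hiso hVW r' s' a' hr' hs' ha'
  · exact H.algIndep_odd W hn hγ p hodd hiso hVW hsep hp2 r' s' a' hr' hs' ha'

end DegData
end Limits

/-! ### The valuation on Laurent series -/

section Concrete
open Polynomial WithZero

variable (Fq : Type) [Field Fq]

/-- The elements of `k_∞` of valuation at least `N`. -/
def kB (N : ℤ) : AddSubgroup (Kinf Fq) where
  carrier := {x | ∀ i < N, x.coeff i = 0}
  zero_mem' := fun i _ => by simp
  add_mem' := fun {x y} hx hy i hi => by simp [hx i hi, hy i hi]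
  neg_mem' := fun {x} hx i hi => by simp [hx i hi]

variable {Fq}

lemma mem_kB {N : ℤ} {x : Kinf Fq} : x ∈ kB Fq N ↔ ∀ i < N, x.coeff i = 0 := Iff.rfl

lemma mem_kB_iff {N : ℤ} {x : Kinf Fq} : x ∈ kB Fq N ↔ Valued.v x ≤ exp (-N) :=
  (LaurentSeries.valuation_le_iff_coeff_lt_eq_zero Fq).symm

lemma kB_mono {N M : ℤ} (h : N ≤ M) : kB Fq M ≤ kB Fq N :=
  fun _ hx i hi => hx i (hi.trans_le h)

lemma kB_mul {N M : ℤ} {x y : Kinf Fq} (hx : x ∈ kB Fq N) (hy : y ∈ kB Fq M) :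
    x * y ∈ kB Fq (N + M) := by
  rw [mem_kB_iff] at *
  rw [map_mul, neg_add, exp_add]
  exact mul_le_mul' hx hy

lemma kB_one : (1 : Kinf Fq) ∈ kB Fq 0 := by
  rw [mem_kB_iff]; simp

lemma kB_exh (x : Kinf Fq) : ∃ N, x ∈ kB Fq N :=
  ⟨x.order, fun _ hi => HahnSeries.coeff_eq_zero_of_lt_order hi⟩

variable (Fq) in
/-- The filtration of `k_∞` by valuation. -/
def kFilt : RingFilt (Kinf Fq) where
  B := kB Fq
  mono := kB_mono
  mul := kB_mul
  exh := kB_exh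

lemma theta_pow (j : ℕ) : theta Fq ^ j = HahnSeries.single (-(j : ℤ)) (1 : Fq) := by
  rw [theta, HahnSeries.single_pow]; simp

lemma coeff_aeval_theta (P : Fq[X]) (j : ℕ) :
    (aeval (theta Fq) P : Kinf Fq).coeff (-(j : ℤ)) = P.coeff j := by
  induction P using Polynomial.induction_on' with
  | add P Q hP hQ => simp [hP, hQ]
  | monomial m a =>
    rw [aeval_monomial, theta_pow, LaurentSeries.algebraMap_apply, HahnSeries.C_apply,
      HahnSeries.single_mul_single, HahnSeries.coeff_single, coeff_monomial]
    simp [eq_comm]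

lemma coeff_aeval_theta_pos (P : Fq[X]) (i : ℤ) (hi : 0 < i) :
    (aeval (theta Fq) P : Kinf Fq).coeff i = 0 := by
  induction P using Polynomial.induction_on' with
  | add P Q hP hQ => simp [hP, hQ]
  | monomial m a =>
    rw [aeval_monomial, theta_pow, LaurentSeries.algebraMap_apply, HahnSeries.C_apply,
      HahnSeries.single_mul_single, HahnSeries.coeff_single, if_neg (by omega)]

lemma aeval_theta_mem (P : Fq[X]) : aeval (theta Fq) P ∈ kB Fq (-(P.natDegree : ℤ)) := by
  intro i hi
  obtain ⟨j, rfl⟩ : ∃ j : ℕ, i = -(j : ℤ) := ⟨i.natAbs, by omega⟩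
  rw [coeff_aeval_theta]
  exact coeff_eq_zero_of_natDegree_lt (by omega)

lemma v_aeval_theta {P : Fq[X]} (hP : P ≠ 0) :
    Valued.v (aeval (theta Fq) P : Kinf Fq) = exp (P.natDegree : ℤ) := by
  refine le_antisymm (by simpa using mem_kB_iff.mp (aeval_theta_mem P)) ?_
  by_contra h
  have h1 : Valued.v (aeval (theta Fq) P : Kinf Fq) ≤ exp (-(1 - (P.natDegree : ℤ))) := by
    have := not_le.mp h
    by_cases h0 : Valued.v (aeval (theta Fq) P : Kinf Fq) = 0
    · rw [h0]; simp
    · rw [← exp_log h0, exp_lt_exp] at this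
      rw [← exp_log h0, exp_le_exp]; omega
  have h2 := mem_kB_iff.mpr h1 (-(P.natDegree : ℤ)) (by omega)
  rw [coeff_aeval_theta] at h2
  exact hP (leadingCoeff_eq_zero.mp h2)

lemma aeval_theta_inv_mem {P : Fq[X]} (hP : P ≠ 0) :
    (aeval (theta Fq) P)⁻¹ ∈ kB Fq (P.natDegree : ℤ) := by
  rw [mem_kB_iff, map_inv₀, v_aeval_theta hP, exp_neg]

lemma transcendental_theta : Transcendental Fq (theta Fq) := by
  rw [transcendental_iff]
  intro P hP
  ext j
  rw [← coeff_aeval_theta, hP]; simp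

variable (Fq) in
/-- `k = 𝔽_q(θ)` as a subfield of `k_∞`. -/
abbrev kK : IntermediateField Fq (Kinf Fq) := IntermediateField.adjoin Fq {theta Fq}

variable (Fq) in
/-- The element `θ` of `k`. -/
def thK : kK Fq := ⟨theta Fq, IntermediateField.mem_adjoin_simple_self Fq _⟩

lemma coe_aeval_thK (P : Fq[X]) :
    algebraMap (kK Fq) (Kinf Fq) (aeval (thK Fq) P) = aeval (theta Fq) P :=
  (aeval_algebraMap_apply _ _ _).symm

lemma kK_inj {x y : kK Fq} (h : algebraMap (kK Fq) (Kinf Fq) x = algebraMap (kK Fq) (Kinf Fq) y) :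
    x = y := (algebraMap (kK Fq) (Kinf Fq)).injective h

variable (Fq) in
/-- The valuation data of `k` at the infinite place, with the ring `𝔽_q[θ]`. -/
def kVal : ValData (kK Fq) where
  B N := (kB Fq N).comap (algebraMap (kK Fq) (Kinf Fq)).toAddMonoidHom
  mono h _ hx := kB_mono h hx
  mul {N M x y} hx hy := by
    have := kB_mul hx hy
    simpa [AddSubgroup.mem_comap] using this
  one := by
    have := kB_one (Fq := Fq)
    simpa [AddSubgroup.mem_comap] using this
  exh x := kB_exh _
  A := (aeval (R := Fq) (thK Fq)).range.toSubring
  int := by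
    rintro x ⟨P, rfl⟩ hx
    have hx' : aeval (theta Fq) P ∈ kB Fq 1 := by
      rw [← coe_aeval_thK]; exact hx
    have hP : P = 0 := by
      ext j
      rw [← coeff_aeval_theta, hx' _ (by omega)]; simp
    simp [hP]
  den x := by
    obtain ⟨r, s, h⟩ := (IntermediateField.mem_adjoin_simple_iff Fq x.1).mp x.2
    by_cases hs : aeval (theta Fq) s = 0
    · refine ⟨1, one_mem _, one_ne_zero, ?_⟩
      have : x = 0 := kK_inj (by rw [map_zero]; change x.1 = 0; rw [h, hs, div_zero])
      rw [this, mul_zero]; exact zero_mem _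
    · refine ⟨aeval (thK Fq) s, ⟨s, rfl⟩, ?_, r, ?_⟩
      · intro h0
        apply hs
        rw [← coe_aeval_thK, h0, map_zero]
      · apply kK_inj
        rw [map_mul, coe_aeval_thK]
        change _ = _ * x.1
        rw [h, mul_div_cancel₀ _ hs]
        exact coe_aeval_thK r

lemma mem_kVal {N : ℤ} {x : kK Fq} : algebraMap (kK Fq) (Kinf Fq) x ∈ (kFilt Fq).B N ↔
    x ∈ (kVal Fq).B N := Iff.rfl

variable (Fq) in
lemma kDeg : DegData Fq (thK Fq) (kVal Fq) where
  trans := by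
    rw [← transcendental_algebraMap_iff (S := kK Fq) (A := Kinf Fq)
      (algebraMap (kK Fq) (Kinf Fq)).injective]
    exact transcendental_theta
  memA P := ⟨P, rfl⟩
  pol P := by
    rw [← mem_kVal, coe_aeval_thK]; exact aeval_theta_mem P
  inv P hP := by
    rw [← mem_kVal, map_inv₀, coe_aeval_thK]; exact aeval_theta_inv_mem hP.ne_zero

lemma kB_sep (x : Kinf Fq) (h : ∀ N, x ∈ kB Fq N) : x = 0 := by
  ext i
  exact h (i + 1) i (by omega)

open MonoidWithZeroHom.ValueGroup₀ in
lemma mem_nhds_iff_kB {x : Kinf Fq} {U : Set (Kinf Fq)} :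
    U ∈ nhds x ↔ ∃ N, ∀ y, y - x ∈ kB Fq N → y ∈ U := by
  constructor
  · intro hU
    obtain ⟨γ, hU₁⟩ := Valued.mem_nhds.mp hU
    set D := -(log (embedding γ.1) - 1) with hD₀
    have hD : exp (-D) < embedding γ.1 := by
      rw [← lt_log_iff_exp_lt (by simp), hD₀]
      simp
    refine ⟨D, fun y hy => hU₁ ?_⟩
    change Valued.v.restrict (y - x) < γ
    rw [Valued.v.restrict_lt_iff_lt_embedding]
    exact (mem_kB_iff.mp hy).trans_lt hD
  · rintro ⟨N, hN⟩
    rw [Valued.mem_nhds]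
    obtain ⟨z, hz⟩ := LaurentSeries.valuation_surjective Fq (exp (-(N - 1)))
    have hz0 : Valued.v.restrict z ≠ 0 := fun h ↦ exp_ne_zero (a := -(N - 1)) <|
      hz ▸ MonoidWithZeroHom.ValueGroup₀.restrict₀_eq_zero_iff.1 h
    refine ⟨Units.mk0 (Valued.v.restrict z) hz0, fun y hy => hN y ?_⟩
    have hy' : Valued.v.restrict (y - x) < Valued.v.restrict z := hy
    rw [Valued.v.restrict_lt_iff_lt_embedding] at hy'
    have e : embedding (Valued.v.restrict z) = Valued.v z :=
      MonoidWithZeroHom.ValueGroup₀.embedding_restrict₀ _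
    rw [e, hz] at hy'
    rw [mem_kB_iff]
    by_cases h0 : Valued.v (y - x) = 0
    · rw [h0]; simp
    · rw [← exp_log h0, exp_lt_exp] at hy'
      rw [← exp_log h0, exp_le_exp]; omega

end Concrete

/-! ### The multizeta value and the product as limits -/

section Convergence
open Polynomial

variable {Fq : Type} [Field Fq]

lemma kB_pow {N : ℤ} {x : Kinf Fq} (hx : x ∈ kB Fq N) (m : ℕ) : x ^ m ∈ kB Fq (m * N) := by
  induction m with
  | zero => simpa using kB_one
  | succ m ih =>
    rw [pow_succ]
    have := kB_mul ih hx
    convert this using 2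
    push_cast; ring

/-- Limits of sequences converging at the rate `cN`, constructed coefficient by coefficient. -/
lemma kB_lim (Q : ℕ) (hQ : 2 ≤ Q) (z : ℕ → Kinf Fq)
    (hz : ∃ c : ℤ, ∀ k, z (k + 1) - z k ∈ kB Fq (cN Q k - c)) :
    ∃ z' : Kinf Fq, ∃ c : ℤ, ∀ k, z k - z' ∈ kB Fq (cN Q k - c) := by
  obtain ⟨c, hc⟩ := hz
  have hmono : ∀ k m, cN Q k ≤ cN Q (k + m) := by
    intro k m
    induction m with
    | zero => simp
    | succ m ih => rw [← add_assoc, cN_succ]; omega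
  have key : ∀ k m, z (k + m) - z k ∈ kB Fq (cN Q k - c) := by
    intro k m
    induction m with
    | zero => simp
    | succ m ih =>
      have h := kB_mono (M := cN Q (k + m) - c) (N := cN Q k - c)
        (by have := hmono k m; omega) (hc (k + m))
      have := add_mem h ih
      rwa [sub_add_sub_cancel] at this
  have key2 : ∀ k m, k ≤ m → z m - z k ∈ kB Fq (cN Q k - c) := by
    intro k m h
    obtain ⟨j, rfl⟩ := Nat.exists_eq_add_of_le h
    exact key k j
  obtain ⟨N, hN⟩ := kB_exh (z 0)
  have hbdd : ∀ i < min N (-c), ∀ m, (z m).coeff i = 0 := by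
    intro i hi m
    have h1 := hN i (by omega)
    have h2 := key2 0 m (by omega) i (by simp [cN]; omega)
    rw [HahnSeries.coeff_sub, h1, sub_zero] at h2
    exact h2
  let f : ℤ → Fq := fun i => (z (i + c + 1).toNat).coeff i
  have hf : BddBelow (Function.support f) := by
    refine ⟨min N (-c), fun i hi => ?_⟩
    by_contra h
    exact hi (hbdd i (not_le.mp h) _)
  refine ⟨HahnSeries.ofSuppBddBelow f hf, c, fun k i hi => ?_⟩
  rw [HahnSeries.coeff_sub]
  change (z k).coeff i - (z (i + c + 1).toNat).coeff i = 0
  have hge := cN_ge Q hQ (i + c + 1).toNat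
  rcases le_total k (i + c + 1).toNat with h | h
  · have := key2 _ _ h i hi
    rw [HahnSeries.coeff_sub] at this
    rw [← neg_sub, this, neg_zero]
  · have := key2 _ _ h i (by omega)
    rwa [HahnSeries.coeff_sub] at this

lemma kB_hasSum {ι : Type*} (f : ι → Kinf Fq) (s' : Kinf Fq)
    (h : ∀ N, ∃ s₀ : Finset ι, ∑ i ∈ s₀, f i - s' ∈ kB Fq N ∧ ∀ i ∉ s₀, f i ∈ kB Fq N) :
    HasSum f s' := by
  classical
  intro U hU
  obtain ⟨N, hN⟩ := mem_nhds_iff_kB.mp hU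
  obtain ⟨s₀, h1, h2⟩ := h N
  refine Filter.mem_map.mpr (Filter.mem_atTop_sets.mpr ⟨s₀, fun s hs => hN _ ?_⟩)
  change ∑ b ∈ s, f b - s' ∈ kB Fq N
  rw [← Finset.sum_sdiff hs, add_sub_assoc]
  refine add_mem (sum_mem fun i hi => h2 i (Finset.mem_sdiff.mp hi).2) h1

lemma kB_prod_sub_one {ι : Type*} (f : ι → Kinf Fq) (s : Finset ι) {N : ℤ} (hN : 0 ≤ N)
    (h : ∀ i ∈ s, f i - 1 ∈ kB Fq N) : ∏ i ∈ s, f i - 1 ∈ kB Fq N := by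
  classical
  induction s using Finset.induction_on with
  | empty => simp
  | insert i s hi ih =>
    rw [Finset.prod_insert hi]
    have h1 := h i (Finset.mem_insert_self _ _)
    have h2 := ih fun j hj => h j (Finset.mem_insert_of_mem hj)
    have h3 := kB_mono (show N ≤ N + N by omega) (kB_mul h1 h2)
    have := add_mem (add_mem h3 h1) h2
    convert this using 1
    ring

lemma kB_hasProd {ι : Type*} (f : ι → Kinf Fq) (s' : Kinf Fq)
    (h : ∀ N, 0 ≤ N → ∃ s₀ : Finset ι, ∏ i ∈ s₀, f i ∈ kB Fq 0 ∧ ∏ i ∈ s₀, f i - s' ∈ kB Fq N ∧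
      ∀ i ∉ s₀, f i - 1 ∈ kB Fq N) :
    HasProd f s' := by
  classical
  intro U hU
  obtain ⟨N, hN⟩ := mem_nhds_iff_kB.mp hU
  obtain ⟨s₀, h0, h1, h2⟩ := h (max N 0) (le_max_right _ _)
  refine Filter.mem_map.mpr (Filter.mem_atTop_sets.mpr ⟨s₀, fun s hs => hN _ ?_⟩)
  refine kB_mono (le_max_left N 0) ?_
  change ∏ b ∈ s, f b - s' ∈ kB Fq (max N 0)
  rw [← Finset.prod_sdiff hs]
  have h3 := kB_prod_sub_one f (s \ s₀) (le_max_right N 0)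
    fun i hi => h2 i (Finset.mem_sdiff.mp hi).2
  have := add_mem (kB_mul h3 h0) (show _ ∈ kB Fq (max N 0 + 0) by simpa using h1)
  rw [add_zero] at this
  convert this using 1
  ring

variable [Fintype Fq]

lemma coe_cA (k : ℕ) : algebraMap (kK Fq) (Kinf Fq) (cA (Fintype.card Fq) (thK Fq) k) =
    ∏ i ∈ Finset.range k, (1 - theta Fq ^ ((1 : ℤ) - (Fintype.card Fq : ℤ) ^ (i + 1)))⁻¹ := by
  induction k with
  | zero => simp [cA]
  | succ k ih =>
    rw [cA, map_mul, ih, Finset.prod_range_succ, map_inv₀, map_sub, map_one, map_zpow₀]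
    rfl

lemma coe_cS (d n : ℕ) : algebraMap (kK Fq) (Kinf Fq) (cS Fq (thK Fq) d n) =
    ∑ c : Fin d → Fq, (aeval (theta Fq) (monicOf d c))⁻¹ ^ n := by
  simp only [cS, map_sum, map_pow, map_inv₀, coe_aeval_thK]

lemma theta_factor (i : ℕ) :
    (1 - theta Fq ^ ((1 : ℤ) - (Fintype.card Fq : ℤ) ^ (i + 1)))⁻¹ - 1 ∈ kB Fq i := by
  set m := Fintype.card Fq ^ (i + 1) - 1 with hm
  have h2 := two_le_pow_card (Fq := Fq) i
  have him : i ≤ m := by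
    have := Nat.lt_pow_self (Fintype.one_lt_card (α := Fq)) (n := i + 1)
    omega
  have hθ0 : theta Fq ≠ 0 := transcendental_ne_zero transcendental_theta
  have e : theta Fq ^ ((1 : ℤ) - (Fintype.card Fq : ℤ) ^ (i + 1)) = (theta Fq ^ m)⁻¹ := by
    rw [← zpow_natCast, ← zpow_neg]
    congr 1
    rw [hm, Nat.cast_sub (by omega)]
    push_cast
    ring
  have hx : theta Fq ^ m ≠ 0 := pow_ne_zero _ hθ0
  have hP := aeval_theta_inv_mem (monic_X_pow_sub_C (1 : Fq) (show m ≠ 0 by omega)).ne_zero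
  rw [natDegree_X_pow_sub_C] at hP
  simp only [map_sub, map_pow, aeval_X, map_one] at hP
  have h3 : theta Fq ^ m - 1 ≠ 0 := by
    intro h
    refine transcendental_theta ⟨X ^ m - C (1 : Fq),
      (monic_X_pow_sub_C (1 : Fq) (show m ≠ 0 by omega)).ne_zero, by simpa using h⟩
  rw [e]
  have h4 : (1 - (theta Fq ^ m)⁻¹)⁻¹ - 1 = (theta Fq ^ m - 1)⁻¹ := by
    rw [show 1 - (theta Fq ^ m)⁻¹ = (theta Fq ^ m - 1) * (theta Fq ^ m)⁻¹ by field_simp,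
      mul_inv, inv_inv]
    field_simp
    ring
  rw [h4]
  exact kB_mono (by exact_mod_cast him) hP

/-- The infinite product is the limit of the partial products `cA`. -/
lemma tprod_eq_of_lim (a' : Kinf Fq)
    (ha : ∃ c : ℤ, ∀ k, algebraMap (kK Fq) (Kinf Fq) (cA (Fintype.card Fq) (thK Fq) k) - a' ∈
      kB Fq (cN (Fintype.card Fq) k - c)) :
    ∏' i : ℕ, (1 - theta Fq ^ ((1 : ℤ) - (Fintype.card Fq : ℤ) ^ (i + 1)))⁻¹ = a' := by
  obtain ⟨c, hc⟩ := ha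
  refine (kB_hasProd _ _ fun N hN => ?_).tprod_eq
  refine ⟨Finset.range (N.natAbs + c.natAbs), ?_, ?_, fun i hi => ?_⟩
  · rw [← coe_cA]; exact mem_kVal.mpr ((kDeg Fq).a_B _)
  · rw [← coe_cA]
    refine kB_mono ?_ (hc _)
    have := cN_ge (Fintype.card Fq) Fintype.one_lt_card (N.natAbs + c.natAbs)
    omega
  · rw [Finset.mem_range] at hi
    exact kB_mono (by omega) (theta_factor i)

variable (Fq) in
/-- The index set of `ζ(n, n)`. -/
abbrev MzIdx := {a : Fin 2 → Polynomial Fq //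
      (∀ i, (a i).Monic) ∧ ∀ i j : Fin 2, i < j → (a j).degree < (a i).degree}

variable (Fq) in
/-- Pairs of coefficient vectors parametrizing the pairs of monic polynomials of degrees
`d > e`. -/
abbrev MzPar := Σ d : ℕ, Σ e : Fin d, (Fin d → Fq) × (Fin e → Fq)

/-- The pair of monic polynomials with given coefficients. -/
def mzOf (x : MzPar Fq) : MzIdx Fq :=
  ⟨![monicOf x.1 x.2.2.1, monicOf x.2.1 x.2.2.2], by
    refine ⟨fun i => ?_, fun i j hij => ?_⟩
    · fin_cases i
      · exact monicOf_monic _ _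
      · exact monicOf_monic _ _
    · obtain ⟨rfl, rfl⟩ : i = 0 ∧ j = 1 := by omega
      change (monicOf (x.2.1 : ℕ) x.2.2.2).degree < (monicOf x.1 x.2.2.1).degree
      rw [degree_eq_natDegree (monicOf_monic _ _).ne_zero,
        degree_eq_natDegree (monicOf_monic _ _).ne_zero, monicOf_natDegree, monicOf_natDegree]
      exact_mod_cast x.2.1.2⟩

omit [Fintype Fq] in
lemma mzOf_injective : Function.Injective (mzOf (Fq := Fq)) := by
  rintro ⟨d, e, c, b⟩ ⟨d', e', c', b'⟩ h
  have h0 : monicOf d c = monicOf d' c' := congrFun (congrArg Subtype.val h) 0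
  have h1 : monicOf (e : ℕ) b = monicOf (e' : ℕ) b' := congrFun (congrArg Subtype.val h) 1
  have hd : d = d' := by rw [← monicOf_natDegree d c, h0, monicOf_natDegree]
  subst hd
  have he : e = e' := Fin.ext (by rw [← monicOf_natDegree (e : ℕ) b, h1, monicOf_natDegree])
  subst he
  rw [monicOf_injective d h0, monicOf_injective _ h1]

omit [Fintype Fq] in
lemma mzOf_surjective : Function.Surjective (mzOf (Fq := Fq)) := by
  rintro ⟨a, ha, hd⟩
  have hlt : (a 1).natDegree < (a 0).natDegree := by
    have := hd 0 1 (by decide)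
    rw [degree_eq_natDegree (ha 0).ne_zero, degree_eq_natDegree (ha 1).ne_zero] at this
    exact_mod_cast this
  obtain ⟨c, hc⟩ := monicOf_surj _ (a 0) (ha 0) rfl
  obtain ⟨b, hb⟩ := monicOf_surj _ (a 1) (ha 1) rfl
  refine ⟨⟨(a 0).natDegree, ⟨(a 1).natDegree, hlt⟩, c, b⟩, Subtype.ext (funext fun i => ?_)⟩
  fin_cases i
  · exact hc
  · exact hb

/-- The sum over all pairs of monic polynomials defining `ζ(n, n)` is the limit of its partial sums
by degree of the first polynomial. -/
lemma mzv_eq_of_lim {n : ℕ} (hn : 1 ≤ n) (r' : Kinf Fq)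
    (hr : ∃ c : ℤ, ∀ k, algebraMap (kK Fq) (Kinf Fq) (∑ d ∈ Finset.range k,
        cS Fq (thK Fq) d n * ∑ e ∈ Finset.range d, cS Fq (thK Fq) e n) - r' ∈
      kB Fq (cN (Fintype.card Fq) k - c)) :
    mzv Fq 2 ![n, n] = r' := by
  classical
  obtain ⟨c, hc⟩ := hr
  have hterm : ∀ x : MzPar Fq, (∏ i, aeval (theta Fq) ((mzOf x).1 i) ^ (![n, n] : Fin 2 → ℕ) i)⁻¹ =
      (aeval (theta Fq) (monicOf x.1 x.2.2.1))⁻¹ ^ n *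
        (aeval (theta Fq) (monicOf (x.2.1 : ℕ) x.2.2.2))⁻¹ ^ n := by
    intro x
    rw [Fin.prod_univ_two, mul_inv, inv_pow, inv_pow]
    rfl
  refine (kB_hasSum _ _ fun N => ?_).tsum_eq
  set k := N.natAbs + c.natAbs with hk
  refine ⟨((Finset.range k).sigma fun d => (Finset.univ :
    Finset (Σ e : Fin d, (Fin d → Fq) × (Fin e → Fq)))).image mzOf, ?_, fun a ha => ?_⟩
  · rw [Finset.sum_image mzOf_injective.injOn]
    have : ∑ x ∈ (Finset.range k).sigma fun d => (Finset.univ :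
          Finset (Σ e : Fin d, (Fin d → Fq) × (Fin e → Fq))),
        (∏ i, aeval (theta Fq) ((mzOf x).1 i) ^ (![n, n] : Fin 2 → ℕ) i)⁻¹ =
        algebraMap (kK Fq) (Kinf Fq) (∑ d ∈ Finset.range k,
          cS Fq (thK Fq) d n * ∑ e ∈ Finset.range d, cS Fq (thK Fq) e n) := by
      simp only [hterm, map_sum, map_mul, coe_cS]
      rw [Finset.sum_sigma]
      refine Finset.sum_congr rfl fun d _ => ?_
      rw [Fintype.sum_sigma, Finset.sum_range, Finset.mul_sum]
      refine Finset.sum_congr rfl fun e _ => ?_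
      rw [Fintype.sum_prod_type, Finset.sum_mul_sum]
    rw [this]
    refine kB_mono ?_ (hc k)
    have := cN_ge (Fintype.card Fq) Fintype.one_lt_card k
    omega
  · obtain ⟨x, rfl⟩ := mzOf_surjective a
    have hx : k ≤ x.1 := by
      by_contra h
      exact ha (Finset.mem_image_of_mem _ (by simpa using h))
    rw [hterm]
    have h1 := kB_pow (aeval_theta_inv_mem (monicOf_monic x.1 x.2.2.1).ne_zero) n
    have h2 := kB_pow (aeval_theta_inv_mem (monicOf_monic (x.2.1 : ℕ) x.2.2.2).ne_zero) n
    rw [monicOf_natDegree] at h1 h2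
    refine kB_mono ?_ (kB_mul h1 h2)
    have h3 : (x.1 : ℤ) ≤ n * x.1 := by exact_mod_cast Nat.le_mul_of_pos_left _ hn
    have h4 : (0 : ℤ) ≤ n * (x.2.1 : ℕ) := by positivity
    omega

variable (Fq) in
/-- `ζ(n, n)` and `∏ (1 - θ^{1-q^i})⁻¹` are algebraically independent over `k`. -/
lemma kK_algIndep {n : ℕ} (hn : 1 ≤ n) (hodd : ¬ (Fintype.card Fq - 1) ∣ n) :
    AlgebraicIndependent (kK Fq) ![mzv Fq 2 ![n, n],
      ∏' i : ℕ, (1 - theta Fq ^ ((1 : ℤ) - (Fintype.card Fq : ℤ) ^ (i + 1)))⁻¹] := by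
  obtain ⟨a', r', ha, hr, h⟩ := (kDeg Fq).algIndep (kFilt Fq) hn hodd (fun N x => mem_kVal)
    kB_sep (fun z hz => kB_lim _ Fintype.one_lt_card _ (by
      obtain ⟨c, hc⟩ := hz
      refine ⟨c, fun k => ?_⟩
      have := mem_kVal.mpr (hc k)
      rwa [map_sub] at this))
  rwa [mzv_eq_of_lim hn r' hr, tprod_eq_of_lim a' ha]

end Convergence

/-! ### From the rational function field to its algebraic closure -/

section Descent

/-- Algebraic independence is unchanged when one element is multiplied by a nonzero scalar. -/
lemma algIndep_scale {K F : Type*} [Field K] [Field F] [Algebra K F] (u : K) (hu : u ≠ 0)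
    (a z : F) (h : AlgebraicIndependent K ![a, z]) :
    AlgebraicIndependent K ![algebraMap K F u * a, z] := by
  rw [algIndep_vecCons_iff] at h ⊢
  refine ⟨h.1, fun ha => h.2 ?_⟩
  have h1 := isAlgebraic_of_mem _ ((Algebra.adjoin K (Set.range ![z])).algebraMap_mem u⁻¹)
  have h2 := h1.mul ha
  rwa [← mul_assoc, ← map_mul, inv_mul_cancel₀ hu, map_one, one_mul] at h2

lemma algIndep_swap {K F : Type*} [Field K] [Field F] [Algebra K F] (a z : F)
    (h : AlgebraicIndependent K ![a, z]) : AlgebraicIndependent K ![z, a] := by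
  have := h.comp ![1, 0] (by decide)
  convert this using 1
  funext i
  fin_cases i <;> rfl

variable (Fq : Type) [Field Fq]

lemma kSub_eq_map : kSub Fq =
    (kK Fq).toSubfield.map (algebraMap (Kinf Fq) (KinfBar Fq)) := by
  have h : (kK Fq).toSubfield =
      Subfield.closure (Set.range (algebraMap Fq (Kinf Fq)) ∪ {theta Fq}) := rfl
  rw [h, RingHom.map_field_closure, Set.image_union, Set.image_singleton, ← Set.range_comp]
  rfl

/-- Algebraic independence over `k` inside `k_∞` gives algebraic independence over `k̄` inside the
algebraic closure of `k_∞`. -/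
lemma kbar_algIndep (a z : Kinf Fq) (h : AlgebraicIndependent (kK Fq) ![a, z]) :
    AlgebraicIndependent (kbar Fq)
      ![algebraMap (Kinf Fq) (KinfBar Fq) a, algebraMap (Kinf Fq) (KinfBar Fq) z] := by
  let f : kK Fq →+* kSub Fq :=
    ((algebraMap (Kinf Fq) (KinfBar Fq)).comp (algebraMap (kK Fq) (Kinf Fq))).codRestrict
      (kSub Fq) (fun x => by
        rw [kSub_eq_map]
        exact ⟨x.1, x.2, rfl⟩)
  have hf : Function.Surjective f := by
    rintro ⟨y, hy⟩
    have hy' := hy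
    rw [kSub_eq_map] at hy'
    obtain ⟨x, hx, rfl⟩ := hy'
    exact ⟨⟨x, hx⟩, rfl⟩
  have h1 := h.ringHom_of_comp_eq f (algebraMap (Kinf Fq) (KinfBar Fq)) hf
    (algebraMap (Kinf Fq) (KinfBar Fq)).injective (RingHom.ext fun _ => rfl)
  have e : algebraMap (Kinf Fq) (KinfBar Fq) ∘ ![a, z] =
      ![algebraMap (Kinf Fq) (KinfBar Fq) a, algebraMap (Kinf Fq) (KinfBar Fq) z] := by
    funext i
    fin_cases i <;> rfl
  rw [e] at h1
  exact h1.algebraicClosure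

end Descent

/-- For an "odd" integer `n ≥ 1` (i.e. `q − 1 ∤ n`), `π̃` and `ζ(n,n)`
are algebraically independent over `k̄`. -/
theorem pitilde_zetann_algIndep
    (n : ℕ) (hn : 1 ≤ n) (hodd : ¬ (Fintype.card Fq - 1) ∣ n)
    (η : KinfBar Fq) (hη : η ^ (Fintype.card Fq - 1) = -thetaBar Fq) :
    AlgebraicIndependent (kbar Fq)
      ![pitilde Fq η,
        algebraMap (Kinf Fq) (KinfBar Fq) (mzv Fq 2 ![n, n])] := by
  have hq : 1 < Fintype.card Fq := Fintype.one_lt_card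
  have hθ : thetaBar Fq ∈ kSub Fq := Subfield.subset_closure (Or.inr rfl)
  have hθ0 : thetaBar Fq ≠ 0 := by
    rw [thetaBar, Ne, map_eq_zero]
    exact transcendental_ne_zero transcendental_theta
  have hη0 : η ≠ 0 := by
    rintro rfl
    rw [zero_pow (by omega)] at hη
    exact hθ0 (neg_eq_zero.mp hη.symm)
  -- `η` is a root of `X ^ (q - 1) + θ`, so it lies in `k̄`
  have hηk : η ∈ kbar Fq := by
    rw [kbar, mem_algebraicClosure_iff]
    refine IsAlgebraic.of_pow (n := Fintype.card Fq - 1) (by omega) ?_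
    rw [hη]
    exact (isAlgebraic_algebraMap (⟨thetaBar Fq, hθ⟩ : kSub Fq)).neg
  have h := algIndep_swap _ _ (kbar_algIndep Fq _ _ (kK_algIndep Fq hn hodd))
  let u : kbar Fq := ⟨η, hηk⟩
  have hu : u ≠ 0 := fun h0 => hη0 (congrArg Subtype.val h0)
  have h' := algIndep_scale (u ^ Fintype.card Fq) (pow_ne_zero _ hu) _ _ h
  have e : algebraMap (kbar Fq) (KinfBar Fq) (u ^ Fintype.card Fq) = η ^ Fintype.card Fq := by
    rw [map_pow]
    rfl
  rw [e] at h'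
  exact h'
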